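/- For all integers α ≥ 1 and all integers n ≥ 0, d_5(7^{α+2}·n + λ_{α+2})·d_5(λ_α) ≡ d_5(7^α·n + λ_α)·d_5(λ_{α+2}) (mod 7^{⌊α/2⌋+2}), where λ_α = (1 + 7^α)/4 if α is odd and λ_α = (1 + 3·7^α)/4 if α is even. -/

import Mathlib

noncomputable section

/-- `J b = ∏_{k=1}^∞ (1 - q^{b·k})` as a formal power series with integer coefficients. -/
def J (b : ℕ) : PowerSeries ℤ :=
  PowerSeries.mk fun n =>
    PowerSeries.coeff n
      (∏ k ∈ Finset.range (n + 1), (1 - (PowerSeries.X : PowerSeries ℤ) ^ (b * (k + 1))))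

/-- `λ_β = (1 + 7^β)/4` if `β` is odd, `λ_β = (1 + 3·7^β)/4` if `β` is even
(both divisions are exact). -/
def lam (β : ℕ) : ℕ := if β % 2 = 1 then (1 + 7 ^ β) / 4 else (1 + 3 * 7 ^ β) / 4

section
open PowerSeries

def Conv (x : PowerSeries ℂ) : Prop := ∀ z : ℂ, ‖z‖ < 1 → Summable (fun n => coeff n x * z ^ n)
def ev (x : PowerSeries ℂ) (z : ℂ) : ℂ := ∑' n, coeff n x * z ^ n

lemma Conv.hasSum {x : PowerSeries ℂ} (h : Conv x) {z : ℂ} (hz : ‖z‖ < 1) :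
    HasSum (fun n => coeff n x * z ^ n) (ev x z) := (h z hz).hasSum

lemma Conv.add {x y : PowerSeries ℂ} (hx : Conv x) (hy : Conv y) : Conv (x + y) := by
  intro z hz
  simpa [add_mul] using (hx z hz).add (hy z hz)

lemma ev_add {x y : PowerSeries ℂ} (hx : Conv x) (hy : Conv y) {z : ℂ} (hz : ‖z‖ < 1) :
    ev (x + y) z = ev x z + ev y z := by
  simpa [ev, add_mul] using (hx z hz).tsum_add (hy z hz)

lemma Conv.smul {x : PowerSeries ℂ} (hx : Conv x) (c : ℂ) : Conv (c • x) := by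
  intro z hz
  simpa [mul_assoc] using (hx z hz).mul_left c

lemma ev_smul (x : PowerSeries ℂ) (c z : ℂ) : ev (c • x) z = c * ev x z := by
  simp [ev, mul_assoc, tsum_mul_left]

lemma Conv.neg {x : PowerSeries ℂ} (hx : Conv x) : Conv (-x) := by
  simpa using hx.smul (-1)

lemma Conv.sub {x y : PowerSeries ℂ} (hx : Conv x) (hy : Conv y) : Conv (x - y) := by
  rw [sub_eq_add_neg]; exact hx.add hy.neg

lemma ev_neg (x : PowerSeries ℂ) (z : ℂ) : ev (-x) z = - ev x z := by
  have := ev_smul x (-1) z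
  simpa using this

lemma ev_sub {x y : PowerSeries ℂ} (hx : Conv x) (hy : Conv y) {z : ℂ} (hz : ‖z‖ < 1) :
    ev (x - y) z = ev x z - ev y z := by
  rw [sub_eq_add_neg, ev_add hx hy.neg hz, ev_neg, sub_eq_add_neg]

lemma mul_term (x y : PowerSeries ℂ) (z : ℂ) (n : ℕ) :
    coeff n (x * y) * z ^ n = ∑ p ∈ Finset.HasAntidiagonal.antidiagonal n,
      (coeff p.1 x * z ^ p.1) * (coeff p.2 y * z ^ p.2) := by
  rw [coeff_mul, Finset.sum_mul]
  refine Finset.sum_congr rfl fun p hp => ?_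
  rw [← Finset.HasAntidiagonal.mem_antidiagonal.1 hp, pow_add]; ring

lemma Conv.mul {x y : PowerSeries ℂ} (hx : Conv x) (hy : Conv y) : Conv (x * y) := by
  intro z hz
  have := summable_norm_sum_mul_antidiagonal_of_summable_norm (hx z hz).norm (hy z hz).norm
  have h2 := this.of_norm
  simpa only [mul_term] using h2

lemma ev_mul {x y : PowerSeries ℂ} (hx : Conv x) (hy : Conv y) {z : ℂ} (hz : ‖z‖ < 1) :
    ev (x * y) z = ev x z * ev y z := by
  have := tsum_mul_tsum_eq_tsum_sum_antidiagonal_of_summable_norm (hx z hz).norm (hy z hz).norm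
  simp only [ev, mul_term]
  exact this.symm

lemma hasSum_C (c z : ℂ) : HasSum (fun n => coeff n (C c) * z ^ n) c := by
  have := hasSum_single (f := fun n => coeff n (C c) * z ^ n) 0 (by
    intro n hn; simp [coeff_C, hn])
  simpa using this

lemma conv_C (c : ℂ) : Conv (C c) := fun z _ => (hasSum_C c z).summable
lemma ev_C (c z : ℂ) : ev (C c) z = c := (hasSum_C c z).tsum_eq
lemma conv_one : Conv 1 := by simpa using conv_C 1
lemma ev_one (z : ℂ) : ev 1 z = 1 := by simpa using ev_C 1 z
lemma conv_zero : Conv 0 := by simpa using conv_C 0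
lemma ev_zero (z : ℂ) : ev 0 z = 0 := by simpa using ev_C 0 z

lemma hasSum_X (z : ℂ) : HasSum (fun n => coeff n (X : PowerSeries ℂ) * z ^ n) z := by
  have := hasSum_single (f := fun n => coeff n (X : PowerSeries ℂ) * z ^ n) 1 (by
    intro n hn; simp [coeff_X, hn])
  simpa using this
lemma conv_X : Conv X := fun z _ => (hasSum_X z).summable
lemma ev_X (z : ℂ) : ev X z = z := (hasSum_X z).tsum_eq

lemma Conv.pow {x : PowerSeries ℂ} (hx : Conv x) (k : ℕ) : Conv (x ^ k) := by
  induction k with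
  | zero => simpa using conv_one
  | succ k ih => rw [pow_succ]; exact ih.mul hx

lemma ev_pow {x : PowerSeries ℂ} (hx : Conv x) (k : ℕ) {z : ℂ} (hz : ‖z‖ < 1) :
    ev (x ^ k) z = ev x z ^ k := by
  induction k with
  | zero => simpa using ev_one z
  | succ k ih => rw [pow_succ, pow_succ, ev_mul (hx.pow k) hx hz, ih]

lemma conv_sum {ι : Type*} (s : Finset ι) (f : ι → PowerSeries ℂ) (h : ∀ i ∈ s, Conv (f i)) :
    Conv (∑ i ∈ s, f i) := by
  classical
  induction s using Finset.induction_on with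
  | empty => simpa using conv_zero
  | insert a s ha ih =>
    rw [Finset.sum_insert ha]
    exact (h a (by simp)).add (ih fun i hi => h i (by simp [hi]))

lemma conv_prod {ι : Type*} (s : Finset ι) (f : ι → PowerSeries ℂ) (h : ∀ i ∈ s, Conv (f i)) :
    Conv (∏ i ∈ s, f i) := by
  classical
  induction s using Finset.induction_on with
  | empty => simpa using conv_one
  | insert a s ha ih =>
    rw [Finset.prod_insert ha]
    exact (h a (by simp)).mul (ih fun i hi => h i (by simp [hi]))

lemma ev_prod {ι : Type*} (s : Finset ι) (f : ι → PowerSeries ℂ) (h : ∀ i ∈ s, Conv (f i))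
    {z : ℂ} (hz : ‖z‖ < 1) : ev (∏ i ∈ s, f i) z = ∏ i ∈ s, ev (f i) z := by
  classical
  induction s using Finset.induction_on with
  | empty => simpa using ev_one z
  | insert a s ha ih =>
    rw [Finset.prod_insert ha, Finset.prod_insert ha,
      ev_mul (h a (by simp)) (conv_prod s f fun i hi => h i (by simp [hi])) hz,
      ih fun i hi => h i (by simp [hi])]

lemma hasSum_expand {x : PowerSeries ℂ} (hx : Conv x) (p : ℕ) (hp : p ≠ 0) {z : ℂ}
    (hz : ‖z‖ < 1) : HasSum (fun n => coeff n (expand p hp x) * z ^ n) (ev x (z ^ p)) := by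
  have hz' : ‖z ^ p‖ < 1 := by
    rw [norm_pow]; exact pow_lt_one₀ (norm_nonneg _) hz hp
  have h := hx.hasSum hz'
  have inj : Function.Injective (fun n : ℕ => p * n) := fun a b h => Nat.eq_of_mul_eq_mul_left (Nat.pos_of_ne_zero hp) h
  rw [← inj.hasSum_iff]
  · convert h using 1
    ext n
    simp [coeff_expand_mul, pow_mul]
  · intro n hn
    have : ¬ p ∣ n := fun ⟨k, hk⟩ => hn ⟨k, hk.symm⟩
    simp [coeff_expand_of_not_dvd p hp x this]

lemma Conv.expand {x : PowerSeries ℂ} (hx : Conv x) (p : ℕ) (hp : p ≠ 0) :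
    Conv (expand p hp x) := fun _ hz => (hasSum_expand hx p hp hz).summable
lemma ev_expand {x : PowerSeries ℂ} (hx : Conv x) (p : ℕ) (hp : p ≠ 0) {z : ℂ}
    (hz : ‖z‖ < 1) : ev (expand p hp x) z = ev x (z ^ p) := (hasSum_expand hx p hp hz).tsum_eq

open FormalMultilinearSeries in
lemma Conv.fps {x : PowerSeries ℂ} (hx : Conv x) :
    HasFPowerSeriesOnBall (ev x) (ofScalars ℂ (fun n => coeff n x)) 0 1 := by
  refine ⟨?_, by simp, ?_⟩
  · refine ENNReal.le_of_forall_nnreal_lt fun r hr => ?_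
    apply le_radius_of_summable_norm
    have hr' : ‖((r : ℝ) : ℂ)‖ < 1 := by
      simpa using hr
    have := (hx _ hr').norm
    simpa using this
  · intro y hy
    have hy' : ‖y‖ < 1 := by simpa [← Complex.dist_eq, enorm_eq_nnnorm, ← NNReal.coe_lt_coe] using hy
    simpa [mul_comm] using hx.hasSum hy'

lemma Conv.diff {x : PowerSeries ℂ} (hx : Conv x) :
    DifferentiableOn ℂ (ev x) (Metric.ball 0 1) := by
  have := hx.fps.differentiableOn
  simpa [← Metric.eball_ofReal] using this

lemma iter_ev {w : PowerSeries ℂ} (hw : Conv w) (n : ℕ) :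
    iteratedDeriv n (ev w) 0 = n.factorial * coeff n w := by
  have := hw.fps.hasFPowerSeriesAt.eq_formalMultilinearSeries
    (hw.fps.analyticAt.hasFPowerSeriesAt)
  have h3 := congrArg (fun p => p.coeff n) this
  simp only [FormalMultilinearSeries.coeff_ofScalars] at h3
  rw [h3]
  have hf : ((n.factorial : ℕ) : ℂ) ≠ 0 := by exact_mod_cast n.factorial_ne_zero
  rw [mul_div_cancel₀ _ hf]

lemma coeff_bound {x : PowerSeries ℂ} (hx : Conv x) {r C : ℝ} (hr : 0 < r) (hr1 : r < 1)
    (hC : ∀ z : ℂ, ‖z‖ = r → ‖ev x z‖ ≤ C) (n : ℕ) : ‖coeff n x‖ * r ^ n ≤ C := by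
  have h1 := Complex.norm_iteratedDeriv_le_of_forall_mem_sphere_norm_le (c := 0) (f := ev x) n hr
    (by
      apply DifferentiableOn.diffContOnCl
      rw [closure_ball _ hr.ne']
      exact hx.diff.mono (Metric.closedBall_subset_ball hr1))
    (C := C) (by simpa using hC)
  have h2 := iter_ev hx n
  rw [h2] at h1
  have hf : (0 : ℝ) < n.factorial := by exact_mod_cast n.factorial_pos
  have hrn : 0 < r ^ n := pow_pos hr n
  rw [norm_mul, Complex.norm_natCast, le_div_iff₀ hrn] at h1
  nlinarith

lemma ev_unique {x : PowerSeries ℂ} (hx : Conv x) (h : ∀ z : ℂ, ‖z‖ < 1 → ev x z = 0) : x = 0 := by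
  ext n
  have := coeff_bound hx (r := 1/2) (C := 0) (by norm_num) (by norm_num)
    (fun z hz => by rw [h z (by rw [hz]; norm_num)]; simp) n
  have h2 : ‖coeff n x‖ ≤ 0 := by
    have h3 : (0:ℝ) < (1/2)^n := by positivity
    nlinarith [norm_nonneg (coeff n x)]
  simpa using h2

lemma ev_ext {x y : PowerSeries ℂ} (hx : Conv x) (hy : Conv y)
    (h : ∀ z : ℂ, ‖z‖ < 1 → ev x z = ev y z) : x = y := by
  have := ev_unique (hx.sub hy) fun z hz => by rw [ev_sub hx hy hz, h z hz, sub_self]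
  exact sub_eq_zero.1 this

lemma exists_taylor {f : ℂ → ℂ} (hf : DifferentiableOn ℂ f (Metric.ball 0 1)) :
    ∃ x, Conv x ∧ ∀ z : ℂ, ‖z‖ < 1 → ev x z = f z := by
  have key : ∀ z : ℂ, ‖z‖ < 1 → HasSum (fun n =>
      coeff n (PowerSeries.mk fun n : ℕ => (n.factorial : ℂ)⁻¹ * iteratedDeriv n f 0) * z ^ n) (f z) := by
    intro z hz
    have := Complex.hasSum_taylorSeries_on_ball (c := 0) (r := 1) (f := f) (z := z) hf (by simpa using hz)
    simpa [mul_comm, mul_left_comm, mul_assoc] using this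
  exact ⟨_, fun z hz => (key z hz).summable, fun z hz => (key z hz).tsum_eq⟩

lemma exists_inv {x : PowerSeries ℂ} (hx : Conv x) (h : ∀ z : ℂ, ‖z‖ < 1 → ev x z ≠ 0) :
    ∃ y, Conv y ∧ x * y = 1 := by
  obtain ⟨y, hy, hy'⟩ := exists_taylor (f := fun z => (ev x z)⁻¹)
    (hx.diff.inv fun z hz => h z (by simpa using hz))
  refine ⟨y, hy, ev_ext (hx.mul hy) conv_one fun z hz => ?_⟩
  rw [ev_mul hx hy hz, hy' z hz, ev_one, mul_inv_cancel₀ (h z hz)]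

lemma Conv.of_mul_X {x : PowerSeries ℂ} (h : Conv (X * x)) : Conv x := by
  intro z hz
  by_cases h0 : z = 0
  · subst h0
    exact summable_of_ne_finset_zero (s := {0}) (by
      intro n hn; simp at hn; simp [hn])
  have := (summable_nat_add_iff 1).2 (h z hz)
  have h2 := this.mul_right z⁻¹
  refine h2.congr fun n => ?_
  rw [coeff_succ_X_mul, pow_succ]; field_simp

lemma Conv.deriv {x : PowerSeries ℂ} (hx : Conv x) :
    Conv (d⁄dX ℂ x) ∧ ∀ z : ℂ, ‖z‖ < 1 → HasDerivAt (ev x) (ev (d⁄dX ℂ x) z) z := by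
  have hd : DifferentiableOn ℂ (_root_.deriv (ev x)) (Metric.ball 0 1) :=
    hx.diff.deriv Metric.isOpen_ball
  obtain ⟨y, hy, hy'⟩ := exists_taylor hd
  have key : d⁄dX ℂ x = y := by
    ext n
    have h1 := iter_ev hy n
    have h2 := iter_ev hx (n+1)
    rw [iteratedDeriv_succ'] at h2
    have h3 : iteratedDeriv n (ev y) 0 = iteratedDeriv n (_root_.deriv (ev x)) 0 := by
      apply Filter.EventuallyEq.iteratedDeriv_eq
      filter_upwards [Metric.ball_mem_nhds (0:ℂ) one_pos] with z hz
      exact hy' z (by simpa using hz)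
    rw [h1, h2] at h3
    rw [coeff_derivative]
    have hf : ((n.factorial : ℕ) : ℂ) ≠ 0 := by exact_mod_cast n.factorial_ne_zero
    rw [Nat.factorial_succ] at h3
    push_cast at h3
    apply mul_left_cancel₀ hf
    rw [h3]; ring
  rw [key]
  refine ⟨hy, fun z hz => ?_⟩
  rw [hy' z hz]
  exact ((hx.diff z (by simpa using hz)).differentiableAt
    (Metric.isOpen_ball.mem_nhds (by simpa using hz))).hasDerivAt
end

section
open PowerSeries

/-- coercion to complex power series -/
def cc : PowerSeries ℤ →+* PowerSeries ℂ := PowerSeries.map (Int.castRingHom ℂ)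
lemma coeff_cc (n : ℕ) (x : PowerSeries ℤ) : coeff n (cc x) = ((coeff n x : ℤ) : ℂ) := by
  simp [cc]
lemma cc_inj : Function.Injective cc := PowerSeries.map_injective _ (by
  intro a b h; simpa using h)
lemma cc_X : cc X = X := by simp [cc]

lemma Jprod_succ (b n N : ℕ) (hb : 1 ≤ b) (hN : n + 1 ≤ N) :
    coeff n (∏ k ∈ Finset.range N, (1 - (X : PowerSeries ℤ) ^ (b * (k + 1)))) = coeff n (J b) := by
  induction N, hN using Nat.le_induction with
  | base => simp [J]
  | succ N hN ih =>
    rw [Finset.prod_range_succ, mul_sub, mul_one, map_sub, ih, coeff_mul_X_pow', if_neg, sub_zero]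
    nlinarith

lemma J_expand (b : ℕ) (hb : b ≠ 0) : J b = expand b hb (J 1) := by
  ext n
  rw [← Jprod_succ b n (n+1) (Nat.pos_of_ne_zero hb) le_rfl]
  have : ∏ k ∈ Finset.range (n+1), (1 - (X : PowerSeries ℤ) ^ (b * (k + 1))) =
      expand b hb (∏ k ∈ Finset.range (n+1), (1 - (X : PowerSeries ℤ) ^ (1 * (k + 1)))) := by
    simp [map_prod, pow_mul]
  rw [this, coeff_expand, coeff_expand]
  split_ifs with h
  · exact Jprod_succ 1 _ _ le_rfl (by have := Nat.div_le_self n b; omega)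
  · rfl

lemma coeff_zero_J (b : ℕ) (hb : b ≠ 0) : coeff 0 (J b) = 1 := by
  simp [J, hb]

open ModularForm in
lemma J1_conv_ev : Conv (cc (J 1)) ∧ ∀ z : ℂ, ‖z‖ < 1 → ev (cc (J 1)) z = ∏' n, (1 - z ^ (n+1)) := by
  obtain ⟨x, hx, hx'⟩ := exists_taylor differentiableOn_tprod_one_sub_pow
  suffices h : cc (J 1) = x by rw [h]; exact ⟨hx, hx'⟩
  let P : ℕ → PowerSeries ℂ := fun N => ∏ k ∈ Finset.range N, (1 - X ^ (k+1))
  have hP : ∀ N, Conv (P N) := fun N => conv_prod _ _ fun k _ => conv_one.sub (conv_X.pow _)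
  have hPe : ∀ N, ∀ z : ℂ, ‖z‖ < 1 → ev (P N) z = ∏ k ∈ Finset.range N, (1 - z ^ (k+1)) := by
    intro N z hz
    rw [ev_prod _ _ (fun k _ => conv_one.sub (conv_X.pow _)) hz]
    refine Finset.prod_congr rfl fun k _ => ?_
    rw [ev_sub conv_one (conv_X.pow _) hz, ev_one, ev_pow conv_X _ hz, ev_X]
  have hPc : ∀ N, P N = cc (∏ k ∈ Finset.range N, (1 - (X : PowerSeries ℤ) ^ (1 * (k + 1)))) := by
    intro N; simp [P, map_prod, cc]
  have hu : TendstoUniformlyOn (fun N z => ∏ k ∈ Finset.range N, (1 - z ^ (k+1)))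
      (fun z : ℂ => ∏' n, (1 - z ^ (n+1))) Filter.atTop (Metric.sphere (0:ℂ) (1/2)) := by
    have h1 := multipliableLocallyUniformlyOn_one_sub_pow.hasProdLocallyUniformlyOn
    have h2 := (tendstoLocallyUniformlyOn_iff_forall_isCompact Metric.isOpen_ball).1 h1
      (Metric.sphere (0:ℂ) (1/2)) (Metric.sphere_subset_ball (by norm_num)) (isCompact_sphere _ _)
    rw [Metric.tendstoUniformlyOn_iff] at h2 ⊢
    intro ε hε
    have := Filter.tendsto_finset_range.eventually (h2 ε hε)
    simpa using this
  ext n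
  rw [Metric.tendstoUniformlyOn_iff] at hu
  have key : ∀ ε > 0, ‖coeff n (cc (J 1)) - coeff n x‖ * (1/2) ^ n ≤ ε := by
    intro ε hε
    obtain ⟨N, hN1, hN2⟩ := ((hu ε hε).and (Filter.eventually_ge_atTop (n+1))).exists
    have := coeff_bound (x := P N - x) ((hP N).sub hx) (r := 1/2) (C := ε) (by norm_num) (by norm_num)
      (fun z hz => by
        have hz' : ‖z‖ < 1 := by rw [hz]; norm_num
        rw [ev_sub (hP N) hx hz', hPe N z hz', hx' z hz', ← dist_eq_norm, dist_comm]
        exact (hN1 z (by simpa using hz)).le) n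
    rw [map_sub, hPc, coeff_cc, Jprod_succ 1 n N le_rfl hN2, ← coeff_cc] at this
    exact this
  have h0 : ‖coeff n (cc (J 1)) - coeff n x‖ * (1/2) ^ n ≤ 0 := le_of_forall_pos_le_add (by
    intro ε hε; simpa using key ε hε)
  have h3 : (0:ℝ) < (1/2)^n := by positivity
  have : ‖coeff n (cc (J 1)) - coeff n x‖ ≤ 0 := by nlinarith [norm_nonneg (coeff n (cc (J 1)) - coeff n x)]
  exact sub_eq_zero.1 (by simpa using this)

lemma conv_J (b : ℕ) (hb : b ≠ 0) : Conv (cc (J b)) := by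
  have : cc (J b) = expand b hb (cc (J 1)) := by
    rw [J_expand b hb, cc, map_expand]
  rw [this]; exact J1_conv_ev.1.expand b hb

lemma ev_J (b : ℕ) (hb : b ≠ 0) {z : ℂ} (hz : ‖z‖ < 1) : ev (cc (J b)) z = ∏' n, (1 - (z ^ b) ^ (n+1)) := by
  have : cc (J b) = expand b hb (cc (J 1)) := by
    rw [J_expand b hb, cc, map_expand]
  rw [this, ev_expand J1_conv_ev.1 b hb hz, J1_conv_ev.2]
  rw [norm_pow]; exact pow_lt_one₀ (norm_nonneg _) hz hb

lemma ev_J_ne (b : ℕ) (hb : b ≠ 0) {z : ℂ} (hz : ‖z‖ < 1) : ev (cc (J b)) z ≠ 0 := by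
  rw [ev_J b hb hz]
  have hz' : ‖z ^ b‖ < 1 := by rw [norm_pow]; exact pow_lt_one₀ (norm_nonneg _) hz hb
  generalize z ^ b = w at hz'
  have := tprod_one_add_ne_zero_of_summable (f := fun n : ℕ ↦ -w ^ (n+1)) ?_ ?_
  · simpa [sub_eq_add_neg] using this
  · intro i h
    have h1 : w ^ (i+1) = 1 := by linear_combination -h
    have h2 : ‖w ^ (i+1)‖ < 1 := by
      rw [norm_pow]; exact pow_lt_one₀ (norm_nonneg _) hz' (by omega)
    rw [h1] at h2; simp at h2
  · simpa using (summable_nat_add_iff 1).mpr (summable_geometric_of_lt_one (norm_nonneg _) hz')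

/-- inverse of `J b` -/
def Ji (b : ℕ) : PowerSeries ℤ := invOfUnit (J b) 1
lemma J_mul_Ji (b : ℕ) (hb : b ≠ 0) : J b * Ji b = 1 :=
  mul_invOfUnit _ _ (by simpa using coeff_zero_J b hb)

lemma conv_Ji (b : ℕ) (hb : b ≠ 0) : Conv (cc (Ji b)) := by
  obtain ⟨y, hy, hxy⟩ := exists_inv (conv_J b hb) fun z hz => ev_J_ne b hb hz
  have h1 : cc (J b) * cc (Ji b) = 1 := by rw [← map_mul, J_mul_Ji b hb, map_one]
  have : cc (Ji b) = y := by
    calc cc (Ji b) = cc (Ji b) * (cc (J b) * y) := by rw [hxy, mul_one]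
      _ = (cc (J b) * cc (Ji b)) * y := by ring
      _ = y := by rw [h1, one_mul]
  rwa [this]

lemma ev_Ji (b : ℕ) (hb : b ≠ 0) {z : ℂ} (hz : ‖z‖ < 1) : ev (cc (Ji b)) z = (ev (cc (J b)) z)⁻¹ := by
  have h1 : cc (J b) * cc (Ji b) = 1 := by rw [← map_mul, J_mul_Ji b hb, map_one]
  have h2 := ev_mul (conv_J b hb) (conv_Ji b hb) hz
  rw [h1, ev_one] at h2
  exact eq_inv_of_mul_eq_one_right h2.symm

/-- D = q J_2^16/J_1^8 -/
def Df : PowerSeries ℤ := X * (J 2 ^ 16 * Ji 1 ^ 8)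
/-- D' = J_1^16/J_2^8 -/
def Dg : PowerSeries ℤ := J 1 ^ 16 * Ji 2 ^ 8
/-- E = weight 2 Eisenstein series of level 2 -/
def Ef : PowerSeries ℤ := 1 + 24 * (X * (d⁄dX ℤ (J 2) * Ji 2 - d⁄dX ℤ (J 1) * Ji 1))

lemma conv_Df : Conv (cc Df) := by
  simp only [Df, map_mul, map_pow, cc_X]
  exact conv_X.mul (((conv_J 2 two_ne_zero).pow _).mul ((conv_Ji 1 one_ne_zero).pow _))
lemma conv_Dg : Conv (cc Dg) := by
  simp only [Dg, map_mul, map_pow, cc_X]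
  exact (((conv_J 1 one_ne_zero).pow _).mul ((conv_Ji 2 two_ne_zero).pow _))
lemma ev_Df {z : ℂ} (hz : ‖z‖ < 1) :
    ev (cc Df) z = z * (ev (cc (J 2)) z ^ 16 / ev (cc (J 1)) z ^ 8) := by
  simp only [Df, map_mul, map_pow, cc_X]
  rw [ev_mul conv_X (((conv_J 2 two_ne_zero).pow _).mul ((conv_Ji 1 one_ne_zero).pow _)) hz,
    ev_mul ((conv_J 2 two_ne_zero).pow _) ((conv_Ji 1 one_ne_zero).pow _) hz, ev_X,
    ev_pow (conv_J 2 two_ne_zero) _ hz, ev_pow (conv_Ji 1 one_ne_zero) _ hz, ev_Ji 1 one_ne_zero hz]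
  simp [div_eq_mul_inv]
lemma ev_Dg {z : ℂ} (hz : ‖z‖ < 1) :
    ev (cc Dg) z = (ev (cc (J 1)) z ^ 16 / ev (cc (J 2)) z ^ 8) := by
  simp only [Dg, map_mul, map_pow, cc_X]
  rw [ev_mul ((conv_J 1 one_ne_zero).pow _) ((conv_Ji 2 two_ne_zero).pow _) hz,
    ev_pow (conv_J 1 one_ne_zero) _ hz, ev_pow (conv_Ji 2 two_ne_zero) _ hz, ev_Ji 2 two_ne_zero hz]
  simp [div_eq_mul_inv]

lemma cc_deriv (x : PowerSeries ℤ) : cc (d⁄dX ℤ x) = d⁄dX ℂ (cc x) := by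
  ext n; simp [coeff_cc, coeff_derivative]

lemma cc_Ef : cc Ef = 1 + (24:ℂ) • (X * (d⁄dX ℂ (cc (J 2)) * cc (Ji 2) - d⁄dX ℂ (cc (J 1)) * cc (Ji 1))) := by
  simp only [Ef, map_add, map_mul, map_sub, cc_X, cc_deriv, map_one]
  congr 1
  have : cc 24 = C (24:ℂ) := by
    rw [map_ofNat]; exact (map_ofNat C 24).symm
  rw [this, smul_eq_C_mul]

lemma conv_Ef : Conv (cc Ef) := by
  rw [cc_Ef]
  exact conv_one.add ((conv_X.mul (((conv_J 2 two_ne_zero).deriv.1.mul (conv_Ji 2 two_ne_zero)).sub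
    ((conv_J 1 one_ne_zero).deriv.1.mul (conv_Ji 1 one_ne_zero)))).smul _)
lemma ev_Ef {z : ℂ} (hz : ‖z‖ < 1) :
    ev (cc Ef) z = 1 + 24 * (z * (logDeriv (ev (cc (J 2))) z - logDeriv (ev (cc (J 1))) z)) := by
  rw [cc_Ef]
  have h2 := (conv_J 2 two_ne_zero).deriv
  have h1 := (conv_J 1 one_ne_zero).deriv
  have h3 := (h2.1.mul (conv_Ji 2 two_ne_zero))
  have h4 := (h1.1.mul (conv_Ji 1 one_ne_zero))
  rw [ev_add conv_one ((conv_X.mul (h3.sub h4)).smul _) hz, ev_one, ev_smul, ev_mul conv_X (h3.sub h4) hz,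
    ev_X, ev_sub h3 h4 hz, ev_mul h2.1 (conv_Ji 2 two_ne_zero) hz, ev_mul h1.1 (conv_Ji 1 one_ne_zero) hz,
    ev_Ji 2 two_ne_zero hz, ev_Ji 1 one_ne_zero hz]
  simp [logDeriv_apply, (h1.2 z hz).deriv, (h2.2 z hz).deriv, div_eq_mul_inv]
end

section
open PowerSeries

def qq (τ : ℂ) : ℂ := Complex.exp (2 * Real.pi * Complex.I * τ)

lemma norm_qq (τ : ℂ) : ‖qq τ‖ = Real.exp (-2 * Real.pi * τ.im) := by
  rw [qq, Complex.norm_exp]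
  congr 1
  simp

lemma qq_lt {τ : ℂ} (h : 0 < τ.im) : ‖qq τ‖ < 1 := by
  rw [norm_qq, Real.exp_lt_one_iff]
  have := mul_pos Real.pi_pos h
  nlinarith

lemma qq_add_int (τ : ℂ) (n : ℤ) : qq (τ + n) = qq τ := by
  rw [qq, qq, mul_add, Complex.exp_add]
  have : Complex.exp (2 * Real.pi * Complex.I * n) = 1 := by
    rw [mul_comm]; exact Complex.exp_int_mul_two_pi_mul_I n
  rw [this, mul_one]

lemma qq_nat_mul (τ : ℂ) (n : ℕ) : qq (n * τ) = qq τ ^ n := by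
  rw [qq, qq, ← Complex.exp_nat_mul]; ring_nf

lemma qq_ne (τ : ℂ) : qq τ ≠ 0 := Complex.exp_ne_zero _

lemma exists_qq {z : ℂ} (h0 : z ≠ 0) (h1 : ‖z‖ < 1) : ∃ τ : ℂ, 0 < τ.im ∧ qq τ = z := by
  have key : qq (Complex.log z / (2 * Real.pi * Complex.I)) = z := by
    rw [qq, mul_div_cancel₀, Complex.exp_log h0]
    exact Complex.two_pi_I_ne_zero
  refine ⟨Complex.log z / (2 * Real.pi * Complex.I), ?_, key⟩
  rw [← key, norm_qq, Real.exp_lt_one_iff] at h1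
  have := Real.pi_pos
  by_contra h
  nlinarith

def WW (τ : ℂ) : ℂ := -1 / (2 * τ)

lemma im_WW (τ : ℂ) : (WW τ).im = τ.im / (2 * Complex.normSq τ) := by
  rw [WW, neg_div, Complex.neg_im, one_div, Complex.inv_im]
  simp
  field_simp

lemma WW_im_pos {τ : ℂ} (h : 0 < τ.im) : 0 < (WW τ).im := by
  rw [im_WW]
  have : τ ≠ 0 := by rintro rfl; simp at h
  have := Complex.normSq_pos.2 this
  positivity

lemma WW_WW {τ : ℂ} (h : 0 < τ.im) : WW (WW τ) = τ := by
  have : τ ≠ 0 := by rintro rfl; simp at h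
  rw [WW, WW]; field_simp

open ModularForm
lemma eta_eq {τ : ℂ} (h : 0 < τ.im) : eta τ = Function.Periodic.qParam 24 τ * ev (cc (J 1)) (qq τ) := by
  rw [eta, J1_conv_ev.2 _ (qq_lt h)]
  simp_rw [eta_q_eq_pow]; rfl

lemma eta_eq2 {τ : ℂ} (h : 0 < τ.im) : eta (2*τ) = Function.Periodic.qParam 24 (2*τ) * ev (cc (J 2)) (qq τ) := by
  rw [eta, ev_J 2 two_ne_zero (qq_lt h)]
  simp_rw [eta_q_eq_pow]
  have := qq_nat_mul τ 2
  push_cast at this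
  rw [← this]; rfl

lemma qP24 (τ : ℂ) : Function.Periodic.qParam 24 τ ^ 24 = qq τ := by
  rw [Function.Periodic.qParam, ← Complex.exp_nat_mul, qq]
  congr 1; push_cast; ring
lemma qP24' (τ : ℂ) : Function.Periodic.qParam 24 (2*τ) = Function.Periodic.qParam 24 τ ^ 2 := by
  rw [Function.Periodic.qParam, Function.Periodic.qParam, ← Complex.exp_nat_mul]
  congr 1; push_cast; ring

lemma ev_Df_eta {τ : ℂ} (h : 0 < τ.im) : ev (cc Df) (qq τ) = eta (2*τ) ^ 16 / eta τ ^ 8 := by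
  rw [ev_Df (qq_lt h), eta_eq h, eta_eq2 h, qP24', ← qP24]
  have h1 := ev_J_ne 1 one_ne_zero (qq_lt h)
  have h2 : Function.Periodic.qParam 24 τ ≠ 0 := Complex.exp_ne_zero _
  field_simp
lemma ev_Dg_eta {τ : ℂ} (h : 0 < τ.im) : ev (cc Dg) (qq τ) = eta τ ^ 16 / eta (2*τ) ^ 8 := by
  rw [ev_Dg (qq_lt h), eta_eq h, eta_eq2 h, qP24']
  have h1 := ev_J_ne 2 two_ne_zero (qq_lt h)
  have h2 : Function.Periodic.qParam 24 τ ≠ 0 := Complex.exp_ne_zero _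
  field_simp

lemma eta_pow8 {τ : ℂ} (h : 0 < τ.im) : eta (-1/τ) ^ 8 = τ ^ 4 * eta τ ^ 8 := by
  have := eta_comp_eq_csqrt_I_inv (x := τ) h
  simp only [Function.comp, Pi.smul_apply, Pi.mul_apply, smul_eq_mul] at this
  rw [this]
  have h1 : ∀ z : ℂ, z.sqrt ^ 8 = z ^ 4 := by
    intro z
    have : z.sqrt ^ 2 = z := by
      have := Complex.cpow_nat_inv_pow z (n := 2) (by norm_num)
      simpa [Complex.sqrt] using this
    calc z.sqrt ^ 8 = (z.sqrt ^ 2) ^ 4 := by ring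
      _ = z ^ 4 := by rw [this]
  rw [mul_pow, mul_pow, inv_pow, h1, h1]
  simp

lemma eta_W1 {τ : ℂ} (h : 0 < τ.im) : eta (WW τ) ^ 8 = 16 * τ ^ 4 * eta (2*τ) ^ 8 := by
  rw [WW, eta_pow8 (by simpa using h)]; ring
lemma eta_W2 {τ : ℂ} (h : 0 < τ.im) : eta (2 * WW τ) ^ 8 = τ ^ 4 * eta τ ^ 8 := by
  have : τ ≠ 0 := by rintro rfl; simp at h
  rw [← eta_pow8 h, WW]; congr 2; field_simp

lemma Df_W {τ : ℂ} (h : 0 < τ.im) : ev (cc Df) (qq (WW τ)) = τ ^ 4 / 16 * ev (cc Dg) (qq τ) := by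
  rw [ev_Df_eta (WW_im_pos h), ev_Dg_eta h, eta_W1 h, show 16 = 8 * 2 by norm_num, pow_mul, eta_W2 h]
  have : τ ≠ 0 := by rintro rfl; simp at h
  have h2 : eta (2*τ) ≠ 0 := eta_ne_zero (by simpa [UpperHalfPlane.upperHalfPlaneSet] using h)
  field_simp
lemma Dg_W {τ : ℂ} (h : 0 < τ.im) : ev (cc Dg) (qq (WW τ)) = 256 * τ ^ 4 * ev (cc Df) (qq τ) := by
  rw [ev_Dg_eta (WW_im_pos h), ev_Df_eta h, show eta (WW τ) ^ 16 = (eta (WW τ) ^ 8) ^ 2 by ring,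
    eta_W1 h, eta_W2 h]
  have : τ ≠ 0 := by rintro rfl; simp at h
  have h2 : eta τ ≠ 0 := eta_ne_zero (by simpa [UpperHalfPlane.upperHalfPlaneSet] using h)
  field_simp
  try ring

def KK (z : ℂ) : ℂ := z * (ev (cc (J 2)) z / ev (cc (J 1)) z) ^ 24

lemma diffAt_ev {x : PowerSeries ℂ} (hx : Conv x) {z : ℂ} (hz : ‖z‖ < 1) :
    DifferentiableAt ℂ (ev x) z := (hx.deriv.2 z hz).differentiableAt

lemma diffAt_KK {z : ℂ} (hz : ‖z‖ < 1) : DifferentiableAt ℂ KK z := by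
  have h1 := diffAt_ev (conv_J 1 one_ne_zero) hz
  have h2 := diffAt_ev (conv_J 2 two_ne_zero) hz
  have h3 := ev_J_ne 1 one_ne_zero hz
  unfold KK
  exact differentiableAt_id.mul ((h2.div h1 h3).pow 24)

lemma logDeriv_KK {z : ℂ} (h0 : z ≠ 0) (hz : ‖z‖ < 1) : z * logDeriv KK z = ev (cc Ef) z := by
  have h1 := diffAt_ev (conv_J 1 one_ne_zero) hz
  have h2 := diffAt_ev (conv_J 2 two_ne_zero) hz
  have n1 := ev_J_ne 1 one_ne_zero hz
  have n2 := ev_J_ne 2 two_ne_zero hz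
  have d := h2.div h1 n1
  have e1 : logDeriv (fun z => ev (cc (J 2)) z / ev (cc (J 1)) z) z = logDeriv (ev (cc (J 2))) z - logDeriv (ev (cc (J 1))) z :=
    logDeriv_div z n2 n1 h2 h1
  have e2 : logDeriv (fun z => (ev (cc (J 2)) z / ev (cc (J 1)) z) ^ 24) z =
      (24:ℕ) * logDeriv (fun z => ev (cc (J 2)) z / ev (cc (J 1)) z) z := logDeriv_fun_pow d 24
  have e3 : logDeriv KK z = logDeriv (fun z => z) z + logDeriv (fun z => (ev (cc (J 2)) z / ev (cc (J 1)) z) ^ 24) z :=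
    logDeriv_mul (f := fun z => z) (g := fun z => (ev (cc (J 2)) z / ev (cc (J 1)) z) ^ 24) z h0
      (pow_ne_zero _ (div_ne_zero n2 n1)) differentiableAt_id (d.pow 24)
  rw [e3, e2, e1, ev_Ef hz, logDeriv_id']
  push_cast
  field_simp

lemma KK_W {τ : ℂ} (h : 0 < τ.im) : KK (qq (WW τ)) * KK (qq τ) * 2 ^ 12 = 1 := by
  have hK : ∀ {τ : ℂ}, 0 < τ.im → KK (qq τ) = ev (cc Df) (qq τ) / ev (cc Dg) (qq τ) := by
    intro τ h
    rw [ev_Df (qq_lt h), ev_Dg (qq_lt h), KK]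
    have n1 := ev_J_ne 1 one_ne_zero (qq_lt h)
    have n2 := ev_J_ne 2 two_ne_zero (qq_lt h)
    field_simp
  have hn : ev (cc Df) (qq τ) ≠ 0 := by
    rw [ev_Df (qq_lt h)]
    exact mul_ne_zero (qq_ne _) (div_ne_zero (pow_ne_zero _ (ev_J_ne 2 two_ne_zero (qq_lt h)))
      (pow_ne_zero _ (ev_J_ne 1 one_ne_zero (qq_lt h))))
  have hn' : ev (cc Dg) (qq τ) ≠ 0 := by
    rw [ev_Dg (qq_lt h)]
    exact (div_ne_zero (pow_ne_zero _ (ev_J_ne 1 one_ne_zero (qq_lt h)))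
      (pow_ne_zero _ (ev_J_ne 2 two_ne_zero (qq_lt h))))
  have : τ ≠ 0 := by rintro rfl; simp at h
  rw [hK h, hK (WW_im_pos h), Df_W h, Dg_W h]
  field_simp
  norm_num

lemma Ef_W {τ : ℂ} (h : 0 < τ.im) : ev (cc Ef) (qq (WW τ)) = -2 * τ ^ 2 * ev (cc Ef) (qq τ) := by
  have hτ : τ ≠ 0 := by rintro rfl; simp at h
  have dq : ∀ τ : ℂ, HasDerivAt qq (2 * Real.pi * Complex.I * qq τ) τ := by
    intro τ
    have := ((hasDerivAt_id τ).const_mul (2 * Real.pi * Complex.I)).cexp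
    exact this.congr_deriv (by simp [qq, mul_comm])
  have dW : HasDerivAt WW (1 / (2 * τ^2)) τ := by
    have := ((hasDerivAt_id τ).const_mul (2:ℂ)).inv (by simpa using hτ)
    have := this.neg
    have e : WW = (-(fun y => 2 * id y)⁻¹) := by
      funext x; simp [WW, neg_div]
    rw [e]
    exact this.congr_deriv (by simp only [id]; field_simp; try ring)
  have dH : ∀ {τ : ℂ}, 0 < τ.im → DifferentiableAt ℂ (fun t => KK (qq t)) τ ∧
      logDeriv (fun t => KK (qq t)) τ = 2 * Real.pi * Complex.I * ev (cc Ef) (qq τ) := by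
    intro τ h
    refine ⟨(diffAt_KK (qq_lt h)).comp τ (dq τ).differentiableAt, ?_⟩
    have := logDeriv_comp (f := KK) (g := qq) (diffAt_KK (qq_lt h)) (dq τ).differentiableAt
    change logDeriv (KK ∘ qq) τ = _
    rw [this, (dq τ).deriv, ← logDeriv_KK (qq_ne τ) (qq_lt h)]
    ring
  have e1 : logDeriv (fun t => KK (qq (WW t))) τ = 2 * Real.pi * Complex.I * ev (cc Ef) (qq (WW τ)) * (1 / (2 * τ^2)) := by
    have := logDeriv_comp (f := fun t => KK (qq t)) (g := WW) (dH (WW_im_pos h)).1 dW.differentiableAt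
    change logDeriv ((fun t => KK (qq t)) ∘ WW) τ = _
    rw [this, dW.deriv, (dH (WW_im_pos h)).2]
  have e2 : (fun t => KK (qq (WW t))) =ᶠ[nhds τ] fun t => (2^12)⁻¹ * (KK (qq t))⁻¹ := by
    have : {t : ℂ | 0 < t.im} ∈ nhds τ := (isOpen_lt continuous_const Complex.continuous_im).mem_nhds h
    filter_upwards [this] with t ht
    have := KK_W ht
    have h3 : KK (qq t) ≠ 0 := by rintro h0; rw [h0] at this; simp at this
    field_simp
    linear_combination this
  have e3 : logDeriv (fun t => (2^12:ℂ)⁻¹ * (KK (qq t))⁻¹) τ = - logDeriv (fun t => KK (qq t)) τ := by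
    rw [logDeriv_const_mul _ _ (by norm_num)]
    have := logDeriv_fun_zpow (dH h).1 (-1)
    simpa using this
  rw [logDeriv_apply, e2.deriv_eq, e2.eq_of_nhds, ← logDeriv_apply, e3, (dH h).2] at e1
  have hp : (2 * Real.pi * Complex.I : ℂ) ≠ 0 := Complex.two_pi_I_ne_zero
  have : -(ev (cc Ef) (qq τ)) = ev (cc Ef) (qq (WW τ)) * (1 / (2 * τ^2)) := by
    apply mul_left_cancel₀ hp
    linear_combination e1
  field_simp at this
  linear_combination -this
end

section
open PowerSeries

structure MF (k : ℤ) (x y : PowerSeries ℂ) : Prop where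
  cx : Conv x
  cy : Conv y
  tr : ∀ τ : ℂ, 0 < τ.im → ev x (qq (WW τ)) = τ ^ k * ev y (qq τ)

lemma im_ne {τ : ℂ} (h : 0 < τ.im) : τ ≠ 0 := by rintro rfl; simp at h

lemma MF.add {k : ℤ} {x y x' y' : PowerSeries ℂ} (h : MF k x y) (h' : MF k x' y') :
    MF k (x + x') (y + y') := by
  refine ⟨h.cx.add h'.cx, h.cy.add h'.cy, fun τ hτ => ?_⟩
  rw [ev_add h.cx h'.cx (qq_lt (WW_im_pos hτ)), ev_add h.cy h'.cy (qq_lt hτ), h.tr τ hτ, h'.tr τ hτ]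
  ring
lemma MF.smul {k : ℤ} {x y : PowerSeries ℂ} (h : MF k x y) (c : ℂ) : MF k (c • x) (c • y) := by
  refine ⟨h.cx.smul c, h.cy.smul c, fun τ hτ => ?_⟩
  rw [ev_smul, ev_smul, h.tr τ hτ]; ring
lemma MF.sub {k : ℤ} {x y x' y' : PowerSeries ℂ} (h : MF k x y) (h' : MF k x' y') :
    MF k (x - x') (y - y') := by
  have := h.add (h'.smul (-1))
  simpa [sub_eq_add_neg] using this
lemma MF.mul {k l : ℤ} {x y x' y' : PowerSeries ℂ} (h : MF k x y) (h' : MF l x' y') :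
    MF (k + l) (x * x') (y * y') := by
  refine ⟨h.cx.mul h'.cx, h.cy.mul h'.cy, fun τ hτ => ?_⟩
  rw [ev_mul h.cx h'.cx (qq_lt (WW_im_pos hτ)), ev_mul h.cy h'.cy (qq_lt hτ), h.tr τ hτ, h'.tr τ hτ,
    zpow_add₀ (im_ne hτ)]
  ring
lemma MF.one : MF 0 1 1 := ⟨conv_one, conv_one, fun τ _ => by simp [ev_one]⟩
lemma MF.zero (k : ℤ) : MF k 0 0 := ⟨conv_zero, conv_zero, fun τ _ => by simp [ev_zero]⟩
lemma MF.pow {k : ℤ} {x y : PowerSeries ℂ} (h : MF k x y) (n : ℕ) : MF (n * k) (x ^ n) (y ^ n) := by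
  induction n with
  | zero => simpa using MF.one
  | succ n ih =>
    rw [pow_succ, pow_succ]
    convert ih.mul h using 1
    push_cast; ring
lemma MF.swap {m : ℤ} {x y : PowerSeries ℂ} (h : MF (2 * m) x y) :
    MF (2 * m) y ((2:ℂ) ^ (2 * m) • x) := by
  refine ⟨h.cy, h.cx.smul _, fun τ hτ => ?_⟩
  have := h.tr (WW τ) (WW_im_pos hτ)
  rw [WW_WW hτ] at this
  rw [ev_smul, this]
  have h2 : WW τ ≠ 0 := im_ne (WW_im_pos hτ)
  have h3 : τ ^ (2 * m) * (2 ^ (2*m) * WW τ ^ (2 * m)) = 1 := by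
    rw [← mul_zpow, ← mul_zpow]
    have : τ * (2 * WW τ) = -1 := by
      have := im_ne hτ
      rw [WW]; field_simp
    rw [this, zpow_mul]; simp
  linear_combination (-ev y (qq (WW τ))) * h3

lemma mod_Df : MF 4 (cc Df) ((1/16:ℂ) • cc Dg) := ⟨conv_Df, conv_Dg.smul _, fun τ hτ => by
  rw [Df_W hτ, ev_smul]; norm_cast; push_cast; ring⟩
lemma mod_Dg : MF 4 (cc Dg) ((256:ℂ) • cc Df) := ⟨conv_Dg, conv_Df.smul _, fun τ hτ => by
  rw [Dg_W hτ, ev_smul]; norm_cast; push_cast; ring⟩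
lemma mod_Ef : MF 2 (cc Ef) ((-2:ℂ) • cc Ef) := ⟨conv_Ef, conv_Ef.smul _, fun τ hτ => by
  rw [Ef_W hτ, ev_smul]; norm_cast; push_cast; ring⟩

lemma ev_bdd {x : PowerSeries ℂ} (hx : Conv x) {r : ℝ} (hr : r < 1) :
    ∃ C : ℝ, 0 ≤ C ∧ ∀ z : ℂ, ‖z‖ ≤ r → ‖ev x z‖ ≤ C := by
  obtain ⟨C, hC⟩ := (isCompact_closedBall (0:ℂ) r).exists_bound_of_continuousOn
    (hx.diff.continuousOn.mono (Metric.closedBall_subset_ball hr))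
  exact ⟨max C 0, le_max_right _ _, fun z hz => (hC z (by simpa using hz)).trans (le_max_left _ _)⟩

lemma MF.neg_weight {k : ℤ} (hk : k < 0) {x y : PowerSeries ℂ} (h : MF k x y) : x = 0 := by
  let Φ : ℂ → ℝ := fun τ => ‖ev x (qq τ)‖ ^ 2 * τ.im ^ k + (2:ℝ) ^ (-k) * (‖ev y (qq τ)‖ ^ 2 * τ.im ^ k)
  have h1 : ∀ τ : ℂ, 0 < τ.im → ‖ev x (qq (WW τ))‖ ^ 2 * (WW τ).im ^ k =
      (2:ℝ) ^ (-k) * (‖ev y (qq τ)‖ ^ 2 * τ.im ^ k) := by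
    intro τ hτ
    rw [h.tr τ hτ, norm_mul, norm_zpow, im_WW, Complex.normSq_eq_norm_sq, div_zpow, mul_zpow, zpow_neg]
    have h3 : ‖τ‖ ≠ 0 := by simpa using im_ne hτ
    have h4 : (‖τ‖ ^ 2) ^ k = (‖τ‖ ^ k) ^ 2 := by
      rw [← zpow_natCast, ← zpow_natCast, ← zpow_mul, ← zpow_mul, mul_comm]
    rw [h4]
    have h5 : ‖τ‖ ^ k ≠ 0 := zpow_ne_zero _ h3
    have h6 : (2:ℝ) ^ k ≠ 0 := zpow_ne_zero _ two_ne_zero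
    field_simp
  have hW : ∀ τ : ℂ, 0 < τ.im → Φ (WW τ) = Φ τ := by
    intro τ hτ
    have a := h1 τ hτ
    have b := h1 (WW τ) (WW_im_pos hτ)
    rw [WW_WW hτ] at b
    simp only [Φ]
    rw [a, ← b]; ring
  have hT : ∀ (τ : ℂ) (n : ℤ), Φ (τ + n) = Φ τ := by
    intro τ n; simp only [Φ, qq_add_int]; simp
  obtain ⟨C, hC⟩ : ∃ C : ℝ, ∀ τ : ℂ, (0.4:ℝ) ≤ τ.im → Φ τ ≤ C := by
    have hr : Real.exp (-2 * Real.pi * 0.4) < 1 := by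
      rw [Real.exp_lt_one_iff]; nlinarith [Real.pi_pos]
    obtain ⟨C1, h0, hC1⟩ := ev_bdd h.cx hr
    obtain ⟨C2, h0', hC2⟩ := ev_bdd h.cy hr
    refine ⟨C1 ^ 2 * (0.4:ℝ) ^ k + (2:ℝ) ^ (-k) * (C2 ^ 2 * (0.4:ℝ) ^ k), fun τ hτ => ?_⟩
    have hq : ‖qq τ‖ ≤ Real.exp (-2 * Real.pi * 0.4) := by
      rw [norm_qq]; apply Real.exp_le_exp.2; nlinarith [Real.pi_pos]
    have hi : τ.im ^ k ≤ (0.4:ℝ) ^ k := by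
      have hp : (0:ℝ) < τ.im := by linarith
      obtain ⟨m, hm⟩ : ∃ m : ℕ, k = -m := ⟨(-k).toNat, by omega⟩
      rw [hm, zpow_neg, zpow_neg, zpow_natCast, zpow_natCast]
      gcongr
    have hp : 0 < τ.im := by linarith
    have hpk : 0 < τ.im ^ k := zpow_pos hp _
    have := hC1 _ hq
    have := hC2 _ hq
    simp only [Φ]
    gcongr
  have hall : ∀ n : ℕ, ∀ τ : ℂ, 0.4 * (0.82:ℝ) ^ n ≤ τ.im → Φ τ ≤ C := by
    intro n
    induction n with
    | zero => intro τ hτ; exact hC τ (by simpa using hτ)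
    | succ n ih =>
      intro τ hτ
      by_cases h4 : 0.4 ≤ τ.im
      · exact hC τ h4
      push Not at h4
      have hpos : 0 < τ.im := lt_of_lt_of_le (by positivity) hτ
      let σ : ℂ := τ + ((-round τ.re : ℤ) : ℂ)
      have hσi : σ.im = τ.im := by simp [σ]
      have hσr : σ.re ^ 2 ≤ 1/4 := by
        have : |σ.re| ≤ 1/2 := by
          have := abs_sub_round τ.re
          simpa [σ, sub_eq_add_neg] using this
        have := abs_le.1 this
        nlinarith
      rw [← hT τ (-round τ.re), ← hW σ (by rw [hσi]; exact hpos)]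
      apply ih
      rw [im_WW, hσi]
      have hN : Complex.normSq σ ≤ 0.41 := by
        rw [Complex.normSq_apply, hσi]; nlinarith
      have hN0 : 0 < Complex.normSq σ := Complex.normSq_pos.2 (im_ne (by rw [hσi]; exact hpos))
      rw [le_div_iff₀ (by positivity)]
      rw [pow_succ] at hτ
      have : (0:ℝ) < 0.82 ^ n := by positivity
      nlinarith
  have hall' : ∀ τ : ℂ, 0 < τ.im → Φ τ ≤ C := by
    intro τ hτ
    obtain ⟨n, hn⟩ := exists_pow_lt_of_lt_one (show (0:ℝ) < τ.im / 0.4 by positivity) (show (0.82:ℝ) < 1 by norm_num)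
    refine hall n τ ?_
    rw [lt_div_iff₀ (by norm_num)] at hn
    linarith
  ext n
  have hb : ∀ t : ℝ, 0 < t → (‖coeff n x‖ * Real.exp (-2 * Real.pi * t) ^ n) ^ 2 ≤ C * t ^ (-k) := by
    intro t ht
    have hC0 : 0 ≤ C * t ^ (-k) := by
      have h0 : 0 ≤ C := le_trans (by simp only [Φ]; have : (0:ℝ) < (Complex.I).im := by simp
                                      positivity) (hall' Complex.I (by simp))
      positivity
    have key := coeff_bound h.cx (r := Real.exp (-2 * Real.pi * t)) (C := Real.sqrt (C * t ^ (-k)))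
      (Real.exp_pos _) (by rw [Real.exp_lt_one_iff]; nlinarith [Real.pi_pos]) (fun z hz => ?_) n
    · calc _ ≤ Real.sqrt (C * t ^ (-k)) ^ 2 := by gcongr
        _ = _ := Real.sq_sqrt hC0
    · have hz0 : z ≠ 0 := by rintro rfl; simp at hz; exact absurd hz.symm (Real.exp_pos _).ne'
      have hz1 : ‖z‖ < 1 := by rw [hz, Real.exp_lt_one_iff]; nlinarith [Real.pi_pos]
      obtain ⟨τ, hτ, rfl⟩ := exists_qq hz0 hz1
      rw [norm_qq] at hz
      have ht' : τ.im = t := by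
        have := Real.exp_injective hz
        have hp := Real.pi_pos
        apply mul_left_cancel₀ (show (-2 * Real.pi) ≠ 0 by linarith) this
      apply Real.le_sqrt_of_sq_le
      have h2 := hall' τ hτ
      simp only [Φ] at h2
      rw [ht'] at h2
      have h3 : (0:ℝ) ≤ (2:ℝ) ^ (-k) * (‖ev y (qq τ)‖ ^ 2 * t ^ k) := by positivity
      have h4 : ‖ev x (qq τ)‖ ^ 2 * t ^ k ≤ C := by linarith
      have h5 : 0 < t ^ k := zpow_pos ht _
      rw [zpow_neg, ← div_eq_mul_inv, le_div_iff₀ h5]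
      exact h4
  have hlim1 : Filter.Tendsto (fun t : ℝ => (‖coeff n x‖ * Real.exp (-2 * Real.pi * t) ^ n) ^ 2)
      (nhdsWithin 0 (Set.Ioi 0)) (nhds ((‖coeff n x‖ * Real.exp (-2 * Real.pi * 0) ^ n) ^ 2)) := by
    apply Filter.Tendsto.mono_left _ nhdsWithin_le_nhds
    apply Continuous.tendsto (f := fun t : ℝ => (‖coeff n x‖ * Real.exp (-2 * Real.pi * t) ^ n) ^ 2)
    fun_prop
  obtain ⟨m, hm⟩ : ∃ m : ℕ, -k = m := ⟨(-k).toNat, by omega⟩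
  have hlim2 : Filter.Tendsto (fun t : ℝ => C * t ^ (-k))
      (nhdsWithin 0 (Set.Ioi 0)) (nhds (C * 0 ^ m)) := by
    apply Filter.Tendsto.mono_left _ nhdsWithin_le_nhds
    rw [hm]
    simp only [zpow_natCast]
    apply Continuous.tendsto (f := fun t : ℝ => C * t ^ m)
    fun_prop
  have := le_of_tendsto_of_tendsto hlim1 hlim2 (by
    filter_upwards [self_mem_nhdsWithin] with t ht using hb t ht)
  have hm0 : m ≠ 0 := by omega
  simp [hm0] at this
  have h0 : ‖coeff n x‖ ^ 2 = 0 := le_antisymm (by simpa using this) (by positivity)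
  simpa using h0

end

section
open PowerSeries

def Du : PowerSeries ℤ := J 2 ^ 16 * Ji 1 ^ 8
def Dui : PowerSeries ℤ := Ji 2 ^ 16 * J 1 ^ 8
def Dgi : PowerSeries ℤ := Ji 1 ^ 16 * J 2 ^ 8
lemma Df_eq : Df = X * Du := rfl
lemma J1i : J 1 * Ji 1 = 1 := J_mul_Ji 1 one_ne_zero
lemma J2i : J 2 * Ji 2 = 1 := J_mul_Ji 2 two_ne_zero
lemma Du_mul : Du * Dui = 1 := by
  calc Du * Dui = (J 2 * Ji 2) ^ 16 * (J 1 * Ji 1) ^ 8 := by rw [Du, Dui]; ring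
    _ = 1 := by rw [J1i, J2i]; simp
lemma Dg_mul : Dg * Dgi = 1 := by
  calc Dg * Dgi = (J 2 * Ji 2) ^ 8 * (J 1 * Ji 1) ^ 16 := by rw [Dg, Dgi]; ring
    _ = 1 := by rw [J1i, J2i]; simp
lemma conv_Dui : Conv (cc Dui) := by
  simp only [Dui, map_mul, map_pow]
  exact (((conv_Ji 2 two_ne_zero).pow _).mul ((conv_J 1 one_ne_zero).pow _))
lemma conv_Dgi : Conv (cc Dgi) := by
  simp only [Dgi, map_mul, map_pow]
  exact (((conv_Ji 1 one_ne_zero).pow _).mul ((conv_J 2 two_ne_zero).pow _))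

lemma Conv.of_mul_X_pow {x : PowerSeries ℂ} (n : ℕ) (h : Conv (X ^ n * x)) : Conv x := by
  induction n with
  | zero => simpa using h
  | succ n ih => exact ih (Conv.of_mul_X (by rw [← mul_assoc, ← pow_succ']; exact h))

lemma ev_Df_ne {τ : ℂ} (h : 0 < τ.im) : ev (cc Df) (qq τ) ≠ 0 := by
  rw [ev_Df (qq_lt h)]
  exact mul_ne_zero (qq_ne _) (div_ne_zero (pow_ne_zero _ (ev_J_ne 2 two_ne_zero (qq_lt h)))
    (pow_ne_zero _ (ev_J_ne 1 one_ne_zero (qq_lt h))))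
lemma ev_Dg_ne {τ : ℂ} (h : 0 < τ.im) : ev (cc Dg) (qq τ) ≠ 0 := by
  rw [ev_Dg (qq_lt h)]
  exact (div_ne_zero (pow_ne_zero _ (ev_J_ne 1 one_ne_zero (qq_lt h)))
    (pow_ne_zero _ (ev_J_ne 2 two_ne_zero (qq_lt h))))

lemma MF.cancel {k l : ℤ} {u v x y : PowerSeries ℂ} (h : MF k u v) (hu : ∀ τ : ℂ, 0 < τ.im → ev u (qq τ) ≠ 0)
    (cx : Conv x) (cy : Conv y) (h2 : MF (k + l) (u * x) (v * y)) : MF l x y := by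
  refine ⟨cx, cy, fun τ hτ => ?_⟩
  have a := h2.tr τ hτ
  have b := h.tr τ hτ
  have n := hu _ (WW_im_pos hτ)
  rw [ev_mul h.cx cx (qq_lt (WW_im_pos hτ)), ev_mul h.cy cy (qq_lt hτ), zpow_add₀ (im_ne hτ)] at a
  apply mul_left_cancel₀ n
  rw [a, b]; ring

lemma MF.div {k : ℤ} (a b : ℕ) {x y : PowerSeries ℂ} (cx : Conv x)
    (h : MF k (cc Df ^ a * cc Dg ^ b * x) (X ^ b * y)) : ∃ y', MF (k - 4 * a - 4 * b) x y' := by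
  have cy : Conv y := Conv.of_mul_X_pow b h.cy
  have m := (mod_Df.pow a).mul (mod_Dg.pow b)
  refine ⟨((16:ℂ)^a * (1/256)^b) • (y * cc Dgi ^ a * cc Dui ^ b), ?_⟩
  refine MF.cancel m ?_ cx (((cy.mul (conv_Dgi.pow _)).mul (conv_Dui.pow _)).smul _) ?_
  · intro τ hτ
    rw [ev_mul (conv_Df.pow _) (conv_Dg.pow _) (qq_lt hτ), ev_pow conv_Df _ (qq_lt hτ), ev_pow conv_Dg _ (qq_lt hτ)]
    exact mul_ne_zero (pow_ne_zero _ (ev_Df_ne hτ)) (pow_ne_zero _ (ev_Dg_ne hτ))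
  · convert h using 1
    · ring
    · have h1 : cc Dg * cc Dgi = 1 := by rw [← map_mul, Dg_mul, map_one]
      have h2 : cc Df * cc Dui = X := by rw [← map_mul, Df_eq, mul_assoc, Du_mul, mul_one, cc_X]
      have : ((16:ℂ)^a * (1/256)^b) * ((1/16)^a * 256^b) = 1 := by
        rw [mul_mul_mul_comm, ← mul_pow, ← mul_pow]; norm_num
      rw [smul_pow, smul_pow, smul_mul_smul_comm, smul_mul_smul_comm, mul_comm ((1/16:ℂ)^a * _), this, one_smul]
      calc _ = (cc Df * cc Dui) ^ b * ((cc Dg * cc Dgi) ^ a * y) := by ring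
        _ = _ := by rw [h1, h2]; simp

def MM (m : ℕ) : Submodule ℤ (PowerSeries ℤ) :=
  Submodule.span ℤ {x | ∃ a b : ℕ, a + 2 * b = m ∧ x = Ef ^ a * Df ^ b}

lemma mem_MM {a b m : ℕ} (h : a + 2 * b = m) : Ef ^ a * Df ^ b ∈ MM m :=
  Submodule.subset_span ⟨a, b, h, rfl⟩

lemma MM_mul {m m' : ℕ} {x y : PowerSeries ℤ} (hx : x ∈ MM m) (hy : y ∈ MM m') : x * y ∈ MM (m + m') := by
  induction hx using Submodule.span_induction with
  | mem x h =>
    obtain ⟨a, b, hab, rfl⟩ := h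
    induction hy using Submodule.span_induction with
    | mem y h =>
      obtain ⟨a', b', hab', rfl⟩ := h
      rw [show Ef ^ a * Df ^ b * (Ef ^ a' * Df ^ b') = Ef ^ (a + a') * Df ^ (b + b') by ring]
      exact mem_MM (by omega)
    | zero => simp
    | add y z _ _ hy hz => rw [mul_add]; exact add_mem hy hz
    | smul c y _ hy => rw [mul_smul_comm]; exact Submodule.smul_mem _ _ hy
  | zero => simp
  | add y z _ _ hy hz => rw [add_mul]; exact add_mem hy hz
  | smul c y _ hy => rw [smul_mul_assoc]; exact Submodule.smul_mem _ _ hy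

lemma one_MM : (1 : PowerSeries ℤ) ∈ MM 0 := by simpa using mem_MM (a := 0) (b := 0) rfl
lemma MM_pow {m : ℕ} {x : PowerSeries ℤ} (hx : x ∈ MM m) (n : ℕ) : x ^ n ∈ MM (n * m) := by
  induction n with
  | zero => simpa using one_MM
  | succ n ih => rw [pow_succ, add_mul, one_mul]; exact MM_mul ih hx

lemma cc_zsmul (c : ℤ) (x : PowerSeries ℤ) : cc (c • x) = (c : ℂ) • cc x := by
  ext n; rw [coeff_cc, coeff_smul, map_zsmul, coeff_cc]; simp

lemma mod_basis (a b : ℕ) : ∃ y, MF (2 * ((a + 2 * b : ℕ) : ℤ)) (cc (Ef ^ a * Df ^ b)) y := by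
  have := (mod_Ef.pow a).mul (mod_Df.pow b)
  refine ⟨((-2:ℂ) • cc Ef) ^ a * ((1/16:ℂ) • cc Dg) ^ b, ?_⟩
  · rw [map_mul, map_pow, map_pow, show (2 * ((a + 2 * b : ℕ) : ℤ)) = a * 2 + b * 4 by push_cast; ring]
    exact this

lemma MM_mod {m : ℕ} {x : PowerSeries ℤ} (hx : x ∈ MM m) : ∃ y, MF (2 * (m : ℤ)) (cc x) y := by
  induction hx using Submodule.span_induction with
  | mem x h => obtain ⟨a, b, rfl, rfl⟩ := h; exact mod_basis a b
  | zero => exact ⟨0, by simpa using MF.zero _⟩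
  | add y z _ _ hy hz =>
    obtain ⟨y', hy⟩ := hy
    obtain ⟨z', hz⟩ := hz
    exact ⟨y' + z', by rw [map_add]; exact hy.add hz⟩
  | smul c y _ hy =>
    obtain ⟨y', hy⟩ := hy
    exact ⟨(c:ℂ) • y', by rw [cc_zsmul]; exact hy.smul _⟩

lemma coeff0_Ef : coeff 0 Ef = 1 := by simp [Ef]

theorem structure_thm (m : ℕ) : ∀ (x : PowerSeries ℤ) (y : PowerSeries ℂ), MF (2 * (m : ℤ)) (cc x) y → x ∈ MM m := by
  induction m using Nat.strong_induction_on with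
  | _ m ih =>
    intro x y h
    have hE : Ef ^ m ∈ MM m := by simpa using mem_MM (a := m) (b := 0) (by omega)
    obtain ⟨yE, hyE⟩ := MM_mod hE
    set w := x - (coeff 0 x) • Ef ^ m with hw
    have hwm : MF (2 * (m:ℤ)) (cc w) (y - ((coeff 0 x : ℤ) : ℂ) • yE) := by
      rw [hw, map_sub, cc_zsmul]; exact h.sub (hyE.smul _)
    have hX : X ∣ w := by
      rw [X_dvd_iff, hw, map_sub]
      have h1 : constantCoeff Ef = 1 := by rw [← coeff_zero_eq_constantCoeff_apply]; exact coeff0_Ef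
      rw [zsmul_eq_mul, map_mul, map_pow, h1]
      simp
    obtain ⟨w', hw'⟩ := hX
    have hD : w = Df * (w' * Dui) := by
      rw [hw', Df_eq]
      calc X * w' = X * w' * (Du * Dui) := by rw [Du_mul, mul_one]
        _ = _ := by ring
    have cw : Conv (cc (w' * Dui)) := by
      rw [map_mul]
      refine Conv.mul (Conv.of_mul_X ?_) conv_Dui
      have := hwm.cx
      rwa [hw', map_mul, cc_X] at this
    obtain ⟨y', hy'⟩ := MF.div (k := 2 * (m:ℤ)) 1 0 (x := cc (w' * Dui)) (y := y - ((coeff 0 x : ℤ) : ℂ) • yE) cw (by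
      have := hwm
      rw [hD, map_mul] at this
      simpa using this)
    have hxw : x = (coeff 0 x) • Ef ^ m + w := by rw [hw]; ring
    rw [hxw]
    refine add_mem (Submodule.smul_mem _ _ hE) ?_
    by_cases h2 : m < 2
    · have h0 := MF.neg_weight (by push_cast; omega) hy'
      have : w' * Dui = 0 := cc_inj (by rw [h0, map_zero])
      rw [hD, this, mul_zero]; exact zero_mem _
    · have := ih (m - 2) (by omega) (w' * Dui) y' (by
        convert hy' using 1
        push_cast; omega)
      rw [hD]
      have h3 : Df ∈ MM 2 := by simpa using mem_MM (a := 0) (b := 1) (by omega)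
      have h4 := MM_mul h3 this
      rwa [show 2 + (m-2) = m by omega] at h4
end

section
open PowerSeries

def Us {R : Type*} [CommRing R] (s : ℕ) : PowerSeries R →+ PowerSeries R where
  toFun x := mk fun n => coeff (7 * n + s) x
  map_zero' := by ext; simp
  map_add' x y := by ext; simp

lemma coeff_Us {R : Type*} [CommRing R] (s n : ℕ) (x : PowerSeries R) : coeff n (Us s x) = coeff (7 * n + s) x := by
  simp [Us]

lemma conv_U {x : PowerSeries ℂ} (hx : Conv x) : Conv (Us 0 x) := by
  intro z hz
  obtain ⟨w, rfl⟩ := IsAlgClosed.exists_pow_nat_eq z (n := 7) (by norm_num)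
  have hw : ‖w‖ < 1 := by
    rw [norm_pow] at hz
    exact (pow_lt_one_iff_of_nonneg (norm_nonneg _) (by norm_num)).1 hz
  have := (hx w hw).comp_injective (i := fun n : ℕ => 7 * n) (fun a b h => by simpa using h)
  refine this.congr fun n => ?_
  rw [coeff_Us, ← pow_mul]; rfl

lemma geom7 (n : ℕ) : ∑ j ∈ Finset.range 7, (qq (1/7)) ^ (j * n) = if 7 ∣ n then 7 else 0 := by
  have hp : IsPrimitiveRoot (qq (1/7)) 7 := by
    have := Complex.isPrimitiveRoot_exp 7 (by norm_num)
    have e : qq (1/7) = Complex.exp (2 * Real.pi * Complex.I / (7:ℕ)) := by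
      rw [qq]; congr 1; push_cast; ring
    rwa [e]
  simp_rw [mul_comm _ n, pow_mul]
  split_ifs with h
  · rw [(hp.pow_eq_one_iff_dvd n).2 h]; simp
  · have h1 : qq (1/7) ^ n ≠ 1 := fun h' => h ((hp.pow_eq_one_iff_dvd n).1 h')
    have h2 := mul_neg_geom_sum (qq (1/7) ^ n) 7
    rw [← pow_mul, mul_comm n, pow_mul, hp.pow_eq_one] at h2
    simp only [one_pow, sub_self, mul_eq_zero] at h2
    rcases h2 with h2 | h2
    · exact absurd (sub_eq_zero.1 h2).symm h1
    · exact h2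

lemma im7 {τ : ℂ} (hτ : 0 < τ.im) (j : ℤ) : 0 < ((τ + j)/7).im := by
  have : ((τ + j)/7).im = τ.im / 7 := by
    have := Complex.div_natCast_im (τ + j) 7
    push_cast at this
    rw [this]; simp
  rw [this]; positivity

lemma ev_U {x : PowerSeries ℂ} (hx : Conv x) {τ : ℂ} (hτ : 0 < τ.im) :
    ∑ j ∈ Finset.range 7, ev x (qq ((τ + ((j:ℤ):ℂ))/7)) = 7 * ev (Us 0 x) (qq τ) := by
  have h1 : HasSum (fun n => ∑ j ∈ Finset.range 7, coeff n x * qq ((τ + ((j:ℤ):ℂ))/7) ^ n)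
      (∑ j ∈ Finset.range 7, ev x (qq ((τ + ((j:ℤ):ℂ))/7))) :=
    hasSum_sum fun j _ => hx.hasSum (qq_lt (im7 hτ j))
  have h2 : HasSum (fun n => 7 * (coeff n (Us 0 x) * qq τ ^ n)) (7 * ev (Us 0 x) (qq τ)) :=
    ((conv_U hx).hasSum (qq_lt hτ)).mul_left 7
  have e : ∀ n, ∑ j ∈ Finset.range 7, coeff n x * qq ((τ + ((j:ℤ):ℂ))/7) ^ n =
      coeff n x * qq (τ/7) ^ n * if 7 ∣ n then 7 else 0 := by
    intro n
    rw [← geom7, Finset.mul_sum]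
    refine Finset.sum_congr rfl fun j _ => ?_
    have : qq ((τ + ((j:ℤ):ℂ))/7) = qq (τ/7) * qq (1/7) ^ j := by
      rw [← qq_nat_mul, qq, qq, qq, ← Complex.exp_add]; congr 1; push_cast; ring
    rw [this, mul_pow, ← pow_mul]; ring
  simp_rw [e] at h1
  have inj : Function.Injective (fun n : ℕ => 7 * n) := fun a b h => by simpa using h
  rw [← inj.hasSum_iff] at h1
  · refine h1.unique ?_
    rw [show (fun n => 7 * (coeff n (Us 0 x) * qq τ ^ n)) =
      ((fun n => coeff n x * qq (τ/7) ^ n * if 7 ∣ n then 7 else 0) ∘ fun n : ℕ => 7 * n) from ?_] at h2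
    · exact h2
    funext n
    have h7 : qq τ = qq (τ/7) ^ 7 := by rw [← qq_nat_mul]; congr 1; push_cast; ring
    simp only [Function.comp, dvd_mul_right, if_true, coeff_Us, add_zero]
    rw [h7, ← pow_mul]; ring
  · intro n hn
    rw [if_neg, mul_zero]
    rintro ⟨m, rfl⟩
    exact hn ⟨m, rfl⟩

lemma MF.par {m : ℤ} {x y : PowerSeries ℂ} (h : MF (2 * m) x y) (n : ℤ) {σ : ℂ} (hσ : 0 < σ.im)
    (hp : 0 < (σ / (1 - 2 * n * σ)).im) (h0 : 1 - 2 * n * σ ≠ 0) :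
    ev y (qq (σ / (1 - 2 * n * σ))) = (1 - 2 * n * σ) ^ (2 * m) * ev y (qq σ) := by
  have a := h.tr _ hp
  have b := h.tr _ hσ
  have c : WW (σ / (1 - 2 * n * σ)) = WW σ + n := by
    have := im_ne hσ
    rw [WW, WW]; field_simp; ring
  rw [c, qq_add_int, b, div_zpow] at a
  have := zpow_ne_zero (2 * m) (im_ne hσ)
  have := zpow_ne_zero (2 * m) h0
  field_simp at a
  linear_combination -a

lemma MF.hk {m : ℤ} {x y : PowerSeries ℂ} (h : MF (2 * m) x y) (j j' s : ℤ) (hs : s ^ 2 = 1) (hj : 7 * s - 2 * j * j' = 1)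
    {τ : ℂ} (hτ : 0 < τ.im) :
    ev x (qq ((WW τ + j) / 7)) = τ ^ (2 * m) * ev y (qq ((τ + j') / 7)) := by
  set σ := (τ + j')/7 with hσd
  have hσ : 0 < σ.im := im7 hτ j'
  have hWj : 0 < ((WW τ + j) / 7).im := im7 (WW_im_pos hτ) j
  set ρ := WW ((WW τ + j) / 7) with hρd
  have hρ : 0 < ρ.im := WW_im_pos hWj
  have hτσ : τ = 7 * σ - j' := by rw [hσd]; ring
  have hsC : (s:ℂ) ^ 2 = 1 := by exact_mod_cast hs
  have hjC : 7 * (s:ℂ) - 2 * j * j' = 1 := by exact_mod_cast hj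
  have t0 := im_ne hτ
  have n0 : (1 - 2 * ((s * j : ℤ) : ℂ) * σ) ≠ 0 := by
    intro hh
    have h1 : (WW τ + j) = 0 := by
      rw [WW]
      have : (-1 + 2 * j * τ) = 0 := by
        rw [hτσ]; push_cast at hh
        linear_combination (-7 * s) * hh + hjC - 14 * j * σ * hsC
      field_simp; linear_combination this
    have := im_ne hWj
    rw [h1] at this; simp at this
  have hρe : ρ = σ / (1 - 2 * ((s * j : ℤ) : ℂ) * σ) + ((-(s * j') : ℤ) : ℂ) := by
    have h3 : -1 + 2 * j * τ = (-7 * s) * (1 - 2 * ((s * j : ℤ) : ℂ) * σ) := by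
      rw [hτσ]; push_cast
      linear_combination hjC - 14 * j * σ * hsC
    have h4 : (WW τ + j) / 7 = (-7 * s) * (1 - 2 * ((s * j : ℤ) : ℂ) * σ) / (14 * τ) := by
      rw [← h3, WW]; field_simp; ring
    have s0 : (s:ℂ) ≠ 0 := by rintro h; rw [h] at hsC; simp at hsC
    have h5 : WW ((WW τ + j) / 7) = s * τ / (1 - 2 * ((s * j : ℤ) : ℂ) * σ) := by
      rw [h4, WW, div_eq_div_iff (by rw [← h4]; exact mul_ne_zero two_ne_zero (im_ne hWj)) n0]
      · field_simp
        linear_combination 14 * hsC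
    rw [hρd, h5, div_add' _ _ _ n0]
    congr 1
    rw [hτσ]; push_cast
    linear_combination σ * hjC + 2 * σ * j * j' * (1 - hsC)
  have hp : 0 < (σ / (1 - 2 * ((s * j : ℤ) : ℂ) * σ)).im := by
    have := congrArg Complex.im hρe
    rw [Complex.add_im, Complex.intCast_im, add_zero] at this
    rw [← this]; exact hρ
  have a := h.tr _ hρ
  rw [hρd, WW_WW hWj, ← hρd] at a
  rw [a]
  have hq : qq ρ = qq (σ / (1 - 2 * ((s * j : ℤ) : ℂ) * σ)) := by rw [hρe, qq_add_int]
  rw [hq, h.par (s * j) hσ hp n0, ← mul_assoc, ← mul_zpow]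
  congr 1
  have : (ρ * (1 - 2 * ((s * j : ℤ) : ℂ) * σ)) ^ 2 = τ ^ 2 := by
    rw [hρe, add_mul, div_mul_cancel₀ _ n0]
    have h7 : σ + ((-(s * j') : ℤ) : ℂ) * (1 - 2 * ((s * j : ℤ) : ℂ) * σ) = s * τ := by
      rw [hτσ]; push_cast
      linear_combination (-σ) * hjC + 2 * σ * j * j' * hsC
    rw [h7, mul_pow, hsC, one_mul]
  rw [zpow_mul, zpow_mul]
  congr 1
  

lemma MF.hecke {m : ℕ} (hm : 1 ≤ m) {x y : PowerSeries ℂ} (h : MF (2 * (m:ℤ)) x y) :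
    MF (2 * (m : ℤ)) (Us 0 x + (7:ℂ) ^ (2 * m - 1) • expand 7 (by norm_num) x)
      (Us 0 y + (7:ℂ) ^ (2 * m - 1) • expand 7 (by norm_num) y) := by
  refine ⟨(conv_U h.cx).add ((h.cx.expand _ _).smul _), (conv_U h.cy).add ((h.cy.expand _ _).smul _), fun τ hτ => ?_⟩
  have hW := WW_im_pos hτ
  rw [ev_add (conv_U h.cx) ((h.cx.expand _ _).smul _) (qq_lt hW), ev_add (conv_U h.cy) ((h.cy.expand _ _).smul _) (qq_lt hτ),
   ev_smul, ev_smul, ev_expand h.cx _ _ (qq_lt hW), ev_expand h.cy _ _ (qq_lt hτ)]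
  have ux := ev_U h.cx hW
  have uy := ev_U h.cy hτ
  have sh : ∀ (z : PowerSeries ℂ) (τ : ℂ) (a b : ℤ), a = b + 7 → ev z (qq ((τ + a)/7)) = ev z (qq ((τ + b)/7)) := by
    intro z τ a b hab
    rw [hab, ← qq_add_int ((τ + b)/7) 1]; congr 2; push_cast; ring
  simp only [Finset.sum_range_succ, Finset.sum_range_zero, zero_add] at ux uy
  have e1 := h.hk 1 3 1 (by norm_num) (by norm_num) hτ
  have e3 := h.hk 3 1 1 (by norm_num) (by norm_num) hτ
  have e6 := h.hk (-1) (-3) 1 (by norm_num) (by norm_num) hτ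
  have e4 := h.hk (-3) (-1) 1 (by norm_num) (by norm_num) hτ
  have e2 := h.hk 2 (-2) (-1) (by norm_num) (by norm_num) hτ
  have e5 := h.hk (-2) 2 (-1) (by norm_num) (by norm_num) hτ
  rw [← sh _ _ 6 (-1) (by norm_num), ← sh _ _ 4 (-3) (by norm_num)] at e6
  rw [← sh _ _ 6 (-1) (by norm_num), ← sh _ _ 4 (-3) (by norm_num)] at e4
  rw [← sh _ _ 5 (-2) (by norm_num)] at e2 e5
  have i7 : 0 < (7 * τ).im := by simpa using hτ
  have i7' : 0 < (τ / 7).im := by simpa using im7 hτ 0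
  have e0 := h.tr _ i7
  have e0' := h.tr _ i7'
  have w1 : WW (7 * τ) = (WW τ + ((0:ℕ):ℤ)) / 7 := by rw [WW, WW]; push_cast; field_simp; simp
  have w2 : WW (τ / 7) = (7:ℕ) * WW τ := by rw [WW, WW]; push_cast; field_simp
  have w3 : qq (7 * τ) = qq τ ^ 7 := by have := qq_nat_mul τ 7; exact_mod_cast this
  rw [w1, w3, mul_zpow] at e0
  rw [w2, qq_nat_mul, div_zpow] at e0'
  have w4 : τ / 7 = (τ + ((0:ℕ):ℤ)) / 7 := by simp
  rw [w4] at e0'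
  have p7 : (7:ℂ) ^ (2 * (m:ℤ)) = 7 * 7 ^ (2 * m - 1) := by
    rw [← pow_succ', Nat.sub_add_cancel (by omega)]; norm_cast
  rw [p7] at e0 e0'
  have n7 : (7:ℂ) ^ (2 * m - 1) ≠ 0 := pow_ne_zero _ (by norm_num)
  rw [e0']
  push_cast at *
  rw [e0, e1, e2, e3, e4, e5, e6] at ux
  field_simp
  linear_combination (-1) * ux + τ ^ (2 * (m:ℤ)) * uy
end

section
open PowerSeries

abbrev ex7 {R : Type*} [CommRing R] (x : PowerSeries R) : PowerSeries R := expand 7 (by norm_num) x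

lemma cc_U (s : ℕ) (x : PowerSeries ℤ) : cc (Us s x) = Us s (cc x) := by
  ext n; simp [coeff_cc, coeff_Us]
lemma cc_expand (p : ℕ) (hp : p ≠ 0) (x : PowerSeries ℤ) : cc (expand p hp x) = expand p hp (cc x) := map_expand _ _ _ _

lemma X_dvd_U {R : Type*} [CommRing R] {x : PowerSeries R} {a a' : ℕ} (h : X ^ a ∣ x) (ha : 7 * a' ≤ a + 6) : X ^ a' ∣ Us 0 x := by
  rw [X_pow_dvd_iff] at *
  intro m hm
  rw [coeff_Us]; exact h _ (by omega)
lemma X_dvd_ex {R : Type*} [CommRing R] {x : PowerSeries R} {a a' : ℕ} (h : X ^ a ∣ x) (ha : 7 * a' ≤ a + 6) : X ^ a' ∣ ex7 x := by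
  obtain ⟨y, rfl⟩ := h
  rw [ex7, map_mul, map_pow, expand_X, ← pow_mul]
  exact Dvd.dvd.mul_right (pow_dvd_pow _ (by omega)) _

lemma HECKE {m a b a' b' m' : ℕ} {G : PowerSeries ℤ} (hG : G ∈ MM m) (h1 : 1 ≤ m + 2 * a + 2 * b)
    (ha : 7 * a' ≤ a + 6) (hb : 7 * b' ≤ b + 6)
    (hm : m + 2 * a + 2 * b = m' + 2 * a' + 2 * b') :
    ∃ G' ∈ MM m', ∃ r, Us 0 (Df ^ a * Dg ^ b * G) = Df ^ a' * Dg ^ b' * G' + 7 ^ (2 * (m + 2 * a + 2 * b) - 1) * r := by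
  set k := m + 2 * a + 2 * b with hk
  obtain ⟨y0, hy0⟩ := MM_mod hG
  obtain ⟨F, hF⟩ : ∃ F, F = Df ^ a * Dg ^ b * G := ⟨_, rfl⟩
  rw [← hF]
  have hMF := ((mod_Df.pow a).mul (mod_Dg.pow b)).mul hy0
  rw [← map_pow, ← map_pow, ← map_mul, ← map_mul, ← hF,
    show ((a:ℤ) * 4 + b * 4 + 2 * m) = 2 * (k:ℤ) by rw [hk]; push_cast; ring] at hMF
  set Y := ((1/16:ℂ) • cc Dg) ^ a * ((256:ℂ) • cc Df) ^ b * y0 with hY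
  have hH := hMF.hecke h1
  have dF : X ^ a ∣ F := by
    rw [hF, Df_eq, mul_pow, mul_assoc, mul_assoc]; exact Dvd.intro _ rfl
  have dY : X ^ b ∣ Y := by
    rw [hY, Df_eq, map_mul, cc_X, ← mul_smul_comm, mul_pow]
    exact Dvd.dvd.mul_right (Dvd.dvd.mul_left (Dvd.intro _ rfl) _) _
  obtain ⟨w, hw⟩ : X ^ a' ∣ Us 0 F + 7 ^ (2 * k - 1) * ex7 F :=
    dvd_add (X_dvd_U dF ha) (Dvd.dvd.mul_left (X_dvd_ex dF ha) _)
  obtain ⟨v, hv⟩ : X ^ b' ∣ Us 0 Y + (7:ℂ) ^ (2 * k - 1) • ex7 Y := by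
    refine dvd_add (X_dvd_U dY hb) ?_
    rw [smul_eq_C_mul]
    exact (Dvd.dvd.mul_left (X_dvd_ex dY hb) _)
  have hT : cc (Us 0 F + 7 ^ (2 * k - 1) * ex7 F) = Us 0 (cc F) + (7:ℂ) ^ (2 * k - 1) • ex7 (cc F) := by
    rw [map_add, cc_U, map_mul cc (7 ^ _), ex7, cc_expand, smul_eq_C_mul, map_pow, map_pow, map_ofNat, map_ofNat]
  have hE : Us 0 F + 7 ^ (2 * k - 1) * ex7 F = Df ^ a' * Dg ^ b' * (w * Dui ^ a' * Dgi ^ b') := by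
    rw [hw, Df_eq]
    calc X ^ a' * w = X ^ a' * w * ((Du * Dui) ^ a' * (Dg * Dgi) ^ b') := by rw [Du_mul, Dg_mul]; simp
      _ = _ := by ring
  have cw : Conv (cc (w * Dui ^ a' * Dgi ^ b')) := by
    rw [map_mul, map_mul, map_pow, map_pow]
    refine (Conv.mul (Conv.of_mul_X_pow a' ?_) (conv_Dui.pow _)).mul (conv_Dgi.pow _)
    have := hH.cx
    rwa [← hT, hw, map_mul, map_pow, cc_X] at this
  rw [← hT, hE, hv, map_mul, map_mul, map_pow, map_pow] at hH
  obtain ⟨y', hy'⟩ := MF.div a' b' cw hH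
  refine ⟨w * Dui ^ a' * Dgi ^ b', structure_thm m' _ y' ?_, - ex7 F, ?_⟩
  · rwa [show 2 * (k:ℤ) - 4 * a' - 4 * b' = 2 * (m':ℤ) by push_cast [hm]; ring] at hy'
  · rw [← hE]; ring
end

section
open PowerSeries

def e6 : PowerSeries ℤ := mk fun n => if n = 0 then 1 else -504 * (ArithmeticFunction.sigma 5 n : ℤ)

lemma cc_e6 : cc e6 = UpperHalfPlane.qExpansion 1 ModularForm.E₆ := by
  ext n
  rw [coeff_cc, e6, coeff_mk, EisensteinSeries.E_qExpansion_coeff _ ⟨3, rfl⟩]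
  split_ifs with h
  · simp
  · rw [show bernoulli 6 = 1 / 42 by decide +kernel]; push_cast; norm_num

lemma e6_sum (τ : UpperHalfPlane) : HasSum (fun n => coeff n (cc e6) * qq τ ^ n) (ModularForm.E₆ τ) := by
  have := ModularForm.hasSum_qExpansion ModularForm.E₆ one_pos (by simp) τ
  rw [← cc_e6] at this
  have e : Function.Periodic.qParam 1 (τ:ℂ) = qq τ := by
    rw [Function.Periodic.qParam, qq]; simp
  rwa [e] at this

lemma conv_e6 : Conv (cc e6) := by
  intro z hz
  by_cases h0 : z = 0
  · subst h0
    refine summable_of_ne_finset_zero (s := {0}) ?_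
    intro b hb
    simp at hb
    simp [hb]
  · obtain ⟨τ, hτ, rfl⟩ := exists_qq h0 hz
    exact (e6_sum ⟨τ, hτ⟩).summable

lemma ev_e6 (τ : UpperHalfPlane) : ev (cc e6) (qq τ) = ModularForm.E₆ τ := (e6_sum τ).tsum_eq

lemma mod_e6 : MF 6 (cc e6) ((64:ℂ) • expand 2 two_ne_zero (cc e6)) := by
  refine ⟨conv_e6, (conv_e6.expand _ _).smul _, fun τ hτ => ?_⟩
  have h2 : 0 < (2 * τ).im := by simpa using hτ
  rw [ev_smul, ev_expand conv_e6 _ _ (qq_lt hτ), ← qq_nat_mul]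
  have a := ev_e6 ⟨2 * τ, h2⟩
  have b := ev_e6 ⟨WW τ, WW_im_pos hτ⟩
  simp only [UpperHalfPlane.coe_mk] at a b
  push_cast
  rw [a, b]
  have inv : SlashAction.map (6:ℤ) ModularGroup.S (ModularForm.E₆ : UpperHalfPlane → ℂ) = (ModularForm.E₆ : UpperHalfPlane → ℂ) :=
    SlashInvariantFormClass.slash_action_eq ModularForm.E₆ (Matrix.SpecialLinearGroup.mapGL ℝ ModularGroup.S) ⟨_, rfl⟩
  have key := (ModularForm.slash_action_eq'_iff 6 ModularForm.E₆ ModularGroup.S ⟨2 * τ, h2⟩).1 (by rw [inv])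
  have e : ModularGroup.S • (⟨2 * τ, h2⟩ : UpperHalfPlane) = ⟨WW τ, WW_im_pos hτ⟩ := by
    rw [UpperHalfPlane.modular_S_smul]
    ext
    simp only [UpperHalfPlane.coe_mk]
    rw [WW, ← one_div, div_neg, neg_div]
  rw [e] at key
  rw [key]
  simp [ModularGroup.S]
  norm_cast
  rw [mul_pow]; push_cast; ring

lemma coeff1_J1 : coeff 1 (J 1) = -1 := by
  rw [J, coeff_mk]
  simp [Finset.prod_range_succ, mul_sub, sub_mul, coeff_X, coeff_X_pow, ← pow_succ, coeff_one]
lemma coeff1_J2 : coeff 1 (J 2) = 0 := by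
  rw [J, coeff_mk]
  simp [Finset.prod_range_succ, mul_sub, sub_mul, coeff_X, coeff_X_pow, ← pow_succ, ← pow_add, coeff_one]
lemma coeff0_Df : coeff 0 Df = 0 := by simp [Df]
lemma constJ (b : ℕ) (hb : b ≠ 0) : constantCoeff (J b) = 1 := by
  rw [← coeff_zero_eq_constantCoeff_apply]; exact coeff_zero_J b hb
lemma constJi (b : ℕ) (hb : b ≠ 0) : constantCoeff (Ji b) = 1 := by
  have := congrArg constantCoeff (J_mul_Ji b hb)
  rwa [map_mul, constJ b hb, one_mul, map_one] at this
lemma coeff1_Df : coeff 1 Df = 1 := by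
  rw [Df_eq, show (1:ℕ) = 0 + 1 from rfl, coeff_succ_X_mul, Du]
  simp [constJ, constJi]
lemma coeff1_Ef : coeff 1 Ef = 24 := by
  have : (24 : PowerSeries ℤ) = C 24 := by simp
  rw [Ef, this, map_add, coeff_C_mul, show (1:ℕ) = 0 + 1 from rfl, coeff_succ_X_mul]
  simp only [map_sub, coeff_zero_eq_constantCoeff, map_mul, constJi _ two_ne_zero, constJi _ one_ne_zero]
  simp only [← coeff_zero_eq_constantCoeff_apply, coeff_derivative, zero_add, coeff1_J1, coeff1_J2, coeff_one]
  have := constJi 1 one_ne_zero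
  rw [← coeff_zero_eq_constantCoeff_apply] at this
  norm_num [this]

lemma MM_explicit {m : ℕ} {x : PowerSeries ℤ} (hx : x ∈ MM m) :
    ∃ c : ℕ → ℤ, x = ∑ b ∈ Finset.range (m / 2 + 1), C (c b) * (Ef ^ (m - 2 * b) * Df ^ b) := by
  induction hx using Submodule.span_induction with
  | mem x h =>
    obtain ⟨a, b, rfl, rfl⟩ := h
    refine ⟨fun i => if i = b then 1 else 0, ?_⟩
    rw [Finset.sum_eq_single b]
    · simp
    · intro i _ hi; simp [hi]
    · intro h; simp at h; omega
  | zero => exact ⟨0, by simp⟩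
  | add y z _ _ hy hz =>
    obtain ⟨c, rfl⟩ := hy
    obtain ⟨d, rfl⟩ := hz
    exact ⟨c + d, by rw [← Finset.sum_add_distrib]; refine Finset.sum_congr rfl fun i _ => ?_; simp [add_mul]⟩
  | smul r y _ hy =>
    obtain ⟨c, rfl⟩ := hy
    refine ⟨fun i => r * c i, ?_⟩
    rw [Finset.smul_sum]; refine Finset.sum_congr rfl fun i _ => ?_
    rw [map_mul, zsmul_eq_mul, mul_assoc]; simp
lemma MM_sum {m : ℕ} (c : ℕ → ℤ) : ∑ b ∈ Finset.range (m / 2 + 1), C (c b) * (Ef ^ (m - 2 * b) * Df ^ b) ∈ MM m := by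
  refine sum_mem fun b hb => ?_
  have : C (c b) * (Ef ^ (m - 2 * b) * Df ^ b) = (c b) • (Ef ^ (m - 2 * b) * Df ^ b) := by
    rw [zsmul_eq_mul]; simp
  rw [this]
  exact Submodule.smul_mem _ _ (mem_MM (by rw [Finset.mem_range] at hb; omega))

lemma constEf : constantCoeff Ef = 1 := by rw [← coeff_zero_eq_constantCoeff_apply]; exact coeff0_Ef
lemma constDf : constantCoeff Df = 0 := by rw [← coeff_zero_eq_constantCoeff_apply]; exact coeff0_Df

lemma c1mul (x y : PowerSeries ℤ) : coeff 1 (x * y) = constantCoeff x * coeff 1 y + coeff 1 x * constantCoeff y := by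
  rw [coeff_mul, Finset.Nat.antidiagonal_succ]; simp
lemma e6_eq : e6 = Ef ^ 3 - 576 * (Ef * Df) := by
  obtain ⟨c, hc⟩ := MM_explicit (structure_thm 3 e6 _ mod_e6)
  simp [Finset.sum_range_succ] at hc
  have h0 := congrArg constantCoeff hc
  have h1 := congrArg (coeff 1) hc
  have a0 : constantCoeff e6 = 1 := by rw [← coeff_zero_eq_constantCoeff_apply]; simp [e6]
  have a1 : coeff 1 e6 = -504 := by simp [e6]
  simp [constEf, constDf, a0] at h0
  rw [a1] at h1
  simp [c1mul, pow_succ, constEf, constDf, coeff1_Ef, coeff1_Df, ← h0] at h1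
  have h3 : c 1 = -576 := by omega
  rw [hc, ← h0, h3]; simp; ring

lemma e6_mem : e6 ∈ MM 3 := structure_thm 3 e6 _ mod_e6

end

section
open PowerSeries

def cg (k : ℕ) (x y : PowerSeries ℤ) : Prop := (7 : PowerSeries ℤ) ^ k ∣ x - y

lemma cg.refl {k : ℕ} (x : PowerSeries ℤ) : cg k x x := by simp [cg]
lemma cg.symm {k : ℕ} {x y : PowerSeries ℤ} (h : cg k x y) : cg k y x := by
  rw [cg, ← neg_sub]; exact (dvd_neg).2 h
lemma cg.trans {k : ℕ} {x y z : PowerSeries ℤ} (h : cg k x y) (h' : cg k y z) : cg k x z := by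
  have := dvd_add h h'; rwa [sub_add_sub_cancel] at this
lemma cg.add {k : ℕ} {x y x' y' : PowerSeries ℤ} (h : cg k x y) (h' : cg k x' y') : cg k (x + x') (y + y') := by
  have := dvd_add h h'; rwa [sub_add_sub_comm] at this
lemma cg.sub {k : ℕ} {x y x' y' : PowerSeries ℤ} (h : cg k x y) (h' : cg k x' y') : cg k (x - x') (y - y') := by
  have := dvd_sub h h'; rwa [sub_sub_sub_comm] at this
lemma cg.mul {k : ℕ} {x y x' y' : PowerSeries ℤ} (h : cg k x y) (h' : cg k x' y') : cg k (x * x') (y * y') := by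
  have : x * x' - y * y' = (x - y) * x' + y * (x' - y') := by ring
  rw [cg, this]; exact dvd_add (Dvd.dvd.mul_right h _) (Dvd.dvd.mul_left h' _)
lemma cg.mulr {k : ℕ} {x y : PowerSeries ℤ} (h : cg k x y) (z) : cg k (x * z) (y * z) := h.mul (cg.refl z)
lemma cg.mull {k : ℕ} {x y : PowerSeries ℤ} (z) (h : cg k x y) : cg k (z * x) (z * y) := (cg.refl z).mul h
lemma cg.pow {k : ℕ} {x y : PowerSeries ℤ} (h : cg k x y) (n : ℕ) : cg k (x ^ n) (y ^ n) := by
  induction n with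
  | zero => simpa using cg.refl _
  | succ n ih => rw [pow_succ, pow_succ]; exact ih.mul h
lemma cg.mono {k k' : ℕ} (hk : k' ≤ k) {x y : PowerSeries ℤ} (h : cg k x y) : cg k' x y := (pow_dvd_pow _ hk).trans h
lemma cg.seven {k i : ℕ} {x y : PowerSeries ℤ} (h : cg k x y) : cg (k + i) (7 ^ i * x) (7 ^ i * y) := by
  rw [cg, ← mul_sub, pow_add, mul_comm]; exact mul_dvd_mul_left _ h
lemma ne7 : (7 : PowerSeries ℤ) ≠ 0 := by
  intro h
  have := congrArg constantCoeff h
  rw [show (7 : PowerSeries ℤ) = C 7 from rfl, constantCoeff_C, map_zero] at this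
  omega
lemma cg.of_seven {k i : ℕ} {x y : PowerSeries ℤ} (h : cg (k + i) (7 ^ i * x) (7 ^ i * y)) : cg k x y := by
  rw [cg, ← mul_sub, pow_add, mul_comm] at h
  exact (mul_dvd_mul_iff_left (pow_ne_zero _ ne7)).1 h
lemma cg_iff {k : ℕ} {x y : PowerSeries ℤ} : cg k x y ↔ ∀ n, (7:ℤ) ^ k ∣ coeff n x - coeff n y := by
  have e : (7 : PowerSeries ℤ) ^ k = C ((7:ℤ) ^ k) := by simp
  rw [cg, e]
  constructor
  · rintro ⟨y, hy⟩ n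
    rw [← map_sub, hy, coeff_C_mul]; exact dvd_mul_right _ _
  · intro h
    choose c hc using h
    refine ⟨PowerSeries.mk c, ?_⟩
    ext n
    rw [map_sub, hc, coeff_C_mul, coeff_mk]
lemma cg.Us {k : ℕ} {x y : PowerSeries ℤ} (h : cg k x y) (s : ℕ) : cg k (Us s x) (Us s y) := by
  rw [cg_iff] at *
  intro n; rw [coeff_Us, coeff_Us]; exact h _
lemma cg.lift {x y : PowerSeries ℤ} (h : cg 1 x y) (l : ℕ) : cg (l + 1) (x ^ 7 ^ l) (y ^ 7 ^ l) := by
  have := dvd_sub_pow_of_dvd_sub (p := 7) (a := x) (b := y) (by simpa [cg] using h) l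
  rw [cg]; push_cast at this; exact this
lemma cg.lift' {x y : PowerSeries ℤ} (h : cg 1 x y) {l e : ℕ} (he : 7 ^ l ∣ e) : cg (l + 1) (x ^ e) (y ^ e) := by
  obtain ⟨t, rfl⟩ := he
  rw [pow_mul, pow_mul]; exact (h.lift l).pow t

lemma Us_mul_ex {R : Type*} [CommRing R] (s : ℕ) (hs : s ≤ 6) (x z : PowerSeries R) : Us s (x * ex7 z) = Us s x * z := by
  ext n
  rw [coeff_Us, coeff_mul, coeff_mul, Finset.Nat.sum_antidiagonal_eq_sum_range_succ_mk, Finset.Nat.sum_antidiagonal_eq_sum_range_succ_mk]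
  simp only
  rw [← Finset.sum_range_reflect, ← Finset.sum_range_reflect (fun k => coeff k (Us s x) * coeff (n - k) z)]
  simp only [Nat.succ_eq_add_one]
  symm
  refine Finset.sum_of_injOn (fun i => 7 * i) (fun a _ b _ h => by simpa using h) ?_ ?_ ?_
  · intro i hi; simp at hi ⊢; omega
  · intro i hi hi'
    rw [Finset.mem_range] at hi
    have : ¬ 7 ∣ (7 * n + s - (7 * n + s + 1 - 1 - i)) := by
      rintro ⟨j, hj⟩
      apply hi'
      refine ⟨j, ?_, ?_⟩
      · simp; omega
      · simp; omega
    rw [coeff_expand_of_not_dvd _ _ _ this, mul_zero]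
  · intro i hi
    rw [Finset.mem_range] at hi
    rw [coeff_Us, show 7 * n + s - (7 * n + s + 1 - 1 - 7 * i) = 7 * i by omega, coeff_expand_mul]
    congr 3 <;> congr 1 <;> omega

def m7 : PowerSeries ℤ →+* PowerSeries (ZMod 7) := PowerSeries.map (Int.castRingHom (ZMod 7))
lemma cg_m7 {x y : PowerSeries ℤ} : cg 1 x y ↔ m7 x = m7 y := by
  rw [cg_iff, PowerSeries.ext_iff]
  refine forall_congr' fun n => ?_
  rw [m7, coeff_map, coeff_map, eq_intCast, eq_intCast, eq_comm, ZMod.intCast_eq_intCast_iff_dvd_sub]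
  simp
lemma frob (x : PowerSeries ℤ) : cg 1 (x ^ 7) (ex7 x) := by
  rw [cg_m7, map_pow, m7, ex7, map_expand]
  have : Fact (Nat.Prime 7) := ⟨by norm_num⟩
  rw [← m7]
  have h := MvPowerSeries.map_frobenius_expand (R := ZMod 7) (σ := Unit) (p := 7) (hp := by norm_num) (f := m7 x)
  rw [← h, ZMod.frobenius_zmod]
  exact (congrFun (congrArg DFunLike.coe (MvPowerSeries.map_id)) _)

lemma e6_cg : cg 1 e6 1 := by
  rw [cg_iff]; intro n
  rw [e6, coeff_mk, coeff_one]
  split_ifs with h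
  · simp
  · rw [sub_zero]; exact ⟨-72 * (ArithmeticFunction.sigma 5 n : ℤ), by ring⟩

lemma const_e6 : constantCoeff e6 = 1 := by
  rw [← coeff_zero_eq_constantCoeff_apply, e6, coeff_mk]; simp

lemma h27 : (2 : ZMod 7) ≠ 0 := by decide
lemma exB : ∃ B : PowerSeries ℤ, B ^ 2 = e6 ∧ cg 1 B 1 := by
  obtain ⟨z, hz⟩ : ∃ z : PowerSeries ℤ, e6 = 1 + 4 * (X * z) := by
    have : (4:PowerSeries ℤ) = C 4 := rfl
    refine ⟨PowerSeries.mk fun n => -126 * (ArithmeticFunction.sigma 5 (n+1) : ℤ), ?_⟩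
    ext n
    rw [this, map_add, coeff_C_mul, e6, coeff_mk, coeff_one]
    rcases n with _ | n
    · simp
    · rw [coeff_succ_X_mul, coeff_mk]; simp; ring
  have : HenselianRing (PowerSeries ℤ) (Ideal.span {X}) := IsAdicComplete.henselianRing _ _
  obtain ⟨w, hw, hw0⟩ := HenselianRing.is_henselian (I := Ideal.span {(X : PowerSeries ℤ)})
    (Polynomial.X ^ 2 + (Polynomial.X + Polynomial.C (-(X * z)))) (by
      apply Polynomial.monic_X_pow_add
      exact lt_of_le_of_lt (Polynomial.degree_X_add_C _).le (by norm_num)) 0 (by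
      simp [Ideal.mem_span_singleton]) (by simp)
  have hw' : w ^ 2 + w = X * z := by
    simp [Polynomial.IsRoot] at hw; linear_combination hw
  have hB : (1 + 2 * w) ^ 2 = e6 := by rw [hz, ← hw']; ring
  refine ⟨1 + 2 * w, hB, ?_⟩
  have hwc : constantCoeff w = 0 := by
    rw [sub_zero, Ideal.mem_span_singleton, X_dvd_iff] at hw0; exact hw0
  have : Fact (Nat.Prime 7) := ⟨by norm_num⟩
  have h1 := cg_m7.1 e6_cg
  rw [← hB] at h1
  rw [cg_m7]
  have h2 : (m7 (1 + 2 * w) - m7 1) * (m7 (1 + 2 * w) + m7 1) = 0 := by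
    simp only [map_pow, map_one] at h1 ⊢; linear_combination h1
  rcases mul_eq_zero.1 h2 with h | h
  · exact sub_eq_zero.1 h
  · exfalso
    rw [← map_add] at h
    have := congrArg (coeff 0) h
    rw [m7, coeff_map] at this
    simp [hwc] at this
    exact h27 this
lemma exinv (x : PowerSeries ℤ) (hx : constantCoeff x = 1) : ∃ a : PowerSeries ℤ, x * a = 1 :=
  IsUnit.exists_right_inv (isUnit_iff_constantCoeff.2 (by rw [hx]; exact isUnit_one))
lemma exAi : ∃ a : PowerSeries ℤ, e6 * a = 1 := exinv _ const_e6
def Bb : PowerSeries ℤ := Classical.choose exB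
lemma Bb_sq : Bb ^ 2 = e6 := (Classical.choose_spec exB).1
lemma Bb_cg : cg 1 Bb 1 := (Classical.choose_spec exB).2
def Ai : PowerSeries ℤ := Classical.choose exAi
lemma A_Ai : e6 * Ai = 1 := Classical.choose_spec exAi
def Bi : PowerSeries ℤ := Bb * Ai
lemma B_Bi : Bb * Bi = 1 := by rw [Bi, ← mul_assoc, ← pow_two, Bb_sq, A_Ai]
end

section
open PowerSeries

lemma coeff_ED_lt (a b i : ℕ) (h : i < b) : coeff i (Ef ^ a * Df ^ b) = 0 := by
  have : (X : PowerSeries ℤ) ^ b ∣ Ef ^ a * Df ^ b := by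
    rw [Df_eq, mul_pow]; exact Dvd.dvd.mul_left (Dvd.dvd.mul_right dvd_rfl _) _
  exact X_pow_dvd_iff.1 this i h
lemma coeff_ED_eq (a b : ℕ) : coeff b (Ef ^ a * Df ^ b) = 1 := by
  have : Ef ^ a * Df ^ b = X ^ b * (Ef ^ a * Du ^ b) := by rw [Df_eq]; ring
  rw [this]
  have h := coeff_X_pow_mul (Ef ^ a * Du ^ b) b 0
  rw [zero_add] at h
  rw [h]
  simp [constEf, Du, constJ, constJi]

lemma Sturm {m : ℕ} {x : PowerSeries ℤ} (hx : x ∈ MM m) {N : ℤ} (h : ∀ i ≤ m / 2, N ∣ coeff i x) :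
    ∃ y ∈ MM m, x = C N * y := by
  obtain ⟨c, hc⟩ := MM_explicit hx
  have key : ∀ b, b ≤ m / 2 → N ∣ c b := by
    intro b
    induction b using Nat.strong_induction_on with
    | _ b ih =>
      intro hb
      have h1 := h b hb
      rw [hc, map_sum, ← Finset.sum_erase_add _ _ (Finset.mem_range.2 (Nat.lt_succ_of_le hb)), coeff_C_mul, coeff_ED_eq, mul_one] at h1
      refine (dvd_add_right (Finset.dvd_sum fun i hi => ?_)).1 h1
      rw [Finset.mem_erase, Finset.mem_range] at hi
      rw [coeff_C_mul]
      rcases lt_or_gt_of_ne hi.1 with h2 | h2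
      · exact Dvd.dvd.mul_right (ih i h2 (by omega)) _
      · rw [coeff_ED_lt _ _ _ h2, mul_zero]; exact dvd_zero _
  refine ⟨_, MM_sum (fun b => c b / N), ?_⟩
  rw [hc, Finset.mul_sum]
  refine Finset.sum_congr rfl fun b hb => ?_
  rw [← mul_assoc (C N), ← map_mul, Int.mul_ediv_cancel' (key b (by rw [Finset.mem_range] at hb; omega))]

lemma C7 (k : ℕ) : C ((7:ℤ) ^ k) = (7 : PowerSeries ℤ) ^ k := by
  rw [map_pow]; rfl

/-- Sturm bound, congruence form -/
lemma Sturm_cg {m k : ℕ} {x y : PowerSeries ℤ} (hx : x ∈ MM m) (hy : y ∈ MM m)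
    (h : ∀ i ≤ m / 2, (7:ℤ) ^ k ∣ coeff i x - coeff i y) : cg k x y := by
  obtain ⟨z, -, hz⟩ := Sturm (sub_mem hx hy) (N := 7 ^ k) (fun i hi => by rw [map_sub]; exact h i hi)
  exact ⟨z, by rw [hz, C7]⟩

lemma MM_sat {m k : ℕ} {x z : PowerSeries ℤ} (hx : x ∈ MM m) (h : x = 7 ^ k * z) : z ∈ MM m := by
  obtain ⟨y, hy, e⟩ := Sturm hx (N := 7 ^ k) (fun i hi => by rw [h, ← C7, coeff_C_mul]; exact dvd_mul_right _ _)
  rw [h, C7] at e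
  rwa [mul_left_cancel₀ (pow_ne_zero _ ne7) e]

lemma Us_shift {a a' s : ℕ} (h : 7 * a' = a + s) (hs : s ≤ 6) (F : PowerSeries ℤ) :
    Us 0 (X ^ a * F) = X ^ a' * Us s F := by
  ext n
  rw [coeff_Us, coeff_X_pow_mul', coeff_X_pow_mul']
  split_ifs with h1 h2 h2
  · rw [coeff_Us]; congr 2; omega
  · omega
  · omega
  · rfl

lemma MASTER {m a b a' b' m' s : ℕ} {G : PowerSeries ℤ} (hG : G ∈ MM m) (h1 : 1 ≤ m + 2 * a + 2 * b)
    (ha : 7 * a' = a + s) (hs : s ≤ 6) (hb : 7 * b' ≤ b + 6)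
    (hm : m + 2 * a + 2 * b = m' + 2 * a' + 2 * b') :
    ∃ G' ∈ MM m', cg (2 * (m + 2 * a + 2 * b) - 1) (Us s (Du ^ a * Dg ^ b * G)) (Du ^ a' * Dg ^ b' * G') := by
  obtain ⟨G', hG', r, hr⟩ := HECKE hG h1 (a' := a') (b' := b') (by omega) hb hm
  refine ⟨G', hG', ?_⟩
  rw [show Df ^ a * Dg ^ b * G = X ^ a * (Du ^ a * Dg ^ b * G) by rw [Df_eq]; ring, Us_shift ha hs,
    show Df ^ a' * Dg ^ b' * G' = X ^ a' * (Du ^ a' * Dg ^ b' * G') by rw [Df_eq]; ring] at hr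
  rw [cg_iff]
  intro n
  have h2 := congrArg (coeff (n + a')) hr
  rw [map_add, coeff_X_pow_mul, coeff_X_pow_mul, ← C7, coeff_C_mul] at h2
  rw [h2, add_sub_cancel_left]
  exact dvd_mul_right _ _

lemma GEN {P P' G : PowerSeries ℤ} {l e1 e2 a b a' b' s m m' : ℕ}
    (hP : P * J 1 ^ (7 * e1) * J 2 ^ (7 * e2) = Du ^ a * Dg ^ b)
    (hP' : P' * J 1 ^ e1 * J 2 ^ e2 = Du ^ a' * Dg ^ b')
    (he1 : 7 ^ l ∣ e1) (he2 : 7 ^ l ∣ e2) (ha : 7 * a' = a + s) (hs : s ≤ 6) (hb : 7 * b' ≤ b + 6)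
    (hG : G ∈ MM m) (hm : m + 2 * a + 2 * b = m' + 2 * a' + 2 * b')
    (hl : l + 2 ≤ 2 * (m + 2 * a + 2 * b)) :
    ∃ G' ∈ MM m', cg (l + 1) (Us s (P * G)) (P' * G') := by
  obtain ⟨G', hG', h⟩ := MASTER (G := G) (s := s) hG (by omega) ha hs hb hm
  refine ⟨G', hG', ?_⟩
  have e1' : cg (l + 1) (J 1 ^ (7 * e1) * ex7 (Ji 1) ^ e1) 1 := by
    have := ((frob (J 1)).lift' he1).mulr (ex7 (Ji 1) ^ e1)
    rw [← pow_mul, ← mul_pow, ex7, ← map_mul, J1i, map_one, one_pow] at this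
    exact this
  have e2' : cg (l + 1) (J 2 ^ (7 * e2) * ex7 (Ji 2) ^ e2) 1 := by
    have := ((frob (J 2)).lift' he2).mulr (ex7 (Ji 2) ^ e2)
    rw [← pow_mul, ← mul_pow, ex7, ← map_mul, J2i, map_one, one_pow] at this
    exact this
  have h1 : cg (l + 1) (P * G) ((Du ^ a * Dg ^ b * G) * ex7 (Ji 1 ^ e1 * Ji 2 ^ e2)) := by
    have := (cg.mull (P * G) (e1'.mul e2')).symm
    rw [mul_one, mul_one] at this
    refine this.trans ?_
    rw [← hP, show ex7 (Ji 1 ^ e1 * Ji 2 ^ e2) = ex7 (Ji 1) ^ e1 * ex7 (Ji 2) ^ e2 by simp only [ex7, map_mul, map_pow]]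
    rw [show P * G * (J 1 ^ (7 * e1) * ex7 (Ji 1) ^ e1 * (J 2 ^ (7 * e2) * ex7 (Ji 2) ^ e2)) = P * J 1 ^ (7 * e1) * J 2 ^ (7 * e2) * G * (ex7 (Ji 1) ^ e1 * ex7 (Ji 2) ^ e2) by ring]
    exact cg.refl _
  have h2 := h1.Us s
  rw [Us_mul_ex s hs] at h2
  refine h2.trans ?_
  have h3 := (h.mono (show l + 1 ≤ _ by omega)).mulr (Ji 1 ^ e1 * Ji 2 ^ e2)
  refine h3.trans ?_
  rw [← hP', show P' * J 1 ^ e1 * J 2 ^ e2 * G' * (Ji 1 ^ e1 * Ji 2 ^ e2) = P' * G' * ((J 1 * Ji 1) ^ e1 * (J 2 * Ji 2) ^ e2) by ring, J1i, J2i]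
  simpa using cg.refl _

lemma JJ {u v a b : ℕ} (h1 : u + 8 * a = 16 * b) (h2 : v + 8 * b = 16 * a) : J 1 ^ u * J 2 ^ v = Du ^ a * Dg ^ b := by
  have : Du ^ a * Dg ^ b = J 2 ^ (16 * a) * Ji 1 ^ (8 * a) * J 1 ^ (16 * b) * Ji 2 ^ (8 * b) := by
    rw [Du, Dg]; simp only [mul_pow, ← pow_mul]; ring
  rw [this, ← h1, ← h2, pow_add, pow_add,
    show J 2 ^ v * J 2 ^ (8 * b) * Ji 1 ^ (8 * a) * (J 1 ^ u * J 1 ^ (8 * a)) * Ji 2 ^ (8 * b) = J 1 ^ u * J 2 ^ v * ((J 1 * Ji 1) ^ (8 * a) * (J 2 * Ji 2) ^ (8 * b)) by ring, J1i, J2i]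
  simp

/-- U_o -/
lemma GENo {G : PowerSeries ℤ} {l e1 e2 a b a' b' m m' : ℕ} (hG : G ∈ MM m)
    (he1 : 7 ^ l ∣ e1) (he2 : 7 ^ l ∣ e2) (ha : 24 * a = 7 * (e1 + 2 * e2) + 6) (hb : 24 * b = 7 * (2 * e1 + e2) + 3)
    (ha' : 7 * a' = a + 5) (hb' : 7 * b' = b + 6) (hm : m + 2 * a + 2 * b = m' + 2 * a' + 2 * b')
    (hl : l + 2 ≤ 2 * (m + 2 * a + 2 * b)) :
    ∃ G' ∈ MM m', cg (l + 1) (Us 5 (J 2 ^ 3 * G)) (J 1 ^ 8 * J 2 ^ 5 * G') := by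
  refine GEN (P := J 2 ^ 3) (P' := J 1 ^ 8 * J 2 ^ 5) ?_ ?_ he1 he2 ha' (by norm_num) hb'.le hG hm hl
  · rw [← JJ (u := 7 * e1) (v := 7 * e2 + 3) (by omega) (by omega)]; ring
  · rw [← JJ (u := e1 + 8) (v := e2 + 5) (by omega) (by omega)]; ring
lemma GENe {G : PowerSeries ℤ} {l e1 e2 a b a' b' m m' : ℕ} (hG : G ∈ MM m)
    (he1 : 7 ^ l ∣ e1) (he2 : 7 ^ l ∣ e2) (ha : 24 * a = 7 * (e1 + 2 * e2) + 18) (hb : 24 * b = 7 * (2 * e1 + e2) + 21)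
    (ha' : 7 * a' = a + 1) (hb' : 7 * b' = b) (hm : m + 2 * a + 2 * b = m' + 2 * a' + 2 * b')
    (hl : l + 2 ≤ 2 * (m + 2 * a + 2 * b)) :
    ∃ G' ∈ MM m', cg (l + 1) (Us 1 (J 1 ^ 8 * J 2 ^ 5 * G)) (J 2 ^ 3 * G') := by
  refine GEN (P' := J 2 ^ 3) (P := J 1 ^ 8 * J 2 ^ 5) ?_ ?_ he1 he2 ha' (by norm_num) (by omega) hG hm hl
  · rw [← JJ (u := 7 * e1 + 8) (v := 7 * e2 + 5) (by omega) (by omega)]; ring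
  · rw [← JJ (u := e1) (v := e2 + 3) (by omega) (by omega)]; ring
lemma GENi {l e1 e2 a b a' b' m' : ℕ} (h3 : 3 ≤ e1)
    (he1 : 7 ^ l ∣ e1) (he2 : 7 ^ l ∣ e2) (ha : 24 * a + 6 = 7 * (e1 + 2 * e2)) (hb : 24 * b + 27 = 7 * (2 * e1 + e2))
    (ha' : 7 * a' = a + 2) (hb' : 7 * b' = b + 2) (hm : 2 * a + 2 * b = m' + 2 * a' + 2 * b')
    (hl : l + 2 ≤ 2 * (2 * a + 2 * b)) :
    ∃ G' ∈ MM m', cg (l + 1) (Us 2 (Ji 1 ^ 16 * J 2 ^ 5)) (J 2 ^ 3 * G') := by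
  have := GEN (P' := J 2 ^ 3) (P := Ji 1 ^ 16 * J 2 ^ 5) (G := 1) (m := 0) (l := l) (s := 2) (e1 := e1) (e2 := e2) (a := a) (b := b) (a' := a') (b' := b') (m' := m') ?_ ?_ he1 he2 ha' (by norm_num) (by omega) one_MM (by omega) (by omega)
  · simpa using this
  · obtain ⟨u, hu⟩ : ∃ u, 7 * e1 = u + 16 := ⟨7 * e1 - 16, by omega⟩
    rw [← JJ (u := u) (v := 7 * e2 + 5) (by omega) (by omega), hu,
      show Ji 1 ^ 16 * J 2 ^ 5 * J 1 ^ (u + 16) * J 2 ^ (7 * e2) = J 1 ^ u * J 2 ^ (7 * e2 + 5) * (J 1 * Ji 1) ^ 16 by ring, J1i]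
    simp
  · rw [← JJ (u := e1) (v := e2 + 3) (by omega) (by omega)]; ring
end

section
open PowerSeries

def frc {α : Type} (n : ℕ) (f : ℕ → α) : α := Nat.rec (f 0) (fun m _ => f (Nat.succ m)) n
lemma frc_eq {α : Type} (n : ℕ) (f : ℕ → α) : frc n f = f n := by cases n <;> rfl
def bt (k : ℕ) : ℕ := Nat.pow 2 (Nat.mul 32 k)
lemma bt_eq (k : ℕ) : bt k = (2 ^ 32) ^ k := by rw [← pow_mul]; rfl
lemma bt_add (k l : ℕ) : bt (k + l) = bt k * bt l := by rw [bt_eq, bt_eq, bt_eq, pow_add]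
lemma bt_pos (k : ℕ) : 0 < bt k := by rw [bt_eq]; positivity
lemma bt_zero : bt 0 = 1 := rfl
lemma bt_one : bt 1 = 4294967296 := by rw [bt_eq]; norm_num
attribute [irreducible] bt
def red (k : ℕ) : ℕ → ℕ := Nat.rec (fun N => Nat.mod N 343) (fun k ih N => frc (bt (Nat.pow 2 k)) fun B =>
  frc (Nat.mod N B) fun lo => frc (Nat.div N B) fun hi => Nat.add (ih lo) (Nat.mul B (ih hi))) k
lemma red_zero (N : ℕ) : red 0 N = N % 343 := rfl
lemma red_succ (k N : ℕ) : red (k + 1) N = red k (N % bt (2 ^ k)) + bt (2 ^ k) * red k (N / bt (2 ^ k)) := by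
  have : red (k + 1) N = frc (bt (Nat.pow 2 k)) fun B =>
    frc (Nat.mod N B) fun lo => frc (Nat.div N B) fun hi => Nat.add (red k lo) (Nat.mul B (red k hi)) := rfl
  rw [this, frc_eq, frc_eq, frc_eq]; rfl
def thet (k : ℕ) : ℕ → ℕ → ℕ := Nat.rec (fun o N => Nat.mod (Nat.mul o N) 343) (fun k ih o N => frc (bt (Nat.pow 2 k)) fun B =>
  frc (Nat.mod N B) fun lo => frc (Nat.div N B) fun hi => frc (Nat.add o (Nat.pow 2 k)) fun o' => Nat.add (ih o lo) (Nat.mul B (ih o' hi))) k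
lemma thet_succ (k o N : ℕ) : thet (k + 1) o N = thet k o (N % bt (2 ^ k)) + bt (2 ^ k) * thet k (o + 2 ^ k) (N / bt (2 ^ k)) := by
  have : thet (k + 1) o N = frc (bt (Nat.pow 2 k)) fun B =>
    frc (Nat.mod N B) fun lo => frc (Nat.div N B) fun hi => frc (Nat.add o (Nat.pow 2 k)) fun o' => Nat.add (thet k o lo) (Nat.mul B (thet k o' hi)) := rfl
  rw [this, frc_eq, frc_eq, frc_eq, frc_eq]; rfl
def pmul (k N1 N2 : ℕ) : ℕ := frc (Nat.mod (Nat.mul N1 N2) (bt (Nat.pow 2 k))) (red k)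
lemma pmul_eq (k N1 N2 : ℕ) : pmul k N1 N2 = red k (N1 * N2 % bt (2 ^ k)) := by
  rw [pmul, frc_eq]; rfl

def SS (c : ℕ → ℕ) (n : ℕ) : ℕ := ∑ i ∈ Finset.range n, c i * bt i
lemma SS_succ' (c : ℕ → ℕ) (n : ℕ) : SS c (n + 1) = c 0 + bt 1 * SS (fun i => c (i + 1)) n := by
  rw [SS, Finset.sum_range_succ', SS, Finset.mul_sum, add_comm, bt_zero, mul_one]
  congr 1
  refine Finset.sum_congr rfl fun i _ => ?_
  rw [bt_add]; ring
lemma SS_add (c : ℕ → ℕ) (n m : ℕ) : SS c (n + m) = SS c n + bt n * SS (fun i => c (n + i)) m := by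
  rw [SS, Finset.sum_range_add, SS, SS, Finset.mul_sum]
  congr 1
  refine Finset.sum_congr rfl fun i _ => ?_
  rw [bt_add]; ring
lemma SS_lt (c : ℕ → ℕ) (n : ℕ) (h : ∀ i < n, c i < bt 1) : SS c n < bt n := by
  induction n with
  | zero => simp [SS, bt_zero]
  | succ n ih =>
    rw [SS, Finset.sum_range_succ, bt_add]
    have h1 := ih fun i hi => h i (by omega)
    rw [SS] at h1
    have h2 := h n (by omega)
    nlinarith [bt_pos n]
lemma SS_mod (c : ℕ → ℕ) (n m : ℕ) (h : ∀ i < n, c i < bt 1) : SS c (n + m) % bt n = SS c n := by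
  rw [SS_add, Nat.add_mul_mod_self_left, Nat.mod_eq_of_lt (SS_lt c n h)]
lemma SS_div (c : ℕ → ℕ) (n m : ℕ) (h : ∀ i < n, c i < bt 1) : SS c (n + m) / bt n = SS (fun i => c (n + i)) m := by
  rw [SS_add, Nat.add_mul_div_left _ _ (bt_pos n), Nat.div_eq_of_lt (SS_lt c n h), zero_add]
lemma SS_dig (c : ℕ → ℕ) (n i : ℕ) (hi : i < n) (h : ∀ i < n, c i < bt 1) : SS c n / bt i % bt 1 = c i := by
  obtain ⟨m, rfl⟩ : ∃ m, n = i + (m + 1) := ⟨n - i - 1, by omega⟩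
  rw [SS_div _ _ _ fun j hj => h j (by omega), SS_succ', Nat.add_mul_mod_self_left, Nat.mod_eq_of_lt]
  · rfl
  · exact h i hi
lemma red_SS (k : ℕ) : ∀ c : ℕ → ℕ, (∀ i < 2 ^ k, c i < bt 1) → red k (SS c (2 ^ k)) = SS (fun i => c i % 343) (2 ^ k) := by
  induction k with
  | zero => intro c _; simp [SS, red_zero, bt_zero]
  | succ k ih =>
    intro c h
    rw [red_succ, show 2 ^ (k + 1) = 2 ^ k + 2 ^ k by ring] at *
    rw [SS_mod _ _ _ fun i hi => h i (by omega), SS_div _ _ _ fun i hi => h i (by omega), ih _ fun i hi => h i (by omega),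
      ih _ fun i hi => h _ (by omega), SS_add]
lemma thet_SS (k : ℕ) : ∀ (o : ℕ) (c : ℕ → ℕ), (∀ i < 2 ^ k, c i < bt 1) → thet k o (SS c (2 ^ k)) = SS (fun i => ((o + i) * c i) % 343) (2 ^ k) := by
  induction k with
  | zero => intro o c _; simp [SS, bt_zero]; rfl
  | succ k ih =>
    intro o c h
    rw [thet_succ, show 2 ^ (k + 1) = 2 ^ k + 2 ^ k by ring] at *
    rw [SS_mod _ _ _ fun i hi => h i (by omega), SS_div _ _ _ fun i hi => h i (by omega), ih _ _ fun i hi => h i (by omega),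
      ih _ _ fun i hi => h _ (by omega), SS_add]
    simp only [add_assoc]
lemma SS_mul (n : ℕ) : ∀ a b : ℕ → ℕ, (SS a n * SS b n) ≡ SS (fun k => ∑ p ∈ Finset.HasAntidiagonal.antidiagonal k, a p.1 * b p.2) n [MOD bt n] := by
  induction n with
  | zero => intro a b; simp [SS]; exact Nat.ModEq.refl _
  | succ n ih =>
    intro a b
    have e : SS b (n + 1) ≡ SS b n [MOD bt n] := by
      rw [SS_add]; rw [Nat.ModEq, Nat.add_mul_mod_self_left]
    have h1 : SS (fun i => a (i + 1)) n * SS b (n + 1) ≡ SS (fun k => ∑ p ∈ Finset.HasAntidiagonal.antidiagonal k, a (p.1 + 1) * b p.2) n [MOD bt n] :=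
      (Nat.ModEq.mul_left _ e).trans (ih _ _)
    have h2 := Nat.ModEq.mul_left' (bt 1) h1
    rw [← bt_add, add_comm 1 n] at h2
    have h3 : SS a (n + 1) * SS b (n + 1) = a 0 * SS b (n + 1) + bt 1 * (SS (fun i => a (i + 1)) n * SS b (n + 1)) := by
      rw [SS_succ' a]; ring
    rw [h3]
    refine (Nat.ModEq.add_left _ h2).trans ?_
    rw [SS_succ' b, SS_succ' (fun k => _)]
    simp only [Finset.Nat.antidiagonal_zero, Finset.sum_singleton]
    have h4 : ∀ k, ∑ p ∈ Finset.HasAntidiagonal.antidiagonal (k + 1), a p.1 * b p.2 = a 0 * b (k + 1) + ∑ p ∈ Finset.HasAntidiagonal.antidiagonal k, a (p.1 + 1) * b p.2 := fun k => by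
      rw [Finset.Nat.sum_antidiagonal_succ]
    simp only [h4]
    have h5 : SS (fun k => a 0 * b (k + 1) + ∑ p ∈ Finset.HasAntidiagonal.antidiagonal k, a (p.1 + 1) * b p.2) n
        = a 0 * SS (fun k => b (k + 1)) n + SS (fun k => ∑ p ∈ Finset.HasAntidiagonal.antidiagonal k, a (p.1 + 1) * b p.2) n := by
      simp only [SS, add_mul, Finset.sum_add_distrib, Finset.mul_sum, mul_assoc]
    rw [h5]
    refine (show ∀ x y : ℕ, x = y → x ≡ y [MOD bt (n + 1)] from fun x y h => h ▸ Nat.ModEq.refl _) _ _ ?_; ring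
end

section
open PowerSeries

def Rp (K b N : ℕ) (x : PowerSeries ℤ) : Prop :=
  ∃ a : ℕ → ℕ, (∀ i, a i ≤ b) ∧ N = SS a (2 ^ K) ∧ ∀ i < 2 ^ K, (343 : ℤ) ∣ (a i : ℤ) - coeff i x

lemma Rp.add {K b c N N' : ℕ} {x y : PowerSeries ℤ} (h : Rp K b N x) (h' : Rp K c N' y) : Rp K (b + c) (N + N') (x + y) := by
  obtain ⟨a, h1, h2, h3⟩ := h
  obtain ⟨a', h1', h2', h3'⟩ := h'
  refine ⟨fun i => a i + a' i, fun i => add_le_add (h1 i) (h1' i), ?_, fun i hi => ?_⟩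
  · rw [h2, h2']; simp only [SS, add_mul, Finset.sum_add_distrib]
  · have := dvd_add (h3 i hi) (h3' i hi)
    rw [map_add]; push_cast; rwa [sub_add_sub_comm] at this
lemma Rp.cmul {K b N : ℕ} {x : PowerSeries ℤ} (c : ℕ) (h : Rp K b N x) : Rp K (c * b) (c * N) (C (c : ℤ) * x) := by
  obtain ⟨a, h1, h2, h3⟩ := h
  refine ⟨fun i => c * a i, fun i => Nat.mul_le_mul_left _ (h1 i), ?_, fun i hi => ?_⟩
  · rw [h2]; simp only [SS, Finset.mul_sum, mul_assoc]
  · rw [coeff_C_mul]; push_cast; rw [← mul_sub]; exact Dvd.dvd.mul_left (h3 i hi) _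
lemma Rp.mono {K b c N : ℕ} {x : PowerSeries ℤ} (h : Rp K b N x) (hb : b ≤ c) : Rp K c N x := by
  obtain ⟨a, h1, h2, h3⟩ := h
  exact ⟨a, fun i => (h1 i).trans hb, h2, h3⟩
lemma Rp.congr {K b N : ℕ} {x y : PowerSeries ℤ} (h : Rp K b N x) (hy : ∀ i < 2 ^ K, (343:ℤ) ∣ coeff i x - coeff i y) : Rp K b N y := by
  obtain ⟨a, h1, h2, h3⟩ := h
  refine ⟨a, h1, h2, fun i hi => ?_⟩
  have := dvd_add (h3 i hi) (hy i hi)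
  rwa [sub_add_sub_cancel] at this
lemma Rp.red {K b N : ℕ} {x : PowerSeries ℤ} (h : Rp K b N x) (hb : b < 4294967296) : Rp K 342 (red K N) x := by
  obtain ⟨a, h1, h2, h3⟩ := h
  refine ⟨fun i => a i % 343, fun i => Nat.le_of_lt_succ (Nat.mod_lt _ (by norm_num)), ?_, fun i hi => ?_⟩
  · rw [h2, red_SS]; intro i _; rw [bt_one]; exact lt_of_le_of_lt (h1 i) hb
  · have := h3 i hi
    push_cast; omega
lemma Rp.thet {K N : ℕ} {x : PowerSeries ℤ} (h : Rp K 342 N x) : Rp K 342 (thet K 0 N) (X * d⁄dX ℤ x) := by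
  obtain ⟨a, h1, h2, h3⟩ := h
  refine ⟨fun i => ((0 + i) * a i) % 343, fun i => Nat.le_of_lt_succ (Nat.mod_lt _ (by norm_num)), ?_, fun i hi => ?_⟩
  · rw [h2, thet_SS]; intro i _; rw [bt_one]; exact lt_of_le_of_lt (h1 i) (by norm_num)
  · have := h3 i hi
    have e : coeff i (X * d⁄dX ℤ x) = i * coeff i x := by
      rcases i with _ | i
      · simp
      · rw [coeff_succ_X_mul, coeff_derivative]; push_cast; ring
    rw [e]
    have h4 : (343:ℤ) ∣ (i * a i : ℤ) - i * coeff i x := by rw [← mul_sub]; exact Dvd.dvd.mul_left this _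
    push_cast
    rw [zero_add]
    omega
lemma Rp.pmul {K N N' : ℕ} {x y : PowerSeries ℤ} (hK : K ≤ 12) (h : Rp K 342 N x) (h' : Rp K 342 N' y) : Rp K 342 (pmul K N N') (x * y) := by
  rw [pmul_eq]
  obtain ⟨a, h1, h2, h3⟩ := h
  obtain ⟨a', h1', h2', h3'⟩ := h'
  have hk : 2 ^ K ≤ 2 ^ 12 := Nat.pow_le_pow_right (by norm_num) hK
  have hc : ∀ k < 2 ^ K, ∑ p ∈ Finset.HasAntidiagonal.antidiagonal k, a p.1 * a' p.2 ≤ 4096 * (342 * 342) := by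
    intro k hk'
    calc _ ≤ ∑ p ∈ Finset.HasAntidiagonal.antidiagonal k, 342 * 342 := Finset.sum_le_sum fun p _ => Nat.mul_le_mul (h1 _) (h1' _)
      _ = (k + 1) * (342 * 342) := by rw [Finset.sum_const, Finset.Nat.card_antidiagonal, smul_eq_mul]
      _ ≤ _ := Nat.mul_le_mul_right _ (by norm_num at hk; omega)
  have hc' : ∀ k < 2 ^ K, ∑ p ∈ Finset.HasAntidiagonal.antidiagonal k, a p.1 * a' p.2 < bt 1 := fun k hk' => by
    rw [bt_one]; exact lt_of_le_of_lt (hc k hk') (by norm_num)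
  have e : N * N' % bt (2 ^ K) = SS (fun k => ∑ p ∈ Finset.HasAntidiagonal.antidiagonal k, a p.1 * a' p.2) (2 ^ K) := by
    rw [h2, h2', SS_mul (2 ^ K) a a', Nat.mod_eq_of_lt (SS_lt _ _ hc')]
  rw [e, red_SS _ _ hc']
  refine ⟨_, fun i => ?_, rfl, fun i hi => ?_⟩
  · exact Nat.le_of_lt_succ (Nat.mod_lt _ (by norm_num))
  · have : (343:ℤ) ∣ ((∑ p ∈ Finset.HasAntidiagonal.antidiagonal i, a p.1 * a' p.2 : ℕ) : ℤ) - coeff i (x * y) := by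
      rw [coeff_mul]; push_cast; rw [← Finset.sum_sub_distrib]
      refine Finset.dvd_sum fun p hp => ?_
      have hp' := Finset.HasAntidiagonal.mem_antidiagonal.1 hp
      have e : (a p.1 : ℤ) * a' p.2 - coeff p.1 x * coeff p.2 y = (a p.1 - coeff p.1 x) * a' p.2 + coeff p.1 x * (a' p.2 - coeff p.2 y) := by ring
      rw [e]
      exact dvd_add (Dvd.dvd.mul_right (h3 _ (by omega)) _) (Dvd.dvd.mul_left (h3' _ (by omega)) _)
    generalize (∑ p ∈ Finset.HasAntidiagonal.antidiagonal i, a p.1 * a' p.2 : ℕ) = s at *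
    push_cast
    omega
lemma Rp.Xpow {K e : ℕ} (he : e < 2 ^ K) : Rp K 1 (bt e) (X ^ e) := by
  refine ⟨fun i => if i = e then 1 else 0, fun i => by show (if i = e then 1 else 0) ≤ 1; split_ifs <;> norm_num, ?_, fun i hi => ?_⟩
  · simp [SS, he]
  · rw [coeff_X_pow]; split_ifs with h <;> simp [h]
lemma Rp.one (K : ℕ) : Rp K 1 1 1 := by
  have := Rp.Xpow (K := K) (e := 0) (by positivity)
  rwa [bt_zero, pow_zero] at this
lemma Rp.zero (K : ℕ) : Rp K 0 0 0 := ⟨fun _ => 0, fun _ => le_rfl, by simp [SS], fun i _ => by simp⟩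
lemma Rp.trunc {K K' b N : ℕ} {x : PowerSeries ℤ} (h : Rp K b N x) (hb : b < 4294967296) (hK : K' ≤ K) : Rp K' b (N % bt (2 ^ K')) x := by
  obtain ⟨a, h1, h2, h3⟩ := h
  have hk : 2 ^ K' ≤ 2 ^ K := Nat.pow_le_pow_right (by norm_num) hK
  refine ⟨a, h1, ?_, fun i hi => h3 i (by omega)⟩
  obtain ⟨m, hm⟩ := Nat.exists_eq_add_of_le hk
  rw [h2, hm, SS_mod]
  intro i _; rw [bt_one]; exact lt_of_le_of_lt (h1 i) hb
def dg (N i : ℕ) : ℕ := Nat.mod (Nat.div N (bt i)) 4294967296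
lemma Rp.dg {K b N : ℕ} {x : PowerSeries ℤ} (h : Rp K b N x) (hb : b < 4294967296) {i : ℕ} (hi : i < 2 ^ K) :
    (343:ℤ) ∣ (dg N i : ℤ) - coeff i x := by
  obtain ⟨a, h1, h2, h3⟩ := h
  have : _root_.dg N i = N / bt i % bt 1 := by rw [bt_one]; rfl
  rw [this, h2, SS_dig _ _ _ hi fun i _ => by rw [bt_one]; exact lt_of_le_of_lt (h1 i) hb]
  exact h3 i hi

/-- powers -/
def ppow (K N : ℕ) (j : ℕ) : ℕ := Nat.rec 1 (fun _ r => frc r fun r => pmul K r N) j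
lemma Rp.ppow {K N : ℕ} {x : PowerSeries ℤ} (hK : K ≤ 12) (h : Rp K 342 N x) (j : ℕ) : Rp K 342 (ppow K N j) (x ^ j) := by
  induction j with
  | zero => rw [pow_zero]; exact (Rp.one K).mono (by norm_num : 1 ≤ 342)
  | succ j ih =>
    have e : _root_.ppow K N (j + 1) = _root_.pmul K (_root_.ppow K N j) N := frc_eq (_root_.ppow K N j) (fun r => _root_.pmul K r N)
    rw [e, pow_succ]; exact ih.pmul hK h
lemma Rp.frc {K b N : ℕ} {x : PowerSeries ℤ} {f : ℕ → ℕ} (h : Rp K b (f N) x) : Rp K b (frc N f) x := by rwa [frc_eq]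
/-- Newton inverse -/
def pinv (K N : ℕ) (j : ℕ) : ℕ := Nat.rec 1 (fun _ r => frc r fun r => frc (pmul K N r) fun z => frc (pmul K r z) fun w => red K (2 * r + 342 * w)) j
def ninv (x : PowerSeries ℤ) (j : ℕ) : PowerSeries ℤ := Nat.rec 1 (fun _ r => C ((2:ℕ):ℤ) * r + C ((342:ℕ):ℤ) * (r * (x * r))) j
lemma Rp.pinv {K N : ℕ} {x : PowerSeries ℤ} (hK : K ≤ 12) (h : Rp K 342 N x) (j : ℕ) : Rp K 342 (pinv K N j) (ninv x j) := by
  induction j with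
  | zero => exact (Rp.one K).mono (by norm_num : 1 ≤ 342)
  | succ j ih =>
    have e : _root_.pinv K N (j + 1) = _root_.red K (2 * _root_.pinv K N j + 342 * _root_.pmul K (_root_.pinv K N j) (_root_.pmul K N (_root_.pinv K N j))) := by
      refine (frc_eq (_root_.pinv K N j) (fun r => _root_.frc (_root_.pmul K N r) fun z => _root_.frc (_root_.pmul K r z) fun w => _root_.red K (2 * r + 342 * w))).trans ?_
      rw [frc_eq, frc_eq]
    rw [e]
    exact ((ih.cmul 2).add ((ih.pmul hK (h.pmul hK ih)).cmul 342)).red (by norm_num)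
lemma ninv_spec (x : PowerSeries ℤ) (hx : constantCoeff x = 1) (j : ℕ) : ∃ u v, 1 - x * ninv x j = X ^ (2 ^ j) * u + 343 * v := by
  induction j with
  | zero =>
    obtain ⟨u, hu⟩ := X_dvd_iff.2 (show constantCoeff (1 - x) = 0 by rw [map_sub, hx, map_one, sub_self])
    exact ⟨u, 0, by show 1 - x * 1 = _; rw [mul_one, hu]; simp⟩
  | succ j ih =>
    obtain ⟨u, v, h⟩ := ih
    have e : ninv x (j + 1) = 2 * ninv x j + 342 * (ninv x j * (x * ninv x j)) := rfl
    refine ⟨u ^ 2, 2 * X ^ (2 ^ j) * u * v + 343 * v ^ 2 - x * ninv x j * (x * ninv x j), ?_⟩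
    rw [e, pow_succ 2 j, pow_mul]
    have : (1 - x * ninv x j) ^ 2 = (X ^ (2 ^ j) * u + 343 * v) ^ 2 := by rw [h]
    linear_combination this
lemma Rp.inv {K N : ℕ} {x y : PowerSeries ℤ} (hK : K ≤ 12) (h : Rp K 342 N x) (hx : constantCoeff x = 1) (hy : x * y = 1) : Rp K 342 (_root_.pinv K N K) y := by
  refine (h.pinv hK K).congr fun i hi => ?_
  obtain ⟨u, v, e⟩ := ninv_spec x hx K
  have e2 : ninv x K - y = X ^ (2 ^ K) * (-(y * u)) + C 343 * (-(y * v)) := by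
    have : (C 343 : PowerSeries ℤ) = 343 := rfl
    rw [this]
    linear_combination (-y) * e - (ninv x K) * hy
  rw [← map_sub, e2, map_add, coeff_X_pow_mul', if_neg (by omega), zero_add, coeff_C_mul]
  exact dvd_mul_right _ _
end

section
open PowerSeries

lemma J1_pent : J 1 = pentagonalSeries ℤ := by
  ext n
  have h := coeff_prod_one_sub_X_pow_eventually_eq ℤ n
  have h2 := Filter.tendsto_finset_range.eventually h
  obtain ⟨N, hN, hN'⟩ := (h2.and (Filter.eventually_ge_atTop (n + 1))).exists
  rw [← hN, ← Jprod_succ 1 n N le_rfl hN']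
  simp

lemma pn_neg (k : ℕ) : pentagonal (-(k:ℤ)) = k * (3 * k + 1) / 2 := by
  rw [pentagonal_neg]; norm_cast
lemma pn_succ (k : ℕ) : pentagonal ((k:ℤ) + 1) = (k + 1) * (3 * k + 2) / 2 := by
  rw [pentagonal_def]
  have : ((k:ℤ) + 1) * (3 * (k + 1) - 1) = (((k + 1) * (3 * k + 2) : ℕ) : ℤ) := by push_cast; ring
  rw [this]; norm_cast

def pentP (b T : ℕ) : PowerSeries ℤ := ∑ k ∈ Finset.range T, (-1) ^ k * (X ^ (b * (k * (3 * k + 1) / 2)) - X ^ (b * ((k + 1) * (3 * k + 2) / 2)))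

lemma pent_coeff1 (T i : ℕ) (hi : i < T * (3 * T + 1) / 2) : coeff i (J 1) = coeff i (pentP 1 T) := by
  let : TopologicalSpace ℤ := ⊥
  have : DiscreteTopology ℤ := ⟨rfl⟩
  have h := WithPiTopology.hasSum_pow_pentagonal_sub_pentagonalSeries ℤ
  let := WithPiTopology.instTopologicalSpace (R := ℤ)
  have h2 := h.map (coeff (R := ℤ) i) (WithPiTopology.continuous_coeff ℤ i)
  have h3 := hasSum_sum_of_ne_finset_zero (f := (fun k : ℕ => coeff i ((-1) ^ k * (X ^ pentagonal (-(k:ℤ)) - X ^ pentagonal ((k:ℤ) + 1)) : PowerSeries ℤ))) (s := Finset.range T) (L := .unconditional ℕ) (by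
    intro k hk
    rw [Finset.mem_range, not_lt] at hk
    have h4 : T * (3 * T + 1) / 2 ≤ k * (3 * k + 1) / 2 := Nat.div_le_div_right (by gcongr)
    have h5 : k * (3 * k + 1) / 2 ≤ (k + 1) * (3 * k + 2) / 2 := Nat.div_le_div_right (by gcongr <;> omega)
    rw [pn_neg, pn_succ, show ((-1) ^ k : PowerSeries ℤ) = C ((-1) ^ k) by simp, coeff_C_mul, map_sub, coeff_X_pow, coeff_X_pow, if_neg (by omega), if_neg (by omega)]
    simp)
  rw [J1_pent, h2.unique h3, pentP, map_sum]
  simp only [pn_neg, pn_succ, one_mul]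
lemma pentP_expand (b T : ℕ) (hb : b ≠ 0) : pentP b T = expand b hb (pentP 1 T) := by
  simp only [pentP, map_sum, map_mul, map_pow, map_neg, map_one, map_sub, expand_X, ← pow_mul, one_mul]
lemma pent_coeff (b T i : ℕ) (hb : b ≠ 0) (hi : i < T * (3 * T + 1) / 2) : coeff i (J b) = coeff i (pentP b T) := by
  rw [J_expand b hb, pentP_expand b T hb, coeff_expand, coeff_expand]
  split_ifs with h
  · exact pent_coeff1 T _ (lt_of_le_of_lt (Nat.div_le_self _ _) hi)
  · rfl

lemma Rp.Xpow' (K e : ℕ) : Rp K 1 (bt e % bt (2 ^ K)) (X ^ e) := by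
  by_cases h : e < 2 ^ K
  · rw [Nat.mod_eq_of_lt]
    · exact Rp.Xpow h
    · rw [bt_eq, bt_eq]; exact Nat.pow_lt_pow_right (by norm_num) h
  · obtain ⟨m, rfl⟩ := Nat.exists_eq_add_of_le (not_lt.1 h)
    rw [bt_add, Nat.mul_mod_right]
    refine ((Rp.zero K).mono zero_le_one).congr fun i hi => ?_
    rw [coeff_X_pow, if_neg (by omega)]; simp

def pJ (K b : ℕ) (T : ℕ) : ℕ := red K (Nat.rec 0 (fun k r => frc r fun r =>
  r + (342 ^ k % 343) * (bt (b * (k * (3 * k + 1) / 2)) % bt (2 ^ K) + 342 * (bt (b * ((k + 1) * (3 * k + 2) / 2)) % bt (2 ^ K)))) T)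

lemma pJ_aux (K b T : ℕ) : Rp K (T * (342 * 343)) (Nat.rec 0 (fun k r => frc r fun r =>
  r + (342 ^ k % 343) * (bt (b * (k * (3 * k + 1) / 2)) % bt (2 ^ K) + 342 * (bt (b * ((k + 1) * (3 * k + 2) / 2)) % bt (2 ^ K)))) T) (pentP b T) := by
  induction T with
  | zero => simpa [pentP] using Rp.zero K
  | succ k ih =>
    dsimp only
    rw [frc_eq, pentP, Finset.sum_range_succ, ← pentP, add_mul, one_mul]
    refine ih.add ?_
    have h := ((Rp.Xpow' K (b * (k * (3 * k + 1) / 2))).add ((Rp.Xpow' K (b * ((k + 1) * (3 * k + 2) / 2))).cmul 342)).cmul (342 ^ k % 343)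
    have hm : 342 ^ k % 343 ≤ 342 := Nat.le_of_lt_succ (Nat.mod_lt _ (by norm_num))
    refine (h.mono (c := 342 * 343) (Nat.mul_le_mul hm (by norm_num))).congr fun i _ => ?_
    rw [show ((-1) ^ k : PowerSeries ℤ) = C ((-1) ^ k) by simp, coeff_C_mul, coeff_C_mul, map_add, map_sub, coeff_C_mul]
    have hu : (343:ℤ) ∣ ((342 ^ k % 343 : ℕ) : ℤ) - (-1) ^ k := by
      have h1 : (343:ℤ) ∣ (342:ℤ) ^ k - (-1) ^ k := (by norm_num : (343:ℤ) ∣ 342 - (-1)).trans (sub_dvd_pow_sub_pow _ _ _)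
      push_cast; generalize (342:ℤ) ^ k = p at *; omega
    generalize ((342 ^ k % 343 : ℕ) : ℤ) = u at *
    generalize coeff i (X ^ (b * (k * (3 * k + 1) / 2)) : PowerSeries ℤ) = x
    generalize coeff i (X ^ (b * ((k + 1) * (3 * k + 2) / 2)) : PowerSeries ℤ) = y
    have e : u * (x + ((342:ℕ):ℤ) * y) - (-1) ^ k * (x - y) = (u - (-1) ^ k) * (x + 342 * y) + 343 * ((-1) ^ k * y) := by push_cast; ring
    rw [e]
    exact dvd_add (Dvd.dvd.mul_right hu _) (dvd_mul_right _ _)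

lemma Rp.J (K b T : ℕ) (hb : b ≠ 0) (hT : 2 ^ K ≤ T * (3 * T + 1) / 2) (hT' : T ≤ 100) : Rp K 342 (pJ K b T) (J b) := by
  refine Rp.red (b := T * (342 * 343)) ((pJ_aux K b T).congr fun i hi => ?_) ?_
  · rw [pent_coeff b T i hb (by omega), sub_self]; exact dvd_zero _
  · calc T * (342 * 343) ≤ 100 * (342 * 343) := Nat.mul_le_mul_right _ hT'
      _ < _ := by norm_num

def pE (K j1 j2 i1 i2 : ℕ) : ℕ := red K (1 + 24 * (pmul K (thet K 0 j2) i2 + 342 * pmul K (thet K 0 j1) i1))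
def pD (K j2 i1 : ℕ) : ℕ := pmul K (bt 1) (pmul K (ppow K (ppow K j2 4) 4) (ppow K i1 8))
lemma Rp.E {K j1 j2 i1 i2 : ℕ} (hK : K ≤ 12) (h1 : Rp K 342 j1 (_root_.J 1)) (h2 : Rp K 342 j2 (_root_.J 2)) (h3 : Rp K 342 i1 (Ji 1)) (h4 : Rp K 342 i2 (Ji 2)) :
    Rp K 342 (pE K j1 j2 i1 i2) Ef := by
  have h := (((Rp.one K).add (((h2.thet.pmul hK h4).add ((h1.thet.pmul hK h3).cmul 342)).cmul 24)).red (by norm_num))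
  refine Rp.congr (x := 1 + C ((24:ℕ):ℤ) * (X * d⁄dX ℤ (_root_.J 2) * Ji 2 + C ((342:ℕ):ℤ) * (X * d⁄dX ℤ (_root_.J 1) * Ji 1))) h fun i hi => ?_
  rw [← map_sub, Ef]
  have : (1 + C ((24:ℕ):ℤ) * (X * d⁄dX ℤ (_root_.J 2) * Ji 2 + C ((342:ℕ):ℤ) * (X * d⁄dX ℤ (_root_.J 1) * Ji 1))) - (1 + 24 * (X * (d⁄dX ℤ (_root_.J 2) * Ji 2 - d⁄dX ℤ (_root_.J 1) * Ji 1)))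
    = C 343 * (24 * (X * d⁄dX ℤ (_root_.J 1) * Ji 1)) := by
    rw [show C ((24:ℕ):ℤ) = (24 : PowerSeries ℤ) from rfl, show C ((342:ℕ):ℤ) = (342 : PowerSeries ℤ) from rfl, show (C 343 : PowerSeries ℤ) = 343 from rfl]
    ring
  rw [this, coeff_C_mul]; exact dvd_mul_right _ _
lemma Rp.D {K j2 i1 : ℕ} (hK : K ≤ 12) (hK' : 1 ≤ K) (h2 : Rp K 342 j2 (_root_.J 2)) (h3 : Rp K 342 i1 (Ji 1)) :
    Rp K 342 (pD K j2 i1) Df := by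
  have hX := (Rp.Xpow (K := K) (e := 1) (by calc 1 < 2 ^ 1 := by norm_num
                                              _ ≤ 2 ^ K := Nat.pow_le_pow_right (by norm_num) hK')).mono (show 1 ≤ 342 by norm_num)
  rw [pow_one] at hX
  have := hX.pmul hK (((h2.ppow hK 4).ppow hK 4).pmul hK (h3.ppow hK 8))
  rw [← pow_mul] at this
  exact this
def dat (f : ℕ → ℕ → ℕ → ℕ → Bool) : Bool :=
  frc (pJ 9 1 19) fun j1 => frc (pJ 9 2 19) fun j2 => frc (pinv 9 j1 9) fun i1 => frc (pinv 9 j2 9) fun i2 =>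
  frc (pE 9 j1 j2 i1 i2) fun e => frc (pD 9 j2 i1) fun d => f j1 j2 e d
lemma dat_spec {f : ℕ → ℕ → ℕ → ℕ → Bool} (h : dat f = true) : ∃ j1 j2 e d, Rp 9 342 j1 (J 1) ∧ Rp 9 342 j2 (J 2) ∧ Rp 9 342 e Ef ∧ Rp 9 342 d Df ∧ f j1 j2 e d = true := by
  rw [dat, frc_eq, frc_eq, frc_eq, frc_eq, frc_eq, frc_eq] at h
  have h1 := Rp.J 9 1 19 one_ne_zero (by norm_num) (by norm_num)
  have h2 := Rp.J 9 2 19 two_ne_zero (by norm_num) (by norm_num)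
  have h3 := h1.inv (by norm_num) (constJ 1 one_ne_zero) J1i
  have h4 := h2.inv (by norm_num) (constJ 2 two_ne_zero) J2i
  exact ⟨_, _, _, _, h1, h2, Rp.E (by norm_num) h1 h2 h3 h4, Rp.D (by norm_num) (by norm_num) h2 h3, h⟩
end

section
open PowerSeries

def allb (n : ℕ) (f : ℕ → Bool) : Bool := Nat.rec true (fun k r => f k && r) n
lemma allb_spec {n : ℕ} {f : ℕ → Bool} (h : allb n f = true) : ∀ k < n, f k = true := by
  induction n with
  | zero => intro k hk; omega
  | succ n ih =>
    have h' : (f n && allb n f) = true := h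
    rw [Bool.and_eq_true] at h'
    intro k hk
    rcases Nat.lt_succ_iff_lt_or_eq.1 hk with h1 | rfl
    · exact ih h'.2 k h1
    · exact h'.1

def chk (m s N Q cnt : ℕ) : Bool := allb cnt fun i => Nat.beq (Nat.mod (dg N (7 * i + s)) m) (Nat.mod (dg Q i) m)
lemma chk_spec {m s N Q cnt K K' : ℕ} {x y : PowerSeries ℤ} (h : chk m s N Q cnt = true) (hx : Rp K 342 N x) (hy : Rp K' 342 Q y)
    (hm : m ∣ 343) (h1 : 7 * cnt + s ≤ 2 ^ K + 6) (h2 : cnt ≤ 2 ^ K') (i : ℕ) (hi : i < cnt) : (m:ℤ) ∣ coeff i (Us s x) - coeff i y := by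
  have e := Nat.eq_of_beq_eq_true (allb_spec h i hi)
  have a := hx.dg (by norm_num) (i := 7 * i + s) (by omega)
  have b := hy.dg (by norm_num) (i := i) (by omega)
  have hm' : (m:ℤ) ∣ 343 := by exact_mod_cast hm
  rw [coeff_Us]
  have c : (m:ℤ) ∣ (dg N (7 * i + s) : ℤ) - dg Q i := (Nat.modEq_iff_dvd (n := m)).1 (Eq.symm e)
  have := dvd_add (dvd_sub c (hm'.trans a)) (hm'.trans b)
  have e2 : ((dg N (7 * i + s) : ℤ) - dg Q i) - (dg N (7 * i + s) - coeff (7 * i + s) x) + (dg Q i - coeff i y) = coeff (7 * i + s) x - coeff i y := by ring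
  rwa [e2] at this

lemma compare {k M : ℕ} {Y P Q G0 G : PowerSeries ℤ} (hP : P * Q = 1) (h0 : cg k Y (P * G0)) (hG0 : G0 ∈ MM M) (hG : G ∈ MM M)
    (hc : ∀ i < M / 2 + 1, (7:ℤ) ^ k ∣ coeff i Y - coeff i (P * G)) : cg k Y (P * G) := by
  refine h0.trans (cg.mull P (Sturm_cg hG0 hG fun i hi => ?_))
  have e : G0 - G = Q * (P * G0 - P * G) := by linear_combination (-G0 + G) * hP
  rw [← map_sub, e, coeff_mul]
  refine Finset.dvd_sum fun p hp => Dvd.dvd.mul_left ?_ _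
  have hp' := Finset.HasAntidiagonal.mem_antidiagonal.1 hp
  have a := hc p.2 (by omega)
  have b := cg_iff.1 h0 p.2
  have := dvd_sub a b
  rw [map_sub]
  have e2 : (coeff p.2 Y - coeff p.2 (P * G)) - (coeff p.2 Y - coeff p.2 (P * G0)) = coeff p.2 (P * G0) - coeff p.2 (P * G) := by ring
  rwa [e2] at this

def G3 (g c0 c1 c2 : ℕ) : PowerSeries ℤ := C (c0:ℤ) * Ef ^ g + C (c1:ℤ) * (Ef ^ (g - 2) * Df) + C (c2:ℤ) * (Ef ^ (g - 4) * Df ^ 2)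
lemma G3_mem {g c0 c1 c2 : ℕ} (h1 : c1 = 0 ∨ 2 ≤ g) (h2 : c2 = 0 ∨ 4 ≤ g) : G3 g c0 c1 c2 ∈ MM g := by
  have hC : ∀ (c : ℕ) (x : PowerSeries ℤ), x ∈ MM g → C (c:ℤ) * x ∈ MM g := fun c x hx => by
    have := Submodule.smul_mem (MM g) (c:ℤ) hx
    rwa [zsmul_eq_mul] at this
  refine add_mem (add_mem (hC _ _ ?_) ?_) ?_
  · simpa using mem_MM (a := g) (b := 0) (by omega)
  · rcases h1 with rfl | h1
    · simp
    · exact hC _ _ (by simpa using mem_MM (a := g - 2) (b := 1) (by omega))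
  · rcases h2 with rfl | h2
    · simp
    · exact hC _ _ (mem_MM (a := g - 4) (b := 2) (by omega))
def pG (K e d g c0 c1 c2 : ℕ) : ℕ := red K (c0 * ppow K e g + c1 * pmul K (ppow K e (g - 2)) d + c2 * pmul K (ppow K e (g - 4)) (ppow K d 2))
lemma Rp.G {K e d : ℕ} (hK : K ≤ 12) (he : Rp K 342 e Ef) (hd : Rp K 342 d Df) (g c0 c1 c2 : ℕ) (h0 : c0 ≤ 342) (h1 : c1 ≤ 342) (h2 : c2 ≤ 342) :
    Rp K 342 (pG K e d g c0 c1 c2) (G3 g c0 c1 c2) := by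
  refine (((((he.ppow hK g).cmul c0)).add (((he.ppow hK (g-2)).pmul hK hd).cmul c1)).add (((he.ppow hK (g-4)).pmul hK (hd.ppow hK 2)).cmul c2)).red ?_
  calc c0 * 342 + c1 * 342 + c2 * 342 ≤ 342 * 342 + 342 * 342 + 342 * 342 := by gcongr
    _ < _ := by norm_num

/-- one test: code c = g + 7 c0 + 49 c1 + 343 c2 -/
def tst (s w o K5 P e d N M c : ℕ) : Bool :=
  frc (c % 7) fun g => frc (c / 7 % 7) fun c0 => frc (c / 49 % 7) fun c1 => frc (c / 343 % 7) fun c2 =>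
  ((Nat.beq c1 0 || Nat.ble 2 g) && (Nat.beq c2 0 || Nat.ble 4 g)) &&
  ((Nat.beq c0 0 && Nat.beq c1 0 && Nat.beq c2 0) || (Nat.ble (7 * g) M && Nat.beq (g % 3) ((w + o) % 3))) &&
  frc (pmul K5 P (pG K5 e d g c0 c1 c2)) fun Q => chk 7 s N Q (M / 2 + 1)

lemma tst_spec {s w o K5 P e d N M c K : ℕ} {x p q G0 : PowerSeries ℤ} (h : tst s w o K5 P e d N M c = true) (hK5 : K5 ≤ 12)
    (hP : Rp K5 342 P p) (he : Rp K5 342 e Ef) (hd : Rp K5 342 d Df) (hN : Rp K 342 N x) (hpq : p * q = 1)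
    (hM : (w + o) % 3 = M % 3) (h1 : 7 * (M / 2 + 1) + s ≤ 2 ^ K + 6) (h2 : M / 2 + 1 ≤ 2 ^ K5) 
    (hG0 : G0 ∈ MM M) (hcg : cg 1 (Us s x) (p * G0)) :
    (∃ g, 7 * g ≤ M ∧ g % 3 = M % 3 ∧ ∃ G ∈ MM g, cg 1 (Us s x) (p * G)) ∨ cg 1 (Us s x) 0 := by
  rw [tst, frc_eq, frc_eq, frc_eq, frc_eq, frc_eq] at h
  have b0 : c / 7 % 7 ≤ 342 := by omega
  have b1 : c / 49 % 7 ≤ 342 := by omega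
  have b2 : c / 343 % 7 ≤ 342 := by omega
  generalize c % 7 = g at *
  generalize c / 7 % 7 = c0 at *
  generalize c / 49 % 7 = c1 at *
  generalize c / 343 % 7 = c2 at *
  simp only [Bool.and_eq_true, Bool.or_eq_true, Nat.beq_eq, Nat.ble_eq] at h
  obtain ⟨⟨⟨ha, hb⟩, hc⟩, hh⟩ := h
  have hmem := G3_mem (c0 := c0) ha hb
  have hQ := hP.pmul hK5 (Rp.G hK5 he hd g c0 c1 c2 b0 b1 b2)
  have hchk := chk_spec hh hN hQ (by norm_num) h1 h2
  rcases hc with hc | hc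
  · right
    obtain ⟨⟨rfl, rfl⟩, rfl⟩ := hc
    have : cg 1 (Us s x) (p * 0) := compare hpq hcg hG0 (zero_mem _) fun i hi => by
      have := hchk i hi
      simpa [G3] using this
    simpa using this
  · left
    refine ⟨g, hc.1, by omega, _, hmem, ?_⟩
    obtain ⟨j, hj⟩ : ∃ j, M = g + j * 3 := ⟨(M - g) / 3, by omega⟩
    have hA : cg 1 (p * (G3 g c0 c1 c2 * e6 ^ j)) (p * G3 g c0 c1 c2) := by
      have := cg.mull (p * G3 g c0 c1 c2) (e6_cg.pow j)
      rwa [one_pow, mul_one, mul_assoc] at this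
    refine cg.trans (compare hpq hcg hG0 (hj ▸ MM_mul hmem (MM_pow e6_mem j)) fun i hi => ?_) hA
    have a := hchk i hi
    have b := cg_iff.1 hA i
    rw [pow_one] at *
    have := dvd_sub a b
    have e2 : ∀ x y z : ℤ, (x - y) - (z - y) = x - z := fun x y z => by ring
    rw [e2] at this
    exact this

def tabO : ℕ := 3630313321811779002608995867572241396465303430614383118880282855293045180247786363990871364918456579024361713361506165581237461625198969770599838147525621044037416
def tabE : ℕ := 96222949067479946336695340453387058897426865060360338430431816253633626512145151541445571426954366749443429496257789658320084881880826426327818616339882134757963247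

def check1 (s o M0 T : ℕ) (p p5 e d e5 d5 : ℕ) : Bool :=
  allb 7 fun b => frc (pmul 8 p (ppow 8 d b)) fun pb => allb 7 fun a => frc (pmul 8 pb (ppow 8 e a)) fun N =>
    tst s (a + 2 * b) o 5 p5 e5 d5 N (a + 2 * b + M0) (T / 2401 ^ (7 * b + a) % 2401)
def check1O : Bool := dat fun j1 j2 e d =>
  frc (j1 % bt (2 ^ 8)) fun j1 => frc (j2 % bt (2 ^ 8)) fun j2 => frc (e % bt (2 ^ 8)) fun e => frc (d % bt (2 ^ 8)) fun d =>
  frc (e % bt (2 ^ 5)) fun e5 => frc (d % bt (2 ^ 5)) fun d5 => frc (ppow 8 j2 3) fun po => frc (pmul 8 (ppow 8 j1 8) (ppow 8 j2 5)) fun pe =>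
  check1 5 2 2 tabO po (pe % bt (2 ^ 5)) e d e5 d5 && check1 1 1 22 tabE pe (po % bt (2 ^ 5)) e d e5 d5
set_option maxRecDepth 100000 in
lemma check1_true : check1O = true := by decide +kernel
end

section
open PowerSeries

lemma Po_inv : J 2 ^ 3 * Ji 2 ^ 3 = 1 := by rw [← mul_pow, J2i, one_pow]
lemma Pe_inv : (J 1 ^ 8 * J 2 ^ 5) * (Ji 1 ^ 8 * Ji 2 ^ 5) = 1 := by
  rw [mul_mul_mul_comm, ← mul_pow, ← mul_pow, J1i, J2i, one_pow, one_pow, one_mul]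

lemma check1_both : (∀ a < 7, ∀ b < 7, (∃ g, 7 * g ≤ a + 2 * b + 2 ∧ g % 3 = (a + 2 * b + 2) % 3 ∧ ∃ G ∈ MM g,
      cg 1 (Us 5 (J 2 ^ 3 * (Ef ^ a * Df ^ b))) (J 1 ^ 8 * J 2 ^ 5 * G)) ∨ cg 1 (Us 5 (J 2 ^ 3 * (Ef ^ a * Df ^ b))) 0) ∧
    (∀ a < 7, ∀ b < 7, (∃ g, 7 * g ≤ a + 2 * b + 22 ∧ g % 3 = (a + 2 * b + 22) % 3 ∧ ∃ G ∈ MM g,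
      cg 1 (Us 1 (J 1 ^ 8 * J 2 ^ 5 * (Ef ^ a * Df ^ b))) (J 2 ^ 3 * G)) ∨ cg 1 (Us 1 (J 1 ^ 8 * J 2 ^ 5 * (Ef ^ a * Df ^ b))) 0) := by
  obtain ⟨j1, j2, e, d, h1, h2, he, hd, h⟩ := dat_spec check1_true
  rw [frc_eq, frc_eq, frc_eq, frc_eq, frc_eq, frc_eq, frc_eq, frc_eq, Bool.and_eq_true] at h
  have h1' := h1.trunc (K' := 8) (by norm_num) (by norm_num)
  have h2' := h2.trunc (K' := 8) (by norm_num) (by norm_num)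
  have he' := he.trunc (K' := 8) (by norm_num) (by norm_num)
  have hd' := hd.trunc (K' := 8) (by norm_num) (by norm_num)
  have he5 := he'.trunc (K' := 5) (by norm_num) (by norm_num)
  have hd5 := hd'.trunc (K' := 5) (by norm_num) (by norm_num)
  have ho := h2'.ppow (by norm_num) 3
  have hE := (h1'.ppow (by norm_num) 8).pmul (by norm_num) (h2'.ppow (by norm_num) 5)
  have ho5 := ho.trunc (K' := 5) (by norm_num) (by norm_num)
  have hE5 := hE.trunc (K' := 5) (by norm_num) (by norm_num)
  obtain ⟨hA, hB⟩ := h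
  refine ⟨fun a ha b hb => ?_, fun a ha b hb => ?_⟩
  · have q := allb_spec hA b hb
    rw [frc_eq] at q
    have q := allb_spec q a ha
    rw [frc_eq] at q
    have hN := (ho.pmul (by norm_num) (hd'.ppow (by norm_num) b)).pmul (by norm_num) (he'.ppow (by norm_num) a)
    rw [show J 2 ^ 3 * Df ^ b * Ef ^ a = J 2 ^ 3 * (Ef ^ a * Df ^ b) by ring] at hN
    obtain ⟨G0, hG0, hc⟩ := GENo (l := 0) (e1 := 0) (e2 := 3) (a := 2) (b := 1) (a' := 1) (b' := 1) (m := a + 2 * b) (m' := a + 2 * b + 2)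
      (mem_MM rfl) (by norm_num) (by norm_num) (by norm_num) (by norm_num) (by norm_num) (by norm_num) (by omega) (by omega)
    exact tst_spec q (by norm_num) hE5 he5 hd5 hN Pe_inv (by omega) (by omega) (by omega) hG0 hc
  · have q := allb_spec hB b hb
    rw [frc_eq] at q
    have q := allb_spec q a ha
    rw [frc_eq] at q
    have hN := (hE.pmul (by norm_num) (hd'.ppow (by norm_num) b)).pmul (by norm_num) (he'.ppow (by norm_num) a)
    rw [show J 1 ^ 8 * J 2 ^ 5 * Df ^ b * Ef ^ a = J 1 ^ 8 * J 2 ^ 5 * (Ef ^ a * Df ^ b) by ring] at hN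
    obtain ⟨G0, hG0, hc⟩ := GENe (l := 0) (e1 := 8) (e2 := 5) (a := 6) (b := 7) (a' := 1) (b' := 1) (m := a + 2 * b) (m' := a + 2 * b + 22)
      (mem_MM rfl) (by norm_num) (by norm_num) (by norm_num) (by norm_num) (by norm_num) (by norm_num) (by omega) (by omega)
    exact tst_spec q (by norm_num) ho5 he5 hd5 hN Po_inv (by omega) (by omega) (by omega) hG0 hc

/-- sharp mod 7 bounds on monomials -/
lemma sharp_mono {P P' : PowerSeries ℤ} {s M0 : ℕ} (hs : s ≤ 6)
    (H : ∀ a < 7, ∀ b < 7, (∃ g, 7 * g ≤ a + 2 * b + M0 ∧ g % 3 = (a + 2 * b + M0) % 3 ∧ ∃ G ∈ MM g,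
      cg 1 (Us s (P * (Ef ^ a * Df ^ b))) (P' * G)) ∨ cg 1 (Us s (P * (Ef ^ a * Df ^ b))) 0) {m m' : ℕ}
    (hm : ∀ g, 7 * g ≤ m + M0 → g % 3 = (m + M0) % 3 → ∃ j, m' = g + j * 3) {G : PowerSeries ℤ} (hG : G ∈ MM m) :
    ∃ G' ∈ MM m', cg 1 (Us s (P * G)) (P' * G') := by
  induction hG using Submodule.span_induction with
  | mem x h =>
    obtain ⟨a, b, hab, rfl⟩ := h
    have e1 : cg 1 (P * (Ef ^ a * Df ^ b)) (P * (Ef ^ (a % 7) * Df ^ (b % 7)) * ex7 (Ef ^ (a / 7) * Df ^ (b / 7))) := by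
      have q := cg.mull (P * (Ef ^ (a % 7) * Df ^ (b % 7))) (frob (Ef ^ (a / 7) * Df ^ (b / 7)))
      refine cg.trans ?_ q
      have : P * (Ef ^ a * Df ^ b) = P * (Ef ^ (a % 7) * Df ^ (b % 7)) * (Ef ^ (a / 7) * Df ^ (b / 7)) ^ 7 := by
        conv_lhs => rw [← Nat.mod_add_div a 7, ← Nat.mod_add_div b 7]
        ring
      rw [this]; exact cg.refl _
    have e2 := e1.Us s
    rw [Us_mul_ex s hs] at e2
    rcases H (a % 7) (Nat.mod_lt _ (by norm_num)) (b % 7) (Nat.mod_lt _ (by norm_num)) with ⟨g, hg, hg', G, hG, hc⟩ | hc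
    · obtain ⟨j, hj⟩ := hm (g + (a / 7 + 2 * (b / 7))) (by omega) (by omega)
      refine ⟨G * (Ef ^ (a / 7) * Df ^ (b / 7)) * e6 ^ j, hj ▸ MM_mul (MM_mul hG (mem_MM rfl)) (MM_pow e6_mem j), ?_⟩
      refine e2.trans ((hc.mulr _).trans ?_)
      have := cg.mull (P' * (G * (Ef ^ (a / 7) * Df ^ (b / 7)))) (e6_cg.pow j)
      rw [one_pow, mul_one] at this
      have q := this.symm
      simpa only [mul_assoc] using q
    · refine ⟨0, zero_mem _, e2.trans ?_⟩
      have := hc.mulr (Ef ^ (a / 7) * Df ^ (b / 7))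
      simpa using this
  | zero => exact ⟨0, zero_mem _, by simpa using cg.refl _⟩
  | add x y _ _ hx hy =>
    obtain ⟨x', hx', cx⟩ := hx
    obtain ⟨y', hy', cy⟩ := hy
    exact ⟨x' + y', add_mem hx' hy', by rw [mul_add, map_add, mul_add]; exact cx.add cy⟩
  | smul c x _ hx =>
    obtain ⟨x', hx', cx⟩ := hx
    refine ⟨c • x', Submodule.smul_mem _ _ hx', ?_⟩
    rw [mul_smul_comm, mul_smul_comm, map_zsmul, zsmul_eq_mul, zsmul_eq_mul]
    exact cx.mull _

lemma sharp_o {d d' : ℕ} (hd : (d + 1) / 7 ≤ d') {G : PowerSeries ℤ} (hG : G ∈ MM (1 + 3 * d)) :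
    ∃ G' ∈ MM (3 * d'), cg 1 (Us 5 (J 2 ^ 3 * G)) (J 1 ^ 8 * J 2 ^ 5 * G') :=
  sharp_mono (by norm_num) check1_both.1 (fun g h1 h2 => ⟨d' - g / 3, by omega⟩) hG
lemma sharp_e {d d' : ℕ} (hd : (d + 5) / 7 ≤ d') {G : PowerSeries ℤ} (hG : G ∈ MM (3 * d)) :
    ∃ G' ∈ MM (1 + 3 * d'), cg 1 (Us 1 (J 1 ^ 8 * J 2 ^ 5 * G)) (J 2 ^ 3 * G') :=
  sharp_mono (by norm_num) check1_both.2 (fun g h1 h2 => ⟨d' - g / 3, by omega⟩) hG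
end

section
open PowerSeries

def tst2 (P e d N c0 c1 : ℕ) : Bool := frc (pmul 7 P (pG 7 e d 3 c0 c1 0)) fun Q => chk 49 5 N Q 71
lemma Cmem {g : ℕ} (c : ℤ) (x : PowerSeries ℤ) (hx : x ∈ MM g) : C c * x ∈ MM g := by
  have := Submodule.smul_mem (MM g) c hx
  rwa [zsmul_eq_mul, ← eq_intCast (C : ℤ →+* PowerSeries ℤ)] at this
def pA (K e d : ℕ) : ℕ := red K (ppow K e 3 + 110 * pmul K e d)
lemma Rp.A {K e d : ℕ} (hK : K ≤ 12) (he : Rp K 342 e Ef) (hd : Rp K 342 d Df) : Rp K 342 (pA K e d) e6 := by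
  refine Rp.red (b := 342 + 110 * 342) (((he.ppow hK 3).add ((he.pmul hK hd).cmul 110)).congr fun i _ => ?_) (by norm_num)
  rw [← map_sub, e6_eq]
  have : Ef ^ 3 + C ((110:ℕ):ℤ) * (Ef * Df) - (Ef ^ 3 - 576 * (Ef * Df)) = C 343 * (2 * (Ef * Df)) := by
    rw [show C ((110:ℕ):ℤ) = (110 : PowerSeries ℤ) from rfl, show (C 343 : PowerSeries ℤ) = 343 from rfl]; ring
  rw [this, coeff_C_mul]; exact dvd_mul_right _ _

def check2 : Bool := dat fun j1 j2 e d =>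
  frc (j1 % bt (2 ^ 7)) fun j17 => frc (j2 % bt (2 ^ 7)) fun j27 => frc (e % bt (2 ^ 7)) fun e7 => frc (d % bt (2 ^ 7)) fun d7 =>
  frc (pmul 7 (pmul 7 (ppow 7 j17 8) (ppow 7 j27 5)) (ppow 7 (pA 7 e7 d7) 4)) fun P => frc (ppow 9 j2 3) fun o =>
  (tst2 P e7 d7 (pmul 9 o (pmul 9 (ppow 9 e 7) (ppow 9 d 0))) 42 35 && tst2 P e7 d7 (pmul 9 o (pmul 9 (ppow 9 e 5) (ppow 9 d 1))) 28 35) &&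
  (tst2 P e7 d7 (pmul 9 o (pmul 9 (ppow 9 e 3) (ppow 9 d 2))) 48 30 && tst2 P e7 d7 (pmul 9 o (pmul 9 (ppow 9 e 1) (ppow 9 d 3))) 40 11)
set_option maxRecDepth 100000 in
lemma check2_true : check2 = true := by decide +kernel

lemma cg_trunc {n : ℕ} {k : ℕ} {x y z : PowerSeries ℤ} (h : ∀ i < n, (7:ℤ) ^ k ∣ coeff i x - coeff i y) :
    ∀ i < n, (7:ℤ) ^ k ∣ coeff i (z * x) - coeff i (z * y) := by
  intro i hi
  rw [← map_sub, ← mul_sub, coeff_mul]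
  refine Finset.dvd_sum fun p hp => Dvd.dvd.mul_left ?_ _
  have hp' := Finset.HasAntidiagonal.mem_antidiagonal.1 hp
  rw [map_sub]; exact h _ (by omega)

lemma tst2_spec {P e d N c0 c1 : ℕ} {a b : ℕ} (hab : a + 2 * b = 7) (h : tst2 P e d N c0 c1 = true) 
    (hP : Rp 7 342 P (J 1 ^ 8 * J 2 ^ 5 * e6 ^ 4)) (he : Rp 7 342 e Ef) (hd : Rp 7 342 d Df)
    (hN : Rp 9 342 N (J 2 ^ 3 * (Ef ^ a * Df ^ b))) (h0 : c0 ≤ 342) (h1 : c1 ≤ 342) :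
    ∃ G ∈ MM 3, cg 2 (Us 5 (J 2 ^ 3 * (Ef ^ a * Df ^ b))) (J 1 ^ 8 * J 2 ^ 5 * (G * e6 ^ 4)) := by
  obtain ⟨G0, hG0, hc⟩ := GENo (l := 1) (e1 := 56) (e2 := 35) (a := 37) (b := 43) (a' := 6) (b' := 7) (m := 7) (m' := 141)
      (mem_MM hab) (by norm_num) (by norm_num) (by norm_num) (by norm_num) (by norm_num) (by norm_num) (by omega) (by omega)
  rw [tst2, frc_eq] at h
  have hmem := G3_mem (c0 := c0) (c1 := c1) (c2 := 0) (g := 3) (by omega) (by omega)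
  have hQ := hP.pmul (by norm_num) (Rp.G (by norm_num) he hd 3 c0 c1 0 h0 h1 (by norm_num))
  have hchk := chk_spec h hN hQ (by norm_num) (by norm_num) (by norm_num)
  rw [mul_assoc, mul_comm (e6 ^ 4), show ((49:ℕ):ℤ) = 7 ^ 2 by norm_num] at hchk
  generalize G3 3 c0 c1 0 = G at *
  refine ⟨G, hmem, ?_⟩
  have hA : cg 2 (J 1 ^ 8 * J 2 ^ 5 * (G * e6 ^ 46)) (J 1 ^ 8 * J 2 ^ 5 * (G * e6 ^ 4)) := by
    have := cg.mull (J 1 ^ 8 * J 2 ^ 5 * (G * e6 ^ 4)) (e6_cg.lift' (l := 1) (e := 42) (by norm_num))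
    rw [one_pow, mul_one] at this
    have e : J 1 ^ 8 * J 2 ^ 5 * (G * e6 ^ 46) = J 1 ^ 8 * J 2 ^ 5 * (G * e6 ^ 4) * e6 ^ 42 := by ring
    rw [e]; exact this
  have hmm : G * e6 ^ 46 ∈ MM 141 := by
    have := MM_mul hmem (MM_pow e6_mem 46)
    rwa [show 3 + 46 * 3 = 141 by norm_num] at this
  refine cg.trans (compare Pe_inv hc hG0 hmm fun i hi => ?_) hA
  have a := hchk i hi
  have b := cg_iff.1 hA i
  have := dvd_sub a b
  have e2 : ∀ x y z : ℤ, (x - y) - (z - y) = x - z := fun x y z => by ring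
  rw [e2] at this
  exact this

lemma check2_spec {G : PowerSeries ℤ} (hG : G ∈ MM 7) :
    ∃ G' ∈ MM 3, cg 2 (Us 5 (J 2 ^ 3 * G)) (J 1 ^ 8 * J 2 ^ 5 * (G' * e6 ^ 4)) := by
  obtain ⟨j1, j2, e, d, h1, h2, he, hd, h⟩ := dat_spec check2_true
  rw [frc_eq, frc_eq, frc_eq, frc_eq, frc_eq, frc_eq, Bool.and_eq_true, Bool.and_eq_true, Bool.and_eq_true] at h
  have h1' := h1.trunc (K' := 7) (by norm_num) (by norm_num)
  have h2' := h2.trunc (K' := 7) (by norm_num) (by norm_num)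
  have he' := he.trunc (K' := 7) (by norm_num) (by norm_num)
  have hd' := hd.trunc (K' := 7) (by norm_num) (by norm_num)
  have ho := h2.ppow (by norm_num) 3
  have hE := ((h1'.ppow (by norm_num) 8).pmul (by norm_num) (h2'.ppow (by norm_num) 5)).pmul (by norm_num) ((Rp.A (by norm_num) he' hd').ppow (by norm_num) 4)
  have hN : ∀ a b, Rp 9 342 _ (J 2 ^ 3 * (Ef ^ a * Df ^ b)) := fun a b => 
    (ho.pmul (by norm_num) ((he.ppow (by norm_num) a).pmul (by norm_num) (hd.ppow (by norm_num) b)))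
  obtain ⟨⟨q0, q1⟩, q2, q3⟩ := h
  induction hG using Submodule.span_induction with
  | mem x h =>
    obtain ⟨a, b, hab, rfl⟩ := h
    have : (a = 7 ∧ b = 0) ∨ (a = 5 ∧ b = 1) ∨ (a = 3 ∧ b = 2) ∨ (a = 1 ∧ b = 3) := by omega
    rcases this with ⟨rfl, rfl⟩ | ⟨rfl, rfl⟩ | ⟨rfl, rfl⟩ | ⟨rfl, rfl⟩
    · exact tst2_spec hab q0 hE he' hd' (hN _ _) (by norm_num) (by norm_num)
    · exact tst2_spec hab q1 hE he' hd' (hN _ _) (by norm_num) (by norm_num)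
    · exact tst2_spec hab q2 hE he' hd' (hN _ _) (by norm_num) (by norm_num)
    · exact tst2_spec hab q3 hE he' hd' (hN _ _) (by norm_num) (by norm_num)
  | zero => exact ⟨0, zero_mem _, by simpa using cg.refl _⟩
  | add x y _ _ hx hy =>
    obtain ⟨x', hx', cx⟩ := hx
    obtain ⟨y', hy', cy⟩ := hy
    exact ⟨x' + y', add_mem hx' hy', by rw [mul_add, map_add, add_mul, mul_add]; exact cx.add cy⟩
  | smul c x _ hx =>
    obtain ⟨x', hx', cx⟩ := hx
    refine ⟨c • x', Submodule.smul_mem _ _ hx', ?_⟩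
    rw [mul_smul_comm, smul_mul_assoc, mul_smul_comm, map_zsmul, zsmul_eq_mul, zsmul_eq_mul]
    exact cx.mull _

def Gi : PowerSeries ℤ := C ((21:ℕ):ℤ) * Ef ^ 7 + C ((42:ℕ):ℤ) * (Ef ^ 5 * Df ^ 1) + C ((3:ℕ):ℤ) * (Ef ^ 3 * Df ^ 2) + C ((15:ℕ):ℤ) * (Ef ^ 1 * Df ^ 3)
lemma Gi_mem : Gi ∈ MM 7 := by
  refine add_mem (add_mem (add_mem (Cmem _ _ ?_) (Cmem _ _ (mem_MM rfl))) (Cmem _ _ (mem_MM rfl))) (Cmem _ _ (mem_MM rfl))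
  simpa using mem_MM (a := 7) (b := 0) rfl
def pGi (e d : ℕ) : ℕ := red 9 (7 * red 9 (21 * ppow 9 e 7 + 42 * pmul 9 (ppow 9 e 5) (ppow 9 d 1) + 3 * pmul 9 (ppow 9 e 3) (ppow 9 d 2) + 15 * pmul 9 (ppow 9 e 1) (ppow 9 d 3)))
def check3 : Bool := dat fun j1 j2 e d =>
  frc (pmul 9 (pmul 9 (ppow 9 (ppow 9 j1 7) 7) (ppow 9 j2 3)) (pGi e d)) fun Q =>
  frc (pJ 12 1 53) fun j1 => frc (ppow 12 (pJ 12 2 53) 5) fun j2 =>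
  frc (pmul 12 (pmul 12 (ppow 12 (ppow 12 (ppow 12 (ppow 12 j1 5) 4) 4) 4) (ppow 12 j1 7)) j2) fun N => chk 343 2 N Q 477
set_option maxRecDepth 100000 in
lemma check3_true : check3 = true := by decide +kernel

lemma check3_aux : ∀ i < 477, (7:ℤ) ^ 3 ∣ coeff i (Us 2 (J 1 ^ 327 * J 2 ^ 5)) - coeff i (J 1 ^ 49 * (J 2 ^ 3 * (7 * Gi))) := by
  obtain ⟨j1, j2, e, d, h1, h2, he, hd, h⟩ := dat_spec check3_true
  rw [frc_eq, frc_eq, frc_eq, frc_eq] at h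
  have hG := (((((((he.ppow (by norm_num) 7).cmul 21).add (((he.ppow (by norm_num) 5).pmul (by norm_num) (hd.ppow (by norm_num) 1)).cmul 42)).add
    (((he.ppow (by norm_num) 3).pmul (by norm_num) (hd.ppow (by norm_num) 2)).cmul 3)).add
    (((he.ppow (by norm_num) 1).pmul (by norm_num) (hd.ppow (by norm_num) 3)).cmul 15)).red (by norm_num)).cmul 7).red (by norm_num)
  have hQ := ((((h1.ppow (by norm_num) 7).ppow (by norm_num) 7)).pmul (by norm_num) (h2.ppow (by norm_num) 3)).pmul (by norm_num) hG
  have a1 := Rp.J 12 1 53 one_ne_zero (by norm_num) (by norm_num)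
  have a2 := (Rp.J 12 2 53 two_ne_zero (by norm_num) (by norm_num)).ppow (by norm_num) 5
  have hN := ((((((a1.ppow (by norm_num) 5).ppow (by norm_num) 4).ppow (by norm_num) 4).ppow (by norm_num) 4).pmul (by norm_num) (a1.ppow (by norm_num) 7))).pmul (by norm_num) a2
  have := chk_spec h hN hQ (by norm_num) (by norm_num) (by norm_num)
  have e1 : (((J 1 ^ 5) ^ 4) ^ 4) ^ 4 * J 1 ^ 7 * J 2 ^ 5 = J 1 ^ 327 * J 2 ^ 5 := by ring
  rw [e1, ← Gi, show (C ((7:ℕ):ℤ) : PowerSeries ℤ) = 7 from rfl] at this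
  have e2 : (J 1 ^ 7) ^ 7 * J 2 ^ 3 * (7 * Gi) = J 1 ^ 49 * (J 2 ^ 3 * (7 * Gi)) := by ring
  rw [e2] at this
  exact_mod_cast this

lemma check3_spec : cg 3 (Us 2 (Ji 1 ^ 16 * J 2 ^ 5)) (J 2 ^ 3 * (7 * Gi)) := by
  obtain ⟨G0, hG0, hc⟩ := GENi (l := 2) (e1 := 8 * 49) (e2 := 5 * 49) (a := 257) (b := 299) (a' := 37) (b' := 43) (m' := 952)
      (by norm_num) (by norm_num) (by norm_num) (by norm_num) (by norm_num) (by norm_num) (by norm_num) (by omega) (by omega)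
  have h1 : cg 3 (Us 2 (Ji 1 ^ 16 * J 2 ^ 5)) (Ji 1 ^ 49 * Us 2 (J 1 ^ 327 * J 2 ^ 5)) := by
    have h := (frob (Ji 1)).lift 2
    rw [show (7:ℕ) ^ 2 = 49 from rfl, ← pow_mul, ← map_pow] at h
    have h := (cg.mull (J 1 ^ 327 * J 2 ^ 5) h).Us 2
    rw [Us_mul_ex _ (by norm_num)] at h
    have e : J 1 ^ 327 * J 2 ^ 5 * Ji 1 ^ (7 * 49) = Ji 1 ^ 16 * J 2 ^ 5 := by
      have : J 1 ^ 327 * Ji 1 ^ 327 = 1 := by rw [← mul_pow, J1i, one_pow]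
      calc _ = (J 1 ^ 327 * Ji 1 ^ 327) * (Ji 1 ^ 16 * J 2 ^ 5) := by ring
        _ = _ := by rw [this, one_mul]
    rw [e, mul_comm (Us 2 _)] at h
    exact h
  have hA : cg 3 (J 2 ^ 3 * (7 * Gi * e6 ^ 315)) (J 2 ^ 3 * (7 * Gi)) := by
    have := (e6_cg.lift' (l := 1) (e := 315) (by norm_num)).seven (i := 1)
    have := cg.mull (J 2 ^ 3 * Gi) this
    rw [one_pow] at this
    have e : J 2 ^ 3 * (7 * Gi * e6 ^ 315) = J 2 ^ 3 * Gi * (7 ^ 1 * e6 ^ 315) := by ring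
    have e' : J 2 ^ 3 * (7 * Gi) = J 2 ^ 3 * Gi * (7 ^ 1 * 1) := by ring
    rw [e, e']; exact this
  have hm : 7 * Gi ∈ MM 7 := Cmem 7 _ Gi_mem
  have hmm : 7 * Gi * e6 ^ 315 ∈ MM 952 := by
    have := MM_mul hm (MM_pow e6_mem 315)
    rwa [show 7 + 315 * 3 = 952 by norm_num] at this
  refine cg.trans (compare Po_inv hc hG0 hmm fun i hi => ?_) hA
  have b := cg_iff.1 hA i
  have c := cg_iff.1 h1 i
  have a := cg_trunc (z := Ji 1 ^ 49) check3_aux i hi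
  have e3 : Ji 1 ^ 49 * (J 1 ^ 49 * (J 2 ^ 3 * (7 * Gi))) = J 2 ^ 3 * (7 * Gi) := by
    have : Ji 1 ^ 49 * J 1 ^ 49 = 1 := by rw [← mul_pow, mul_comm, J1i, one_pow]
    rw [← mul_assoc, this, one_mul]
  rw [e3] at a
  have := dvd_sub (dvd_add c a) b
  have e2 : ∀ x y z w : ℤ, (x - y) + (y - w) - (z - w) = x - z := fun x y z w => by ring
  rw [e2] at this
  exact this
end

section
open PowerSeries

def FS (P Q : PowerSeries ℤ) (m : ℕ) : Submodule ℤ (PowerSeries ℤ) where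
  carrier := {x | ∃ G ∈ MM m, x * Q = P * G}
  zero_mem' := ⟨0, zero_mem _, by simp⟩
  add_mem' := by
    rintro x y ⟨G, hG, h⟩ ⟨G', hG', h'⟩
    exact ⟨G + G', add_mem hG hG', by rw [add_mul, mul_add, h, h']⟩
  smul_mem' := by
    rintro c x ⟨G, hG, h⟩
    exact ⟨c • G, Submodule.smul_mem _ _ hG, by rw [smul_mul_assoc, mul_smul_comm, h]⟩
lemma FS_cg {P Q Qi G : PowerSeries ℤ} {m k : ℕ} (hG : G ∈ MM m) (hQ : Q * Qi = 1) (hc : cg k Q 1) : ∃ y ∈ FS P Q m, cg k (P * G) y := by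
  refine ⟨P * G * Qi, ⟨G, hG, by rw [mul_assoc, mul_comm Qi, hQ, mul_one]⟩, ?_⟩
  have := cg.mull (P * G * Qi) hc
  rwa [mul_assoc, mul_comm Qi, hQ, mul_one, mul_one] at this
lemma FS_sat {P Pi Q z : PowerSeries ℤ} {m k : ℕ} (hP : P * Pi = 1) (h : 7 ^ k * z ∈ FS P Q m) : z ∈ FS P Q m := by
  obtain ⟨G, hG, h⟩ := h
  refine ⟨Pi * (z * Q), MM_sat (k := k) hG ?_, ?_⟩
  · linear_combination (-G) * hP - Pi * h
  · linear_combination (-(z * Q)) * hP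
def Fo (d : ℕ) : Submodule ℤ (PowerSeries ℤ) := FS (J 2 ^ 3) (Bb ^ (2 * d + 3)) (1 + 3 * d)
def Fe (d : ℕ) : Submodule ℤ (PowerSeries ℤ) := FS (J 1 ^ 8 * J 2 ^ 5) (e6 ^ (d + 2)) (3 * d)
lemma Fo_mono {d d' : ℕ} (h : d ≤ d') : Fo d ≤ Fo d' := by
  obtain ⟨j, rfl⟩ := Nat.exists_eq_add_of_le h
  rintro x ⟨G, hG, hx⟩
  refine ⟨G * e6 ^ j, ?_, ?_⟩
  · have := MM_mul hG (MM_pow e6_mem j)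
    rwa [show 1 + 3 * d + j * 3 = 1 + 3 * (d + j) by ring] at this
  · rw [← mul_assoc, ← hx, ← Bb_sq]; ring
lemma Fe_mono {d d' : ℕ} (h : d ≤ d') : Fe d ≤ Fe d' := by
  obtain ⟨j, rfl⟩ := Nat.exists_eq_add_of_le h
  rintro x ⟨G, hG, hx⟩
  refine ⟨G * e6 ^ j, ?_, ?_⟩
  · have := MM_mul hG (MM_pow e6_mem j)
    rwa [show 3 * d + j * 3 = 3 * (d + j) by ring] at this
  · rw [← mul_assoc, ← hx]; ring
lemma Fo_sat {d k : ℕ} {z : PowerSeries ℤ} (h : 7 ^ k * z ∈ Fo d) : z ∈ Fo d := FS_sat Po_inv h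
lemma Fe_sat {d k : ℕ} {z : PowerSeries ℤ} (h : 7 ^ k * z ∈ Fe d) : z ∈ Fe d := FS_sat Pe_inv h
lemma Bpi (n : ℕ) : Bb ^ n * Bi ^ n = 1 := by rw [← mul_pow, B_Bi, one_pow]
lemma Api (n : ℕ) : e6 ^ n * Ai ^ n = 1 := by rw [← mul_pow, A_Ai, one_pow]

lemma sharpFo {d d' : ℕ} (hd : (d + 1) / 7 ≤ d') {x : PowerSeries ℤ} (hx : x ∈ Fo d) : ∃ y ∈ Fe d', cg 1 (Us 5 x) y := by
  obtain ⟨G, hG, h⟩ := hx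
  obtain ⟨G', hG', hc⟩ := sharp_o hd hG
  have h1 := cg.mull x (Bb_cg.pow (2 * d + 3))
  rw [h, one_pow, mul_one] at h1
  obtain ⟨y, hy, hyc⟩ := FS_cg (P := J 1 ^ 8 * J 2 ^ 5) (k := 1) hG' (Api (d' + 2)) (by simpa using e6_cg.pow (d' + 2))
  exact ⟨y, hy, ((h1.symm.Us 5).trans hc).trans hyc⟩
lemma sharpFe {d d' : ℕ} (hd : (d + 5) / 7 ≤ d') {x : PowerSeries ℤ} (hx : x ∈ Fe d) : ∃ y ∈ Fo d', cg 1 (Us 1 x) y := by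
  obtain ⟨G, hG, h⟩ := hx
  obtain ⟨G', hG', hc⟩ := sharp_e hd hG
  have h1 := cg.mull x (e6_cg.pow (d + 2))
  rw [h, one_pow, mul_one] at h1
  obtain ⟨y, hy, hyc⟩ := FS_cg (P := J 2 ^ 3) (k := 1) hG' (Bpi (2 * d' + 3)) (by simpa using Bb_cg.pow (2 * d' + 3))
  exact ⟨y, hy, ((h1.symm.Us 1).trans hc).trans hyc⟩
lemma check2F {x : PowerSeries ℤ} (hx : x ∈ Fo 2) : ∃ y ∈ Fe 1, cg 2 (Us 5 x) y := by
  obtain ⟨G, hG, h⟩ := hx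
  obtain ⟨G', hG', hc⟩ := check2_spec hG
  have h1 := cg.mull x (Bb_cg.lift' (l := 1) (e := 2 * 2 + 3) (by norm_num))
  rw [h, one_pow, mul_one] at h1
  refine ⟨J 1 ^ 8 * J 2 ^ 5 * (G' * Ai ^ 3), ⟨G', hG', ?_⟩, ((h1.symm.Us 5).trans hc).trans ?_⟩
  · linear_combination (J 1 ^ 8 * J 2 ^ 5 * G') * Api 3
  · have h2 := cg.mull (J 1 ^ 8 * J 2 ^ 5 * (G' * Ai ^ 3)) (e6_cg.lift' (l := 1) (e := 7) (by norm_num))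
    rw [one_pow, mul_one] at h2
    have e : J 1 ^ 8 * J 2 ^ 5 * (G' * Ai ^ 3) * e6 ^ 7 = J 1 ^ 8 * J 2 ^ 5 * (G' * e6 ^ 4) := by
      linear_combination (J 1 ^ 8 * J 2 ^ 5 * G' * e6 ^ 4) * Api 3
    rwa [e] at h2

lemma pow7 (l : ℕ) : ∃ k, 7 ^ l = 1 + 24 * k ∨ 7 ^ l = 7 + 24 * k := by
  induction l with
  | zero => exact ⟨0, by norm_num⟩
  | succ l ih =>
    obtain ⟨k, h | h⟩ := ih
    · exact ⟨7 * k, by rw [pow_succ]; omega⟩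
    · exact ⟨7 * k + 2, by rw [pow_succ]; omega⟩
lemma lbound (l : ℕ) : l + 1 ≤ 7 ^ l := Nat.lt_pow_self (by norm_num)

/-- generic bounds -/
lemma genFo {d d' l : ℕ} (hd : 2 * d + 15 * 7 ^ l ≤ 2 * d') {x : PowerSeries ℤ} (hx : x ∈ Fo d) : ∃ y ∈ Fe d', cg (l + 1) (Us 5 x) y := by
  obtain ⟨G, hG, h⟩ := hx
  have hq := lbound l
  obtain ⟨k, hk⟩ := pow7 l
  -- u : t = 2 u + 1
  obtain ⟨u, hu1, hu2⟩ : ∃ u, 2 * d + 3 ≤ 7 ^ l * (2 * u + 1) ∧ 7 ^ l * (2 * u + 1) ≤ 2 * d + 2 + 2 * 7 ^ l := by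
    have hpos : 0 < 7 ^ l := by omega
    have e := Nat.div_add_mod (2 * d + 2 + 7 ^ l) (2 * 7 ^ l)
    have e' := Nat.mod_lt (2 * d + 2 + 7 ^ l) (y := 2 * 7 ^ l) (by omega)
    have e2 : 7 ^ l * (2 * ((2 * d + 2 + 7 ^ l) / (2 * 7 ^ l)) + 1) = 2 * 7 ^ l * ((2 * d + 2 + 7 ^ l) / (2 * 7 ^ l)) + 7 ^ l := by ring
    exact ⟨(2 * d + 2 + 7 ^ l) / (2 * 7 ^ l), by omega, by omega⟩
  have hodd : (7 ^ l) % 2 = 1 := by omega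
  obtain ⟨r, hr⟩ : ∃ r, 7 ^ l * (2 * u + 1) = 2 * d + 3 + 2 * r := by
    have : (7 ^ l * (2 * u + 1)) % 2 = 1 := by rw [Nat.mul_mod, hodd]; omega
    exact ⟨(7 ^ l * (2 * u + 1) - (2 * d + 3)) / 2, by omega⟩
  have hG1 : G * e6 ^ r ∈ MM (1 + 3 * (d + r)) := by
    have := MM_mul hG (MM_pow e6_mem r)
    rwa [show 1 + 3 * d + r * 3 = 1 + 3 * (d + r) by ring] at this
  have h1 : cg (l + 1) x (J 2 ^ 3 * (G * e6 ^ r)) := by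
    have := cg.mull x (Bb_cg.lift' (l := l) (e := 7 ^ l * (2 * u + 1)) (dvd_mul_right _ _))
    rw [one_pow, mul_one, hr, pow_add, ← mul_assoc, h, pow_mul, Bb_sq, mul_assoc] at this
    exact this.symm
  have key : ∀ s, (s = 1 ∨ s = 6) → (∃ G' ∈ MM (3 * (7 ^ l * (u + 1 + s) - 2)), cg (l + 1) (Us 5 (J 2 ^ 3 * (G * e6 ^ r))) (J 1 ^ 8 * J 2 ^ 5 * G')) →
      ∃ y ∈ Fe d', cg (l + 1) (Us 5 x) y := by
    rintro s hs ⟨G', hG', hc⟩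
    have b2 : 2 ≤ 7 ^ l * (u + 1 + s) := by
      have : 1 * 2 ≤ 7 ^ l * (u + 1 + s) := Nat.mul_le_mul (by omega) (by omega)
      omega
    obtain ⟨y, hy, hyc⟩ := FS_cg (P := J 1 ^ 8 * J 2 ^ 5) (k := l + 1) hG' (Api (7 ^ l * (u + 1 + s) - 2 + 2)) (by
      have := e6_cg.lift' (l := l) (e := 7 ^ l * (u + 1 + s)) (dvd_mul_right _ _)
      rwa [one_pow, show 7 ^ l * (u + 1 + s) = 7 ^ l * (u + 1 + s) - 2 + 2 by omega] at this)
    refine ⟨y, Fe_mono ?_ hy, ((h1.Us 5).trans hc).trans hyc⟩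
    rw [Nat.sub_le_iff_le_add]
    have : 7 ^ l * (2 * (u + 1 + s)) = 7 ^ l * (2 * u + 1) + 7 ^ l * (1 + 2 * s) := by ring
    have h2 : 7 ^ l * (1 + 2 * s) ≤ 7 ^ l * 13 := Nat.mul_le_mul_left _ (by omega)
    have h3 : 7 ^ l * (2 * (u + 1 + s)) = 2 * (7 ^ l * (u + 1 + s)) := by ring
    omega
  rcases hk with hk | hk
  · refine key 1 (by omega) (GENo (e1 := 0) (e2 := 3 * 7 ^ l) (a := 2 + 42 * k) (b := 1 + 21 * k) (a' := 1 + 6 * k) (b' := 1 + 3 * k) hG1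
      (dvd_zero _) (dvd_mul_left _ _) (by omega) (by omega) (by omega) (by omega) ?_ (by omega))
    have : 7 ^ l * (2 * u + 1) = 7 ^ l * (u + 1 + 1) * 2 - 3 * 7 ^ l := by
      rw [eq_comm, Nat.sub_eq_iff_eq_add]
      · ring
      · nlinarith
    have : 3 * 7 ^ l ≤ 7 ^ l * (u + 1 + 1) * 2 := by nlinarith
    omega
  · refine key 6 (by omega) (GENo (e1 := 8 * 7 ^ l) (e2 := 5 * 7 ^ l) (a := 37 + 126 * k) (b := 43 + 147 * k) (a' := 6 + 18 * k) (b' := 7 + 21 * k) hG1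
      (dvd_mul_left _ _) (dvd_mul_left _ _) (by omega) (by omega) (by omega) (by omega) ?_ (by omega))
    have : 7 ^ l * (2 * u + 1) + 13 * 7 ^ l = 7 ^ l * (u + 1 + 6) * 2 := by ring
    omega

lemma genFe {d d' l : ℕ} (hd : 2 * d + 15 * 7 ^ l ≤ 2 * d') {x : PowerSeries ℤ} (hx : x ∈ Fe d) : ∃ y ∈ Fo d', cg (l + 1) (Us 1 x) y := by
  obtain ⟨G, hG, h⟩ := hx
  have hq := lbound l
  obtain ⟨k, hk⟩ := pow7 l
  obtain ⟨u, hu1, hu2⟩ : ∃ u, d + 2 ≤ 7 ^ l * u ∧ 7 ^ l * u ≤ d + 1 + 7 ^ l := by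
    have hpos : 0 < 7 ^ l := by omega
    have e := Nat.div_add_mod (d + 1 + 7 ^ l) (7 ^ l)
    have e' := Nat.mod_lt (d + 1 + 7 ^ l) hpos
    exact ⟨(d + 1 + 7 ^ l) / (7 ^ l), by omega, by omega⟩
  obtain ⟨r, hr⟩ : ∃ r, 7 ^ l * u = d + 2 + r := ⟨7 ^ l * u - (d + 2), by omega⟩
  have hG1 : G * e6 ^ r ∈ MM (3 * (d + r)) := by
    have := MM_mul hG (MM_pow e6_mem r)
    rwa [show 3 * d + r * 3 = 3 * (d + r) by ring] at this
  have h1 : cg (l + 1) x (J 1 ^ 8 * J 2 ^ 5 * (G * e6 ^ r)) := by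
    have := cg.mull x (e6_cg.lift' (l := l) (e := 7 ^ l * u) (dvd_mul_right _ _))
    rw [one_pow, mul_one, hr, pow_add, ← mul_assoc, h, mul_assoc] at this
    exact this.symm
  have key : ∀ s m', (s = 3 ∨ s = 13) → 2 * m' + 3 = 7 ^ l * (2 * u + s) → (∃ G' ∈ MM (1 + 3 * m'), cg (l + 1) (Us 1 (J 1 ^ 8 * J 2 ^ 5 * (G * e6 ^ r))) (J 2 ^ 3 * G')) →
      ∃ y ∈ Fo d', cg (l + 1) (Us 1 x) y := by
    rintro s m' hs hm ⟨G', hG', hc⟩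
    obtain ⟨y, hy, hyc⟩ := FS_cg (P := J 2 ^ 3) (k := l + 1) hG' (Bpi (2 * m' + 3)) (by
      have := Bb_cg.lift' (l := l) (e := 2 * m' + 3) (hm ▸ dvd_mul_right _ _)
      rwa [one_pow] at this)
    refine ⟨y, Fo_mono ?_ hy, ((h1.Us 1).trans hc).trans hyc⟩
    have : 7 ^ l * (2 * u + s) = 2 * (7 ^ l * u) + 7 ^ l * s := by ring
    have h2 : 7 ^ l * s ≤ 7 ^ l * 13 := Nat.mul_le_mul_left _ (by omega)
    omega
  rcases hk with hk | hk
  · have e : 7 ^ l * (2 * u + 13) = 2 * (7 ^ l * u) + 13 * 7 ^ l := by ring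
    refine key 13 ((7 ^ l * (2 * u + 13) - 3) / 2) (by omega) (by omega) (GENe (e1 := 8 * 7 ^ l) (e2 := 5 * 7 ^ l) (a := 6 + 126 * k) (b := 7 + 147 * k) (a' := 1 + 18 * k) (b' := 1 + 21 * k) hG1
      (dvd_mul_left _ _) (dvd_mul_left _ _) (by omega) (by omega) (by omega) (by omega) (by omega) (by omega))
  · have e : 7 ^ l * (2 * u + 3) = 2 * (7 ^ l * u) + 3 * 7 ^ l := by ring
    refine key 3 ((7 ^ l * (2 * u + 3) - 3) / 2) (by omega) (by omega) (GENe (e1 := 0) (e2 := 3 * 7 ^ l) (a := 13 + 42 * k) (b := 7 + 21 * k) (a' := 2 + 6 * k) (b' := 1 + 3 * k) hG1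
      (dvd_zero _) (dvd_mul_left _ _) (by omega) (by omega) (by omega) (by omega) (by omega) (by omega))

lemma genInit {d' l : ℕ} (hd : 19 * 7 ^ l ≤ 2 * d') : ∃ y ∈ Fo d', cg (l + 1) (Us 2 (Ji 1 ^ 16 * J 2 ^ 5)) y := by
  have hq := lbound l
  obtain ⟨k, hk⟩ := pow7 l
  have key : ∀ s m', (s = 13 ∨ s = 19) → 2 * m' + 3 = 7 ^ l * s → (∃ G' ∈ MM (1 + 3 * m'), cg (l + 1) (Us 2 (Ji 1 ^ 16 * J 2 ^ 5)) (J 2 ^ 3 * G')) →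
      ∃ y ∈ Fo d', cg (l + 1) (Us 2 (Ji 1 ^ 16 * J 2 ^ 5)) y := by
    rintro s m' hs hm ⟨G', hG', hc⟩
    obtain ⟨y, hy, hyc⟩ := FS_cg (P := J 2 ^ 3) (k := l + 1) hG' (Bpi (2 * m' + 3)) (by
      have := Bb_cg.lift' (l := l) (e := 2 * m' + 3) (hm ▸ dvd_mul_right _ _)
      rwa [one_pow] at this)
    refine ⟨y, Fo_mono ?_ hy, hc.trans hyc⟩
    have h2 : 7 ^ l * s ≤ 7 ^ l * 19 := Nat.mul_le_mul_left _ (by omega)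
    omega
  rcases hk with hk | hk
  · exact key 13 ((7 ^ l * 13 - 3) / 2) (by omega) (by omega) (GENi (e1 := 8 * 7 ^ l) (e2 := 5 * 7 ^ l) (a := 5 + 126 * k) (b := 5 + 147 * k) (a' := 1 + 18 * k) (b' := 1 + 21 * k) (by omega)
      (dvd_mul_left _ _) (dvd_mul_left _ _) (by omega) (by omega) (by omega) (by omega) (by omega) (by omega))
  · exact key 19 ((7 ^ l * 19 - 3) / 2) (by omega) (by omega) (GENi (e1 := 8 * 7 ^ l) (e2 := 11 * 7 ^ l) (a := 61 + 210 * k) (b := 54 + 189 * k) (a' := 9 + 30 * k) (b' := 8 + 27 * k) (by omega)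
      (dvd_mul_left _ _) (dvd_mul_left _ _) (by omega) (by omega) (by omega) (by omega) (by omega) (by omega))
end

section
open PowerSeries

def Latt (F : ℕ → Submodule ℤ (PowerSeries ℤ)) (c : ℕ → ℕ) : Submodule ℤ (PowerSeries ℤ) where
  carrier := {x | ∀ l, ∃ y ∈ F (c l), cg (l + 1) x y}
  zero_mem' := fun l => ⟨0, zero_mem _, cg.refl _⟩
  add_mem' := by
    intro x y hx hy l
    obtain ⟨x', hx', cx⟩ := hx l
    obtain ⟨y', hy', cy⟩ := hy l
    exact ⟨x' + y', add_mem hx' hy', cx.add cy⟩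
  smul_mem' := by
    intro c x hx l
    obtain ⟨x', hx', cx⟩ := hx l
    refine ⟨c • x', Submodule.smul_mem _ _ hx', ?_⟩
    rw [zsmul_eq_mul, zsmul_eq_mul]; exact cx.mull _

lemma smem {F : Submodule ℤ (PowerSeries ℤ)} {x : PowerSeries ℤ} (i : ℕ) (h : x ∈ F) : 7 ^ i * x ∈ F := by
  have := Submodule.smul_mem F ((7:ℤ) ^ i) h
  rw [zsmul_eq_mul] at this
  push_cast at this
  exact this

lemma Latt_dec {F : ℕ → Submodule ℤ (PowerSeries ℤ)} {c : ℕ → ℕ} (hF : ∀ d d', d ≤ d' → F d ≤ F d')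
    (hs : ∀ d k z, 7 ^ k * z ∈ F d → z ∈ F d) (hc : ∀ l, c l ≤ c (l + 1)) {x : PowerSeries ℤ} (hx : x ∈ Latt F c) (l : ℕ) :
    ∃ φ : ℕ → PowerSeries ℤ, (∀ i, φ i ∈ F (c i)) ∧ cg (l + 1) x (∑ i ∈ Finset.range (l + 1), 7 ^ i * φ i) := by
  have hcm : Monotone c := monotone_nat_of_le_succ hc
  induction l with
  | zero =>
    obtain ⟨y, hy, h⟩ := hx 0
    refine ⟨fun i => if i = 0 then y else 0, fun i => ?_, by simpa using h⟩
    by_cases hi : i = 0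
    · subst hi; simpa using hy
    · simp [hi]
  | succ l ih =>
    obtain ⟨φ, hφ, h⟩ := ih
    obtain ⟨y, hy, h'⟩ := hx (l + 1)
    obtain ⟨z, hz⟩ : cg (l + 1) y (∑ i ∈ Finset.range (l + 1), 7 ^ i * φ i) := ((h'.mono (by omega)).symm).trans h
    have hzm : z ∈ F (c (l + 1)) := by
      refine hs _ (l + 1) _ ?_
      rw [← hz]
      exact sub_mem hy (sum_mem fun i hi => smem i (hF _ _ (hcm (by rw [Finset.mem_range] at hi; omega)) (hφ i)))
    refine ⟨fun i => if i = l + 1 then z else φ i, fun i => ?_, ?_⟩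
    · by_cases hi : i = l + 1
      · subst hi; simpa using hzm
      · simpa [hi] using hφ i
    · rw [Finset.sum_range_succ]
      have e : ∑ i ∈ Finset.range (l + 1), 7 ^ i * (if i = l + 1 then z else φ i) = ∑ i ∈ Finset.range (l + 1), 7 ^ i * φ i := by
        refine Finset.sum_congr rfl fun i hi => ?_
        rw [Finset.mem_range] at hi
        rw [if_neg (by omega)]
      beta_reduce
      rw [e, if_pos rfl, ← hz, add_sub_cancel]
      exact h'

lemma Us_seven (s i : ℕ) (x : PowerSeries ℤ) : Us s (7 ^ i * x) = 7 ^ i * Us s x := by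
  have : (7:PowerSeries ℤ) ^ i * x = ((7:ℤ) ^ i) • x := by rw [zsmul_eq_mul]; push_cast; rfl
  rw [this, map_zsmul, zsmul_eq_mul]; push_cast; rfl

/-- pushing a decomposition through U -/
lemma push {F F' : ℕ → Submodule ℤ (PowerSeries ℤ)} {c : ℕ → ℕ} (hF : ∀ d d', d ≤ d' → F d ≤ F d')
    (hs : ∀ d k z, 7 ^ k * z ∈ F d → z ∈ F d) (hc : ∀ l, c l ≤ c (l + 1)) {x : PowerSeries ℤ} (hx : x ∈ Latt F c) (s l d : ℕ)
    (H : ∀ i ≤ l, ∀ y ∈ F (c i), ∃ z ∈ F' d, cg (l + 1 - i) (Us s y) z) : ∃ z ∈ F' d, cg (l + 1) (Us s x) z := by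
  obtain ⟨φ, hφ, h⟩ := Latt_dec hF hs hc hx l
  have : ∀ i, ∃ z ∈ F' d, i ≤ l → cg (l + 1 - i) (Us s (φ i)) z := fun i => by
    by_cases hi : i ≤ l
    · obtain ⟨z, hz, h⟩ := H i hi _ (hφ i); exact ⟨z, hz, fun _ => h⟩
    · exact ⟨0, zero_mem _, fun h => absurd h hi⟩
  choose z hz hzc using this
  refine ⟨∑ i ∈ Finset.range (l + 1), 7 ^ i * z i, sum_mem fun i _ => smem i (hz i), (h.Us s).trans ?_⟩
  rw [map_sum, cg, ← Finset.sum_sub_distrib]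
  refine Finset.dvd_sum fun i hi => ?_
  rw [Finset.mem_range] at hi
  rw [Us_seven]
  have := (hzc i (by omega)).seven (i := i)
  rwa [show l + 1 - i + i = l + 1 by omega] at this

def co (l : ℕ) : ℕ := if l = 0 then 2 else if l = 1 then 100 else 68 * 7 ^ l
def ce (l : ℕ) : ℕ := if l = 0 then 15 else 76 * 7 ^ l
lemma co0 : co 0 = 2 := rfl
lemma co1 : co 1 = 100 := rfl
lemma co2 {l : ℕ} (h : 2 ≤ l) : co l = 68 * 7 ^ l := by rw [co, if_neg (by omega), if_neg (by omega)]
lemma ce0 : ce 0 = 15 := rfl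
lemma ce1 {l : ℕ} (h : 1 ≤ l) : ce l = 76 * 7 ^ l := by rw [ce, if_neg (by omega)]
lemma co_mono (l : ℕ) : co l ≤ co (l + 1) := by
  rcases l with _ | _ | l
  · decide
  · decide
  · rw [co2 (by omega), co2 (by omega), pow_succ 7 (l + 1 + 1)]; omega
lemma ce_mono (l : ℕ) : ce l ≤ ce (l + 1) := by
  rcases l with _ | l
  · decide
  · rw [ce1 (by omega), ce1 (by omega), pow_succ 7 (l + 1)]; omega
abbrev Mo := Latt Fo co
abbrev Me := Latt Fe ce
lemma sevp {i j : ℕ} (h : i ≤ j) : 7 ^ i ≤ 7 ^ j := Nat.pow_le_pow_right (by norm_num) h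

lemma Ue_mem {x : PowerSeries ℤ} (hx : x ∈ Me) : Us 1 x ∈ Mo := by
  intro l
  refine push (fun _ _ h => Fe_mono h) (fun _ _ _ h => Fe_sat h) ce_mono hx 1 l _ fun i hi y hy => ?_
  rcases Nat.eq_or_lt_of_le hi with rfl | hlt
  · rw [Nat.add_sub_cancel_left]
    refine sharpFe ?_ hy
    rcases i with _ | _ | i
    · decide
    · decide
    · rw [ce1 (by omega), co2 (by omega), pow_succ]; omega
  · have hgen := fun h => genFe (d := ce i) (d' := co l) (l := l - i) h hy
    rw [show l + 1 - i = l - i + 1 by omega]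
    refine hgen ?_
    rcases i with _ | i
    · rw [ce0, Nat.sub_zero]
      rcases l with _ | _ | l
      · omega
      · decide
      · rw [co2 (by omega)]; have := lbound (l + 1 + 1); omega
    · rw [ce1 (by omega), co2 (by omega)]
      obtain ⟨l, rfl⟩ : ∃ k, l = k + 1 := ⟨l - 1, by omega⟩
      have h1 := sevp (show i + 1 ≤ l by omega)
      have h2 := sevp (show l + 1 - (i + 1) ≤ l by omega)
      rw [pow_succ 7 l]; omega

def x0 : PowerSeries ℤ := J 1 ^ 8 * J 2 ^ 5 * Ai ^ 2
lemma x0_mem0 : x0 ∈ Fe 0 := ⟨1, one_MM, by rw [x0]; linear_combination (J 1 ^ 8 * J 2 ^ 5) * Api 2⟩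
lemma x0_mem : x0 ∈ Me := fun l => ⟨x0, Fe_mono (Nat.zero_le _) x0_mem0, cg.refl _⟩
lemma Fe0 {x : PowerSeries ℤ} (hx : x ∈ Fe 0) : ∃ k : ℤ, x = k • x0 := by
  obtain ⟨G, hG, h⟩ := hx
  obtain ⟨c, hc⟩ := MM_explicit hG
  simp at hc
  refine ⟨c 0, ?_⟩
  rw [zsmul_eq_mul, x0]
  rw [hc] at h
  linear_combination Ai ^ 2 * h - x * Api 2

lemma Uo_lvl {x : PowerSeries ℤ} (hx : x ∈ Mo) (l : ℕ) : ∃ z ∈ Fe (ce l), cg (l + 1 + 1) (Us 5 x) z := by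
  refine push (fun _ _ h => Fo_mono h) (fun _ _ _ h => Fo_sat h) co_mono hx 5 (l + 1) _ fun i hi y hy => ?_
  rcases Nat.eq_or_lt_of_le hi with rfl | hlt
  · rw [Nat.add_sub_cancel_left]
    refine sharpFo ?_ hy
    rcases l with _ | l
    · decide
    · rw [ce1 (by omega), co2 (by omega), pow_succ 7 (l + 1)]; omega
  · rcases l with _ | l
    · obtain rfl : i = 0 := by omega
      obtain ⟨z, hz, h⟩ := check2F hy
      exact ⟨z, Fe_mono (by decide) hz, h⟩
    · have hgen := fun h => genFo (d := co i) (d' := ce (l + 1)) (l := l + 1 + 1 - i) h hy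
      rw [show l + 1 + 1 + 1 - i = l + 1 + 1 - i + 1 by omega]
      refine hgen ?_
      rw [ce1 (by omega)]
      rcases i with _ | _ | i
      · rw [co0, Nat.sub_zero, pow_succ 7 (l + 1)]; have := lbound (l + 1); omega
      · rw [co1, show l + 1 + 1 - (0 + 1) = l + 1 by omega, pow_succ 7 l]; have := lbound l; omega
      · rw [co2 (by omega)]
        have h1 := sevp (show i + 1 + 1 ≤ l + 1 by omega)
        have h2 := sevp (show l + 1 + 1 - (i + 1 + 1) ≤ l by omega)
        rw [pow_succ 7 l] at *; omega

lemma Uo_mem {x : PowerSeries ℤ} (hx : x ∈ Mo) : ∃ k : ℤ, ∃ z ∈ Me, Us 5 x = k • x0 + 7 * z := by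
  obtain ⟨y, hy, h⟩ := push (F' := Fe) (fun _ _ h => Fo_mono h) (fun _ _ _ h => Fo_sat h) co_mono hx 5 0 0 fun i hi y hy => by
    obtain rfl : i = 0 := by omega
    exact sharpFo (d := 2) (by norm_num) hy
  obtain ⟨k, rfl⟩ := Fe0 hy
  obtain ⟨z, hz⟩ := h
  rw [zero_add, pow_one] at hz
  refine ⟨k, z, fun l => ?_, by rw [← hz]; ring⟩
  obtain ⟨w, hw, hc⟩ := Uo_lvl hx l
  have hw' : w - k • x0 ∈ Fe (ce l) := sub_mem hw (Submodule.smul_mem _ _ (Fe_mono (Nat.zero_le _) x0_mem0))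
  have hc' : cg (l + 1 + 1) (7 * z) (w - k • x0) := by rw [← hz]; exact hc.sub (cg.refl _)
  obtain ⟨v, hv⟩ : (7 : PowerSeries ℤ) ∣ w - k • x0 := by
    have : (7 : PowerSeries ℤ) ∣ 7 * z - (w - k • x0) := (dvd_pow_self 7 (by omega)).trans hc'
    exact (dvd_sub_right (dvd_mul_right _ _)).1 this
  rw [hv] at hw' hc'
  refine ⟨v, Fe_sat (k := 1) (by rwa [pow_one]), cg.of_seven (i := 1) ?_⟩
  rwa [pow_one]

lemma init_mem : ∃ y ∈ Mo, Us 2 (Ji 1 ^ 16 * J 2 ^ 5) = 7 * y := by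
  have h3 := check3_spec
  obtain ⟨y, hy⟩ : (7 : PowerSeries ℤ) ∣ Us 2 (Ji 1 ^ 16 * J 2 ^ 5) := by
    have : (7 : PowerSeries ℤ) ∣ Us 2 (Ji 1 ^ 16 * J 2 ^ 5) - J 2 ^ 3 * (7 * Gi) := (dvd_pow_self 7 (by norm_num)).trans h3
    exact (dvd_sub_left ⟨J 2 ^ 3 * Gi, by ring⟩).1 this
  refine ⟨y, fun l => ?_, hy⟩
  have h2 : cg 2 y (J 2 ^ 3 * Gi) := by
    refine cg.of_seven (i := 1) ?_
    rw [hy] at h3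
    rwa [pow_one, show 7 * (J 2 ^ 3 * Gi) = J 2 ^ 3 * (7 * Gi) by ring]
  obtain ⟨w, hw, hwc⟩ := FS_cg (P := J 2 ^ 3) (k := 2) Gi_mem (Bpi 7) (by simpa using Bb_cg.lift' (l := 1) (e := 7) (by norm_num))
  have hw2 : w ∈ Fo 2 := hw
  rcases l with _ | _ | l
  · exact ⟨w, hw2, (h2.trans hwc).mono (by norm_num)⟩
  · exact ⟨w, Fo_mono (by decide) hw2, h2.trans hwc⟩
  · obtain ⟨w, hw, hc⟩ := genInit (l := l + 1 + 1 + 1) (d' := co (l + 1 + 1)) (by rw [co2 (by omega), pow_succ 7 (l + 1 + 1)]; omega)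
    rw [hy] at hc
    obtain ⟨v, rfl⟩ : (7 : PowerSeries ℤ) ∣ w := by
      have : (7 : PowerSeries ℤ) ∣ 7 * y - w := (dvd_pow_self 7 (by omega)).trans hc
      exact (dvd_sub_right (dvd_mul_right _ _)).1 this
    refine ⟨v, Fo_sat (k := 1) (by rwa [pow_one]), cg.of_seven (i := 1) ?_⟩
    rwa [pow_one]

/-- wedges -/
def wd (y z : PowerSeries ℤ) : ℕ → ℕ → ℤ := fun i j => coeff i y * coeff j z - coeff j y * coeff i z
def W (M : Submodule ℤ (PowerSeries ℤ)) : AddSubgroup (ℕ → ℕ → ℤ) := AddSubgroup.closure {f | ∃ y ∈ M, ∃ z ∈ M, f = wd y z}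
lemma wd_mem {M : Submodule ℤ (PowerSeries ℤ)} {y z : PowerSeries ℤ} (hy : y ∈ M) (hz : z ∈ M) : wd y z ∈ W M :=
  AddSubgroup.subset_closure ⟨y, hy, z, hz, rfl⟩
def Uw (s : ℕ) (f : ℕ → ℕ → ℤ) : ℕ → ℕ → ℤ := fun i j => f (7 * i + s) (7 * j + s)
lemma Uw_wd (s : ℕ) (y z : PowerSeries ℤ) : Uw s (wd y z) = wd (Us s y) (Us s z) := by
  funext i j; simp only [Uw, wd, coeff_Us]
lemma We_step {f : ℕ → ℕ → ℤ} (hf : f ∈ W Me) : Uw 1 f ∈ W Mo := by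
  induction hf using AddSubgroup.closure_induction with
  | mem f h =>
    obtain ⟨y, hy, z, hz, rfl⟩ := h
    rw [Uw_wd]; exact wd_mem (Ue_mem hy) (Ue_mem hz)
  | zero => exact zero_mem _
  | add f g _ _ hf hg => exact add_mem hf hg
  | neg f _ hf => exact neg_mem hf
lemma Wo_step {f : ℕ → ℕ → ℤ} (hf : f ∈ W Mo) : ∃ g ∈ W Me, Uw 5 f = (7:ℤ) • g := by
  induction hf using AddSubgroup.closure_induction with
  | mem f h =>
    obtain ⟨y, hy, z, hz, rfl⟩ := h
    obtain ⟨k, y', hy', ey⟩ := Uo_mem hy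
    obtain ⟨k', z', hz', ez⟩ := Uo_mem hz
    refine ⟨wd x0 (k • z' - k' • y') + (7:ℤ) • wd y' z', add_mem (wd_mem x0_mem (sub_mem (Submodule.smul_mem _ _ hz') (Submodule.smul_mem _ _ hy'))) (AddSubgroup.zsmul_mem _ (wd_mem hy' hz') _), ?_⟩
    rw [Uw_wd, ey, ez]
    have h7 : (7 : PowerSeries ℤ) = C 7 := rfl
    funext i j
    simp only [wd, Pi.smul_apply, Pi.add_apply, smul_eq_mul, map_add, map_sub, h7, coeff_C_mul, map_zsmul]
    ring
  | zero => exact ⟨0, zero_mem _, by funext i j; simp [Uw]⟩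
  | add f g _ _ hf hg =>
    obtain ⟨f', hf', ef⟩ := hf
    obtain ⟨g', hg', eg⟩ := hg
    exact ⟨f' + g', add_mem hf' hg', by rw [smul_add, ← ef, ← eg]; rfl⟩
  | neg f _ hf =>
    obtain ⟨f', hf', ef⟩ := hf
    exact ⟨-f', neg_mem hf', by rw [smul_neg, ← ef]; rfl⟩

/-- the iterated sequence -/
def Ls (x : PowerSeries ℤ) (n : ℕ) : PowerSeries ℤ := Nat.rec x (fun n r => if n % 2 = 0 then Us 5 r else Us 1 r) n
lemma Ls_succ (x : PowerSeries ℤ) (n : ℕ) : Ls x (n + 1) = if n % 2 = 0 then Us 5 (Ls x n) else Us 1 (Ls x n) := rfl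
lemma Ls_seven (x : PowerSeries ℤ) (n : ℕ) : Ls (7 * x) n = 7 * Ls x n := by
  induction n with
  | zero => rfl
  | succ n ih =>
    have h := fun s => Us_seven s 1 (Ls x n)
    rw [pow_one] at h
    rw [Ls_succ, Ls_succ, ih]; split_ifs <;> exact h _

lemma main_wedge {y : PowerSeries ℤ} (hy : y ∈ Mo) (n : ℕ) :
    ∃ f ∈ W (if n % 2 = 0 then Mo else Me), wd (Ls y (n + 2)) (Ls y n) = (7:ℤ) ^ ((n + 1) / 2) • f := by
  induction n with
  | zero =>
    refine ⟨wd (Ls y 2) y, wd_mem ?_ hy, by simp; rfl⟩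
    show Us 1 (Us 5 y) ∈ Mo
    obtain ⟨k, z, hz, e⟩ := Uo_mem hy
    rw [e]
    refine Ue_mem (add_mem (Submodule.smul_mem _ _ x0_mem) ?_)
    simpa using smem 1 hz
  | succ n ih =>
    obtain ⟨f, hf, e⟩ := ih
    have hsm : ∀ s (c : ℤ) (f : ℕ → ℕ → ℤ), Uw s (c • f) = c • Uw s f := fun s c f => rfl
    rcases Nat.mod_two_eq_zero_or_one n with h | h
    · rw [if_pos h] at hf
      rw [if_neg (by omega)]
      obtain ⟨g, hg, eg⟩ := Wo_step hf
      refine ⟨g, hg, ?_⟩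
      rw [show n + 1 + 2 = n + 2 + 1 by ring, Ls_succ y (n + 2), Ls_succ y n, if_pos (by omega), if_pos h, ← Uw_wd, e, hsm, eg, smul_smul, ← pow_succ]
      congr 2; omega
    · rw [if_neg (by omega)] at hf
      rw [if_pos (by omega)]
      refine ⟨_, We_step hf, ?_⟩
      rw [show n + 1 + 2 = n + 2 + 1 by ring, Ls_succ y (n + 2), Ls_succ y n, if_neg (by omega), if_neg (by omega), ← Uw_wd, e, hsm]
      congr 2; omega

lemma coeff_Ls (d5 : ℕ → ℤ) (α n : ℕ) : coeff n (Ls (Us 2 (PowerSeries.mk d5)) α) = d5 (7 ^ (α + 1) * n + lam (α + 1)) := by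
  induction α generalizing n with
  | zero => show coeff n (Us 2 _) = _; rw [coeff_Us, coeff_mk]; rfl
  | succ α ih =>
    rw [Ls_succ]
    obtain ⟨k, hk⟩ := pow7 (α + 1)
    have hk4 : 7 ^ (α + 1) % 4 = if α % 2 = 0 then 3 else 1 := by
      clear hk ih
      induction α with
      | zero => rfl
      | succ α ih => rw [pow_succ]; split_ifs at * <;> omega
    split_ifs with h
    · rw [coeff_Us, ih, lam, lam, if_pos (by omega), if_neg (by omega)]
      rw [if_pos h] at hk4
      congr 1
      have : 7 ^ (α + 1) * (7 * n + 5) = 7 ^ (α + 1) * 7 * n + 5 * 7 ^ (α + 1) := by ring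
      rw [this, pow_succ 7 (α + 1)]; omega
    · rw [coeff_Us, ih, lam, lam, if_neg (by omega), if_pos (by omega)]
      rw [if_neg h] at hk4
      congr 1
      have : 7 ^ (α + 1) * (7 * n + 1) = 7 ^ (α + 1) * 7 * n + 7 ^ (α + 1) := by ring
      rw [this, pow_succ 7 (α + 1)]; omega
end

/-- for all α ≥ 1 and n ≥ 0,
`d_5(7^{α+2}·n + λ_{α+2})·d_5(λ_α) ≡ d_5(7^α·n + λ_α)·d_5(λ_{α+2}) (mod 7^{⌊α/2⌋+2})`,
where `d_5` is defined by `∑ d_5(n) qⁿ = J_2^5 / J_1^{16}`. -/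
theorem stmt1 (d5 : ℕ → ℤ)
    (hd : PowerSeries.mk d5 * (J 1) ^ 16 = (J 2) ^ 5)
    (α : ℕ) (hα : 1 ≤ α) (n : ℕ) :
    Int.ModEq ((7 : ℤ) ^ (α / 2 + 2))
      (d5 (7 ^ (α + 2) * n + lam (α + 2)) * d5 (lam α))
      (d5 (7 ^ α * n + lam α) * d5 (lam (α + 2))) := by
  obtain ⟨m, rfl⟩ : ∃ m, α = m + 1 := ⟨α - 1, by omega⟩
  have e1 : PowerSeries.mk d5 = Ji 1 ^ 16 * J 2 ^ 5 := by
    have : J 1 ^ 16 * Ji 1 ^ 16 = 1 := by rw [← mul_pow, J1i, one_pow]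
    linear_combination Ji 1 ^ 16 * hd - PowerSeries.mk d5 * this
  obtain ⟨y, hy, ey⟩ := init_mem
  rw [← e1] at ey
  obtain ⟨f, -, hf⟩ := main_wedge hy m
  have hL := coeff_Ls d5
  rw [ey] at hL
  have h7 : (7 : PowerSeries ℤ) = PowerSeries.C 7 := rfl
  simp only [Ls_seven] at hL
  simp only [h7, PowerSeries.coeff_C_mul] at hL
  have a1 := hL (m + 2) n
  have a2 := hL (m + 2) 0
  have a3 := hL m n
  have a4 := hL m 0
  rw [mul_zero, zero_add] at a2 a4
  rw [show m + 2 + 1 = m + 1 + 2 by ring] at a1 a2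
  rw [← a1, ← a2, ← a3, ← a4]
  have q := congrFun (congrFun hf n) 0
  simp only [wd, Pi.smul_apply, smul_eq_mul] at q
  refine (Int.modEq_iff_dvd.2 ⟨-f n 0, ?_⟩)
  rw [pow_add]
  linear_combination (-49) * q
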